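/- Let M₀, M₁: S² → ℝ be smooth and set M₁₁(ω) = −(1/2)·Δ_ω M₀(ω). Then there exists exactly one smooth function φ₂ on Ω = {(t,x) ∈ ℝ×ℝ³ : |t| < |x|} such that: (a) ∂ₜ²φ₂ = Δφ₂ on Ω; (b) φ₂ is homogeneous of degree −2, i.e. φ₂(λt, λx) = λ^{−2}·φ₂(t,x) for all λ > 0 and (t,x) ∈ Ω; and (c) for every ω ∈ S², lim_{s→1⁻} [ φ₂(s, ω) − M₀(ω)/(1−s) − ln(2/(1−s))·M₁₁(ω) ] = M₁(ω). -/

import Mathlib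

/-!
Writing `s = t/|x|`, `ω = x/|x|` and `φ = g(s, ω)/(|x|² - t²)`, the wave equation for functions
homogeneous of degree `-2` in `|t| < |x|` becomes the reduced equation `(1 - s²) g_ss = Δ_ω g` on
`(-1, 1) × S²` (`wave_conversion`). Functions on the sphere are represented by their degree-zero
homogeneous extensions, and `Δ_ω` by `lapS f = |x|² Δ f`, which is the sum of the squares of the
three infinitesimal rotations (`rot_sum_lapS`).

*Existence.* In the stereographic variable `w = √((1 - s)/(1 + s))`, the circle means of a function
on the sphere satisfy the Darboux equation `(w ∂_w)² F_N = 4w²/(1+w²)² F_{ΔN}` (`FF_ode`). Hence the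
integral of `M₁` over the spherical cap of height `s` around `ω` solves the reduced equation, and so
does a combination of the circle mean of `M₀` with integrals of `M₀` and, against a logarithmic
kernel, of `Δ M₀` over the cap. Both the operator `(1 - s²) ∂ₛ²` and `Δ_ω` act on the resulting
expression `HH` by replacing the data by their Laplacians (`HH_ode`, `lapS_HH`), so the reduced
equation holds; the expansion at the light cone is `limit_w`.

*Uniqueness.* The difference `g` of two reduced solutions is `o(1 - s)` as `s → 1`, pointwise in
`ω`. The energy `(1 - s²) ∫ g_s² - ∫ g Δg` is nonincreasing for `s ≥ 0`. Since `Δg` is again a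
solution, its energy bound and Tonelli's theorem show that along almost every ray `Δg` is Hölder
continuous up to `s = 1`, with square-integrable constants (`IsSol.holder`). Along such a ray
`(1 - s²) g_ss = Δg` and `g = o(1 - s)` force `Δg` and `g_s` to be `O((1-s)^(1/4))` and `g` to be
`O((1-s)^(5/4))` (`scalar_decay`). Therefore the energy divided by `1 - s²`, which is nonnegative and
nondecreasing on `[0, 1)`, tends to `0`, and so vanishes (`IsSol.en_eq_zero`). For `s < 0` the energy
is nondecreasing and vanishes at `0`, hence `g = 0` (`IsSol.eq_zero`).
-/

noncomputable section

open MeasureTheory Real Set Filter Topology Metric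
open scoped RealInnerProductSpace Classical

/-- ℝ³ as a Euclidean space. -/
abbrev E3 : Type := EuclideanSpace ℝ (Fin 3)

/-- The unit sphere S² in ℝ³. -/
abbrev S2 : Set E3 := Metric.sphere (0 : E3) 1

/-- The surface measure on the unit sphere (total mass 4π). -/
noncomputable def sphereMeasure : Measure (Metric.sphere (0 : E3) 1) :=
  (volume : Measure E3).toSphere

/-- Integral over the unit sphere with respect to the surface measure. -/
noncomputable def sphereIntegral (f : E3 → ℝ) : ℝ :=
  ∫ σ : Metric.sphere (0 : E3) 1, f σ ∂sphereMeasure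

/-- Japanese bracket ⟨q⟩ = √(1+q²). -/
noncomputable def jb (q : ℝ) : ℝ := Real.sqrt (1 + q ^ 2)

/-- Iterates of the operator g ↦ ⟨q⟩ ∂_q g. -/
noncomputable def qIter : ℕ → (ℝ → ℝ) → ℝ → ℝ
  | 0, g => g
  | k + 1, g => fun q => jb q * deriv (qIter k g) q

/-- Partial derivative in the i-th coordinate direction. -/
noncomputable def pd (i : Fin 3) (g : E3 → ℝ) : E3 → ℝ :=
  fun x => fderiv ℝ g x (EuclideanSpace.single i 1)

/-- Iterated partial derivatives along a multi-index (list of directions). -/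
noncomputable def pdMulti : List (Fin 3) → (E3 → ℝ) → E3 → ℝ
  | [], g => g
  | i :: l, g => pd i (pdMulti l g)

/-- Euclidean Laplacian in ℝ³. -/
noncomputable def lap3 (g : E3 → ℝ) (x : E3) : ℝ :=
  ∑ i : Fin 3, pd i (pd i g) x

/-- Second time derivative ∂ₜ²φ. -/
noncomputable def dt2 (φ : ℝ → E3 → ℝ) (t : ℝ) (x : E3) : ℝ :=
  deriv (fun s => deriv (fun u => φ u x) s) t

/-- Homogeneity of degree zero on ℝ³ ∖ {0}. -/
def HomogZero (f : E3 → ℝ) : Prop := ∀ c : ℝ, 0 < c → ∀ x : E3, f (c • x) = f x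

/-- A smooth function on S², represented by its degree-zero homogeneous extension. -/
def SmoothOnSphere (f : E3 → ℝ) : Prop :=
  HomogZero f ∧ ContDiffOn ℝ (⊤ : ℕ∞) f {x : E3 | x ≠ 0}

/-- A smooth function on ℝ×S², represented via degree-zero homogeneous extension
in the angular variable. -/
def SmoothQSphere (f : ℝ → E3 → ℝ) : Prop :=
  (∀ q, HomogZero (f q)) ∧
  ContDiffOn ℝ (⊤ : ℕ∞) (fun p : ℝ × E3 => f p.1 p.2) {p : ℝ × E3 | p.2 ≠ 0}

/-- Symbol decay of order κ: |(⟨q⟩∂_q)^k ∂_ω^α f(q,ω)| ≤ C_{k,α} ⟨q⟩^{-κ}. -/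
def SymbolDecay (κ : ℝ) (f : ℝ → E3 → ℝ) : Prop :=
  ∀ (k : ℕ) (α : List (Fin 3)), ∃ C : ℝ, ∀ (q : ℝ) (ω : E3), ‖ω‖ = 1 →
    |qIter k (fun s => pdMulti α (f s) ω) q| ≤ C * jb q ^ (-κ)

/-- A smooth cutoff χ with χ = 1 on (-∞, 1/4] and χ = 0 on [1/2, ∞), 0 ≤ χ ≤ 1. -/
def IsCutChi (χ : ℝ → ℝ) : Prop :=
  ContDiff ℝ (⊤ : ℕ∞) χ ∧ (∀ s, χ s ∈ Set.Icc (0:ℝ) 1) ∧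
  (∀ s, s ≤ (1/4 : ℝ) → χ s = 1) ∧ (∀ s, (1/2 : ℝ) ≤ s → χ s = 0)

/-- A smooth cutoff χ_{q<0} with χ = 1 on (-∞, -1] and χ = 0 on [0, ∞), 0 ≤ χ ≤ 1. -/
def IsCutNeg (χ : ℝ → ℝ) : Prop :=
  ContDiff ℝ (⊤ : ℕ∞) χ ∧ (∀ s, χ s ∈ Set.Icc (0:ℝ) 1) ∧
  (∀ s, s ≤ (-1 : ℝ) → χ s = 1) ∧ (∀ s, (0 : ℝ) ≤ s → χ s = 0)

/-- The conditions of STATEMENT 3: φ solves the wave equation on the exterior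
Ω = {|t| < |x|}, is homogeneous of degree −2, and has the prescribed expansion
towards the light cone, with M₁₁ = −(1/2)Δ_ω M₀. -/
def IsExtHomTwo (M0 M1 : E3 → ℝ) (φ : ℝ → E3 → ℝ) : Prop :=
  ContDiffOn ℝ (⊤ : ℕ∞) (fun p : ℝ × E3 => φ p.1 p.2) {p : ℝ × E3 | |p.1| < ‖p.2‖} ∧
  (∀ (t : ℝ) (x : E3), |t| < ‖x‖ → dt2 φ t x = lap3 (φ t) x) ∧
  (∀ c : ℝ, 0 < c → ∀ (t : ℝ) (x : E3), |t| < ‖x‖ → φ (c * t) (c • x) = (c ^ 2)⁻¹ * φ t x) ∧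
  (∀ ω : E3, ‖ω‖ = 1 →
    Tendsto
      (fun s : ℝ => φ s ω - M0 ω / (1 - s) - Real.log (2 / (1 - s)) * (-(1/2) * lap3 M0 ω))
      (nhdsWithin 1 (Set.Iio 1)) (nhds (M1 ω)))

namespace ExtHom

/-! ### Calculus of parameter integrals -/

set_option linter.unusedSectionVars false

/-- Directional derivative of `f` in the fixed direction `v`, as a function of the base point. -/
def dir {E : Type} [NormedAddCommGroup E] [NormedSpace ℝ E] {F : Type} [NormedAddCommGroup F]
    [NormedSpace ℝ F] (v : E) (f : E → F) : E → F := fun p => fderiv ℝ f p v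

section Param

variable {E : Type} [NormedAddCommGroup E] [NormedSpace ℝ E]
  {F : Type} [NormedAddCommGroup F] [NormedSpace ℝ F]

theorem dir_contDiffOn {f : E → F} {W : Set E} (hW : IsOpen W) (hf : ContDiffOn ℝ (⊤ : ℕ∞) f W)
    (v : E) : ContDiffOn ℝ (⊤ : ℕ∞) (dir v f) W :=
  (hf.fderiv_of_isOpen hW (by simp)).clm_apply contDiffOn_const

theorem smooth_at {f : E → F} {W : Set E} (hW : IsOpen W) (hf : ContDiffOn ℝ (⊤ : ℕ∞) f W)
    {p : E} (hp : p ∈ W) : ContDiffAt ℝ (⊤ : ℕ∞) f p := hf.contDiffAt (hW.mem_nhds hp)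

theorem diff_at {f : E → F} {W : Set E} (hW : IsOpen W) (hf : ContDiffOn ℝ (⊤ : ℕ∞) f W)
    {p : E} (hp : p ∈ W) : DifferentiableAt ℝ f p :=
  (smooth_at hW hf hp).differentiableAt (by simp)

theorem dir_comm {f : E → F} {W : Set E} (hW : IsOpen W) (hf : ContDiffOn ℝ (⊤ : ℕ∞) f W)
    {p : E} (hp : p ∈ W) (u v : E) : dir u (dir v f) p = dir v (dir u f) p := by
  have hd : DifferentiableAt ℝ (fderiv ℝ f) p :=
    diff_at hW (hf.fderiv_of_isOpen hW (by simp)) hp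
  have key : ∀ u v : E, dir u (dir v f) p = fderiv ℝ (fderiv ℝ f) p u v := by
    intro u v
    have := (hd.hasFDerivAt.clm_apply (hasFDerivAt_const v p)).fderiv
    change fderiv ℝ (fun y => fderiv ℝ f y v) p u = _
    rw [this]; simp
  have hs : IsSymmSndFDerivAt ℝ f p :=
    (smooth_at hW hf hp).isSymmSndFDerivAt
      (by rw [minSmoothness_of_isRCLikeNormedField]; exact WithTop.coe_le_coe.2 (le_top : (2 : ℕ∞) ≤ ⊤))
  rw [key, key]; exact hs u v

theorem dir_congr {f g : E → F} {W : Set E} (hW : IsOpen W) (h : EqOn f g W) {p : E}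
    (hp : p ∈ W) (v : E) : dir v f p = dir v g p := by
  have : f =ᶠ[𝓝 p] g := by filter_upwards [hW.mem_nhds hp] with q hq using h hq
  simp only [dir, this.fderiv_eq]

variable {A : Type} [NormedAddCommGroup A] [NormedSpace ℝ A] [MeasurableSpace A] [BorelSpace A]
  [SecondCountableTopology A]

theorem integrableOn_weight {μ : Measure A} {S : Set A} (hS : IsCompact S) {ℓ : A → ℝ}
    (hl : IntegrableOn ℓ S μ) {k : A → F} (hk : ContinuousOn k S) :
    IntegrableOn (fun a => ℓ a • k a) S μ := by
  obtain ⟨C, hC⟩ := hS.exists_bound_of_continuousOn hk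
  have hm : AEStronglyMeasurable k (μ.restrict S) :=
    hk.aestronglyMeasurable_of_isCompact hS hS.measurableSet
  refine Integrable.mono' (hl.norm.mul_const C) (hl.aestronglyMeasurable.smul hm) ?_
  filter_upwards [ae_restrict_mem hS.measurableSet] with a ha
  rw [norm_smul]
  exact mul_le_mul_of_nonneg_left (hC a ha) (norm_nonneg _)

variable [ProperSpace E]

theorem param_hasFDerivAt {μ : Measure A} {S : Set A} (hS : IsCompact S) {ℓ : A → ℝ}
    (hl : IntegrableOn ℓ S μ) {U : Set E} (hU : IsOpen U) {W : Set (E × A)} (hW : IsOpen W)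
    (hUS : U ×ˢ S ⊆ W) {K : E × A → F} (hK : ContDiffOn ℝ 1 K W) {p : E} (hp : p ∈ U) :
    HasFDerivAt (fun p => ∫ a in S, ℓ a • K (p, a) ∂μ)
      (∫ a in S, ℓ a • (fderiv ℝ K (p, a)).comp (ContinuousLinearMap.inl ℝ E A) ∂μ) p := by
  obtain ⟨ε, hε, hball⟩ := nhds_basis_closedBall.mem_iff.1 (hU.mem_nhds hp)
  have hcont : ContinuousOn (fun q : E × A =>
      (fderiv ℝ K q).comp (ContinuousLinearMap.inl ℝ E A)) W :=
    (hK.continuousOn_fderiv_of_isOpen hW le_rfl).clm_comp continuousOn_const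
  have hcomp : IsCompact (closedBall p ε ×ˢ S) := (isCompact_closedBall p ε).prod hS
  have hsub : closedBall p ε ×ˢ S ⊆ W := (prod_mono hball Subset.rfl).trans hUS
  obtain ⟨C, hC⟩ := hcomp.exists_bound_of_continuousOn (hcont.mono hsub)
  have hKc : ∀ q ∈ U, ContinuousOn (fun a => K (q, a)) S := fun q hq =>
    hK.continuousOn.comp (by fun_prop) (fun a ha => hUS ⟨hq, ha⟩)
  have hKc' : ContinuousOn (fun a => (fderiv ℝ K (p, a)).comp (ContinuousLinearMap.inl ℝ E A)) S :=
    hcont.comp (f := fun a => (p, a)) (by fun_prop) (fun a ha => hUS ⟨hp, ha⟩)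
  refine hasFDerivAt_integral_of_dominated_of_fderiv_le (s := ball p ε)
    (bound := fun a => ‖ℓ a‖ * C) (ball_mem_nhds p hε)
    (F' := fun q a => ℓ a • (fderiv ℝ K (q, a)).comp (ContinuousLinearMap.inl ℝ E A)) ?_ ?_ ?_ ?_ ?_ ?_
  · filter_upwards [hU.mem_nhds hp] with q hq
    exact (integrableOn_weight hS hl (hKc q hq)).aestronglyMeasurable
  · exact integrableOn_weight hS hl (hKc p hp)
  · exact (integrableOn_weight hS hl hKc').aestronglyMeasurable
  · filter_upwards [ae_restrict_mem hS.measurableSet] with a ha q hq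
    rw [norm_smul]
    exact mul_le_mul_of_nonneg_left (hC (q, a) ⟨ball_subset_closedBall hq, ha⟩) (norm_nonneg _)
  · exact hl.norm.mul_const C
  · filter_upwards [ae_restrict_mem hS.measurableSet] with a ha q hq
    have hqa : (q, a) ∈ W := hsub ⟨ball_subset_closedBall hq, ha⟩
    have h1 : HasFDerivAt K (fderiv ℝ K (q, a)) (q, a) :=
      ((hK.contDiffAt (hW.mem_nhds hqa)).differentiableAt (by simp)).hasFDerivAt
    have h2 : HasFDerivAt (fun q : E => (q, a)) (ContinuousLinearMap.inl ℝ E A) q :=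
      hasFDerivAt_prodMk_left q a
    exact (HasFDerivAt.comp (f := fun q : E => (q, a)) q h1 h2).const_smul (ℓ a)

theorem param_contDiffOn_nat (n : ℕ) {μ : Measure A} {S : Set A} (hS : IsCompact S) {ℓ : A → ℝ}
    (hl : IntegrableOn ℓ S μ) {U : Set E} (hU : IsOpen U) {W : Set (E × A)} (hW : IsOpen W)
    (hUS : U ×ˢ S ⊆ W) : ∀ {F : Type} [NormedAddCommGroup F] [NormedSpace ℝ F]
    {K : E × A → F}, ContDiffOn ℝ (⊤ : ℕ∞) K W →
    ContDiffOn ℝ n (fun p => ∫ a in S, ℓ a • K (p, a) ∂μ) U := by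
  induction n with
  | zero =>
    intro F _ _ K hK
    refine contDiffOn_zero.2 fun p hp => ?_
    exact (param_hasFDerivAt hS hl hU hW hUS (hK.of_le (by simp)) hp).continuousAt.continuousWithinAt
  | succ n ih =>
    intro F _ _ K hK
    push_cast
    rw [contDiffOn_succ_iff_fderiv_of_isOpen hU]
    refine ⟨fun p hp => (param_hasFDerivAt hS hl hU hW hUS (hK.of_le (by simp))
      hp).differentiableAt.differentiableWithinAt, by simp, ?_⟩
    have h1 : ContDiffOn ℝ (⊤ : ℕ∞) (fun q : E × A =>
      (fderiv ℝ K q).comp (ContinuousLinearMap.inl ℝ E A)) W :=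
      (hK.fderiv_of_isOpen hW (by simp)).clm_comp contDiffOn_const
    refine (ih h1).congr fun p hp => ?_
    exact (param_hasFDerivAt hS hl hU hW hUS (hK.of_le (by simp)) hp).fderiv

/-- Integrating a jointly smooth kernel over a compact set against an integrable weight gives a
smooth function of the parameter. -/
theorem param_contDiffOn {μ : Measure A} {S : Set A} (hS : IsCompact S) {ℓ : A → ℝ}
    (hl : IntegrableOn ℓ S μ) {U : Set E} (hU : IsOpen U) {W : Set (E × A)} (hW : IsOpen W)
    (hUS : U ×ˢ S ⊆ W) {K : E × A → F} (hK : ContDiffOn ℝ (⊤ : ℕ∞) K W) :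
    ContDiffOn ℝ (⊤ : ℕ∞) (fun p => ∫ a in S, ℓ a • K (p, a) ∂μ) U :=
  contDiffOn_infty.2 fun n => param_contDiffOn_nat n hS hl hU hW hUS hK

end Param

section ParamReal

variable {A : Type} [NormedAddCommGroup A] [NormedSpace ℝ A] [MeasurableSpace A] [BorelSpace A]
  [SecondCountableTopology A]

theorem dir_one_eq_deriv {W : Set (ℝ × A)} (hW : IsOpen W) {K : ℝ × A → ℝ}
    (hK : ContDiffOn ℝ (⊤ : ℕ∞) K W) {s : ℝ} {a : A} (h : (s, a) ∈ W) :
    HasDerivAt (fun s => K (s, a)) (dir (1, 0) K (s, a)) s := by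
  have h1 := (diff_at hW hK h).hasFDerivAt
  have h2 : HasDerivAt (fun s : ℝ => (s, a)) ((1 : ℝ), (0 : A)) s :=
    (hasDerivAt_id s).prodMk (hasDerivAt_const s a)
  exact h1.comp_hasDerivAt s h2

/-- Differentiation under the integral sign for a real parameter. -/
theorem param_hasDerivAt {μ : Measure A} {S : Set A} (hS : IsCompact S) {ℓ : A → ℝ}
    (hl : IntegrableOn ℓ S μ) {U : Set ℝ} (hU : IsOpen U) {W : Set (ℝ × A)} (hW : IsOpen W)
    (hUS : U ×ˢ S ⊆ W) {K : ℝ × A → ℝ} (hK : ContDiffOn ℝ (⊤ : ℕ∞) K W) {s : ℝ} (hs : s ∈ U) :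
    HasDerivAt (fun s => ∫ a in S, ℓ a * K (s, a) ∂μ)
      (∫ a in S, ℓ a * dir (1, 0) K (s, a) ∂μ) s := by
  have h := (param_hasFDerivAt hS hl hU hW hUS (hK.of_le (by simp)) hs).hasDerivAt
  have hc : ContinuousOn (fun a => (fderiv ℝ K (s, a)).comp (ContinuousLinearMap.inl ℝ ℝ A)) S := by
    have : ContinuousOn (fun q : ℝ × A => (fderiv ℝ K q).comp (ContinuousLinearMap.inl ℝ ℝ A)) W :=
      (hK.continuousOn_fderiv_of_isOpen hW (by simp)).clm_comp continuousOn_const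
    exact this.comp (f := fun a => (s, a)) (by fun_prop) (fun a ha => hUS ⟨hs, ha⟩)
  rw [ContinuousLinearMap.integral_apply (integrableOn_weight hS hl hc)] at h
  simpa [dir] using h

/-- Second derivatives pass under the integral sign. -/
theorem param_deriv_deriv {μ : Measure A} {S : Set A} (hS : IsCompact S) {ℓ : A → ℝ}
    (hl : IntegrableOn ℓ S μ) {U : Set ℝ} (hU : IsOpen U) {W : Set (ℝ × A)} (hW : IsOpen W)
    (hUS : U ×ˢ S ⊆ W) {K : ℝ × A → ℝ} (hK : ContDiffOn ℝ (⊤ : ℕ∞) K W) {s : ℝ} (hs : s ∈ U) :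
    deriv (deriv (fun s => ∫ a in S, ℓ a * K (s, a) ∂μ)) s =
      ∫ a in S, ℓ a * deriv (deriv (fun s => K (s, a))) s ∂μ := by
  have h1 : deriv (fun s => ∫ a in S, ℓ a * K (s, a) ∂μ) =ᶠ[𝓝 s]
      fun s => ∫ a in S, ℓ a * dir (1, 0) K (s, a) ∂μ := by
    filter_upwards [hU.mem_nhds hs] with r hr
    exact (param_hasDerivAt hS hl hU hW hUS hK hr).deriv
  rw [h1.deriv_eq, (param_hasDerivAt hS hl hU hW hUS (dir_contDiffOn hW hK _) hs).deriv]
  refine setIntegral_congr_fun hS.measurableSet fun a ha => ?_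
  have hsa : (s, a) ∈ W := hUS ⟨hs, ha⟩
  have h2 : deriv (fun s => K (s, a)) =ᶠ[𝓝 s] fun s => dir (1, 0) K (s, a) := by
    filter_upwards [hU.mem_nhds hs] with r hr
    exact (dir_one_eq_deriv hW hK (hUS ⟨hr, ha⟩)).deriv
  rw [h2.deriv_eq, (dir_one_eq_deriv hW (dir_contDiffOn hW hK _) hsa).deriv]

end ParamReal

/-! ### Rotations and the spherical Laplacian -/

/-- The standard basis vectors of `ℝ³`. -/
def bv (i : Fin 3) : E3 := EuclideanSpace.single i 1

theorem bv_apply (i j : Fin 3) : bv i j = if j = i then 1 else 0 := by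
  simp [bv]

theorem e3_expand (x : E3) : x = x 0 • bv 0 + x 1 • bv 1 + x 2 • bv 2 := by
  ext i; fin_cases i <;> simp [bv_apply]

theorem norm_sq_e3 (x : E3) : ‖x‖ ^ 2 = x 0 ^ 2 + x 1 ^ 2 + x 2 ^ 2 := by
  simp [EuclideanSpace.norm_sq_eq, Fin.sum_univ_three]

/-- The infinitesimal rotation about the `k`-th coordinate axis, `x ↦ e_k × x`. -/
def gen (k : Fin 3) (x : E3) : E3 := x (k + 1) • bv (k + 2) - x (k + 2) • bv (k + 1)

/-- The projection to the plane orthogonal to the `k`-th coordinate axis. -/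
def prj (k : Fin 3) (x : E3) : E3 := x (k + 1) • bv (k + 1) + x (k + 2) • bv (k + 2)

/-- The rotation by the angle `β` about the `k`-th coordinate axis. -/
def rotFun (k : Fin 3) (β : ℝ) (x : E3) : E3 :=
  x k • bv k + cos β • prj k x + sin β • gen k x

theorem rotFun_norm (k : Fin 3) (β : ℝ) (x : E3) : ‖rotFun k β x‖ = ‖x‖ := by
  rw [← sq_eq_sq₀ (norm_nonneg _) (norm_nonneg _), norm_sq_e3, norm_sq_e3]
  fin_cases k <;> simp [rotFun, prj, gen, bv_apply] <;> nlinarith [sin_sq_add_cos_sq β]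

/-- The rotation by the angle `β` about the `k`-th coordinate axis as a linear isometry. -/
def rot (k : Fin 3) (β : ℝ) : E3 ≃ₗᵢ[ℝ] E3 :=
  LinearIsometry.toLinearIsometryEquiv
    { toFun := rotFun k β
      map_add' := fun x y => by
        simp only [rotFun, prj, gen, PiLp.add_apply]; module
      map_smul' := fun c x => by
        simp only [rotFun, prj, gen, PiLp.smul_apply, smul_eq_mul, RingHom.id_apply]; module
      norm_map' := rotFun_norm k β } rfl

theorem rot_apply (k : Fin 3) (β : ℝ) (x : E3) :
    rot k β x = x k • bv k + cos β • prj k x + sin β • gen k x := rfl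

theorem rot_zero (k : Fin 3) (x : E3) : rot k 0 x = x := by
  rw [rot_apply]
  ext i
  fin_cases k <;> fin_cases i <;> simp [prj, gen, bv_apply]

theorem rot_neg (k : Fin 3) (β : ℝ) (x : E3) : rot k (-β) (rot k β x) = x := by
  rw [rot_apply, rot_apply]
  ext i
  have h := sin_sq_add_cos_sq β
  fin_cases k <;> fin_cases i <;> simp [prj, gen, bv_apply] <;> ring_nf <;>
    rw [sin_sq] <;> ring

theorem rot_symm (k : Fin 3) (β : ℝ) (x : E3) : (rot k β).symm x = rot k (-β) x := by
  rw [LinearIsometryEquiv.symm_apply_eq]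
  have := rot_neg k (-β) x
  rw [neg_neg] at this; exact this.symm

theorem rot_hasDerivAt (k : Fin 3) (x : E3) (β : ℝ) :
    HasDerivAt (fun β => rot k β x) (-sin β • prj k x + cos β • gen k x) β := by
  have := (((hasDerivAt_const β (x k • bv k)).fun_add
    ((hasDerivAt_cos β).smul_const (prj k x)))).fun_add ((hasDerivAt_sin β).smul_const (gen k x))
  rw [zero_add] at this
  exact this

theorem rot_hasDerivAt_two (k : Fin 3) (x : E3) (β : ℝ) :
    HasDerivAt (fun β => -sin β • prj k x + cos β • gen k x)
      (-cos β • prj k x + -sin β • gen k x) β :=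
  ((hasDerivAt_sin β).neg.smul_const (prj k x)).add ((hasDerivAt_cos β).smul_const (gen k x))

theorem contDiff_rot (k : Fin 3) : ContDiff ℝ (⊤ : ℕ∞) (fun p : ℝ × E3 => rot k p.1 p.2) := by
  simp only [rot_apply, prj, gen]
  have h : ∀ i : Fin 3, ContDiff ℝ (⊤ : ℕ∞) (fun p : ℝ × E3 => p.2 i) := fun i => by fun_prop
  have hc : ContDiff ℝ (⊤ : ℕ∞) (fun p : ℝ × E3 => cos p.1) := contDiff_cos.comp contDiff_fst
  have hs : ContDiff ℝ (⊤ : ℕ∞) (fun p : ℝ × E3 => sin p.1) := contDiff_sin.comp contDiff_fst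
  exact (((h _).smul contDiff_const).add (hc.smul (((h _).smul contDiff_const).add
    ((h _).smul contDiff_const)))).add (hs.smul (((h _).smul contDiff_const).sub
    ((h _).smul contDiff_const)))

/-- The Hessian of `f` at `p` as a bilinear map. -/
def hess {E : Type} [NormedAddCommGroup E] [NormedSpace ℝ E] (f : E → ℝ) (p : E) :
    E →L[ℝ] E →L[ℝ] ℝ := fderiv ℝ (fderiv ℝ f) p

/-- Second derivative of a smooth function along a curve. -/
theorem deriv_deriv_path {E : Type} [NormedAddCommGroup E] [NormedSpace ℝ E]
    {f : E → ℝ} {W : Set E} (hW : IsOpen W)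
    (hf : ContDiffOn ℝ (⊤ : ℕ∞) f W) {γ γ' : ℝ → E} {v : E} {β : ℝ} (hβ : γ β ∈ W)
    (h1 : ∀ b, HasDerivAt γ (γ' b) b) (h2 : HasDerivAt γ' v β) :
    deriv (deriv (fun b => f (γ b))) β =
      hess f (γ β) (γ' β) (γ' β) + fderiv ℝ f (γ β) v := by
  have hcont : Continuous γ := continuous_iff_continuousAt.2 fun b => (h1 b).continuousAt
  have e1 : deriv (fun b => f (γ b)) =ᶠ[𝓝 β] fun b => fderiv ℝ f (γ b) (γ' b) := by
    filter_upwards [(hW.preimage hcont).mem_nhds hβ] with b hb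
    exact ((diff_at hW hf hb).hasFDerivAt.comp_hasDerivAt b (h1 b)).deriv
  rw [e1.deriv_eq]
  have hd : DifferentiableAt ℝ (fderiv ℝ f) (γ β) :=
    diff_at hW (hf.fderiv_of_isOpen hW (by simp)) hβ
  have h3 := (hd.hasFDerivAt.comp_hasDerivAt β (h1 β)).clm_apply h2
  exact h3.deriv

theorem dir_dir_eq_hess {E : Type} [NormedAddCommGroup E] [NormedSpace ℝ E] {f : E → ℝ} {W : Set E}
    (hW : IsOpen W) (hf : ContDiffOn ℝ (⊤ : ℕ∞) f W) {p : E} (hp : p ∈ W) (u v : E) :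
    dir u (dir v f) p = hess f p u v := by
  have hd : DifferentiableAt ℝ (fderiv ℝ f) p :=
    diff_at hW (hf.fderiv_of_isOpen hW (by simp)) hp
  have := (hd.hasFDerivAt.clm_apply (hasFDerivAt_const v p)).fderiv
  change fderiv ℝ (fun y => fderiv ℝ f y v) p u = _
  rw [this]; simp [hess]

theorem lap3_eq_hess {f : E3 → ℝ} {W : Set E3} (hW : IsOpen W)
    (hf : ContDiffOn ℝ (⊤ : ℕ∞) f W) {x : E3} (hx : x ∈ W) :
    lap3 f x = ∑ i, hess f x (bv i) (bv i) :=
  Finset.sum_congr rfl fun i _ => dir_dir_eq_hess hW hf hx (bv i) (bv i)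

/-- Splitting of the Laplacian into rotational and radial second derivatives. -/
theorem rot_sum_eq {f : E3 → ℝ} {W : Set E3} (hW : IsOpen W)
    (hf : ContDiffOn ℝ (⊤ : ℕ∞) f W) {x : E3} (hx : x ∈ W) :
    ∑ k, deriv (deriv (fun β => f (rot k β x))) 0 =
      ‖x‖ ^ 2 * lap3 f x - hess f x x x - 2 * fderiv ℝ f x x := by
  have h : ∀ k, deriv (deriv (fun β => f (rot k β x))) 0 =
      hess f x (gen k x) (gen k x) - fderiv ℝ f x (prj k x) := by
    intro k
    rw [deriv_deriv_path hW hf (by rwa [rot_zero]) (rot_hasDerivAt k x) (rot_hasDerivAt_two k x 0)]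
    simp [rot_zero, sub_eq_add_neg]
  simp only [h, lap3_eq_hess hW hf hx, norm_sq_e3]
  have hx3 := e3_expand x
  set B := hess f x
  set L := fderiv ℝ f x
  generalize h0 : x 0 = a at *
  generalize h1 : x 1 = b at *
  generalize h2 : x 2 = c at *
  rw [hx3]
  simp [Fin.sum_univ_three, gen, prj, bv_apply]
  ring

/-- The function `‖x‖² Δf(x)`; for `f` homogeneous of degree zero this is the degree-zero
homogeneous extension of the Laplace–Beltrami operator of the sphere applied to `f`. -/
def lapS (f : E3 → ℝ) (x : E3) : ℝ := ‖x‖ ^ 2 * lap3 f x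

theorem isOpen_ne : IsOpen {x : E3 | x ≠ 0} := isOpen_compl_singleton

theorem radial_zero {f : E3 → ℝ} (hf : SmoothOnSphere f) {x : E3} (hx : x ≠ 0) :
    fderiv ℝ f x x = 0 ∧ hess f x x x = 0 := by
  have hpos : (fun l : ℝ => f (l • x)) =ᶠ[𝓝 1] fun _ => f x := by
    filter_upwards [lt_mem_nhds (zero_lt_one' ℝ)] with l hl using hf.1 l hl x
  have hd : ∀ b : ℝ, HasDerivAt (fun l : ℝ => l • x) x b := fun b => by
    simpa using (hasDerivAt_id b).smul_const x
  have hx1 : (1 : ℝ) • x ∈ {x : E3 | x ≠ 0} := by simpa using hx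
  constructor
  · have h1 := ((diff_at isOpen_ne hf.2 hx1).hasFDerivAt.comp_hasDerivAt 1 (hd 1))
    have h2 := h1.deriv
    simp only [Function.comp_def] at h2
    rw [hpos.deriv_eq] at h2
    simpa using h2.symm
  · have h1 := deriv_deriv_path isOpen_ne hf.2 hx1 hd (hasDerivAt_const 1 x)
    rw [hpos.deriv.deriv_eq] at h1
    simpa using h1.symm

/-- On functions of degree zero, `lapS` is the sum of the squares of the rotation fields. -/
theorem rot_sum_lapS {f : E3 → ℝ} (hf : SmoothOnSphere f) {x : E3} (hx : x ≠ 0) :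
    ∑ k, deriv (deriv (fun β => f (rot k β x))) 0 = lapS f x := by
  rw [rot_sum_eq isOpen_ne hf.2 hx, (radial_zero hf hx).1, (radial_zero hf hx).2]
  simp [lapS]

theorem lapS_smooth {f : E3 → ℝ} (hf : SmoothOnSphere f) : SmoothOnSphere (lapS f) := by
  constructor
  · intro c hc x
    by_cases hx : x = 0
    · simp [hx]
    · rw [← rot_sum_lapS hf hx, ← rot_sum_lapS hf (smul_ne_zero hc.ne' hx)]
      simp only [map_smul, hf.1 c hc]
  · have h1 : ∀ i, ContDiffOn ℝ (⊤ : ℕ∞) (pd i (pd i f)) {x : E3 | x ≠ 0} := fun i =>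
      dir_contDiffOn isOpen_ne (dir_contDiffOn isOpen_ne hf.2 (bv i)) (bv i)
    exact (contDiff_norm_sq ℝ).contDiffOn.mul (ContDiffOn.sum fun i _ => h1 i)

/-! ### Conformal reduction of the wave equation -/

/-- The exterior of the light cone. -/
def Ext : Set (ℝ × E3) := {p | |p.1| < ‖p.2‖}

/-- The domain of the self-similar coordinates `(s, x)`, `s = t / ‖x‖`. -/
def Cyl : Set (ℝ × E3) := {p | |p.1| < 1 ∧ p.2 ≠ 0}

theorem isOpen_Ext : IsOpen Ext := isOpen_lt (by fun_prop) (by fun_prop)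

theorem isOpen_Cyl : IsOpen Cyl :=
  IsOpen.and (isOpen_lt (by fun_prop) (by fun_prop)) (isOpen_ne.preimage continuous_snd)

theorem smooth_slice {g : ℝ → E3 → ℝ} {W : Set (ℝ × E3)}
    (hg : ContDiffOn ℝ (⊤ : ℕ∞) (fun p : ℝ × E3 => g p.1 p.2) W) {U : Set E3} {s : ℝ}
    (hU : ∀ x ∈ U, (s, x) ∈ W) : ContDiffOn ℝ (⊤ : ℕ∞) (g s) U :=
  hg.comp (f := fun x => (s, x)) (contDiffOn_const.prodMk contDiffOn_id) hU

theorem smooth_slice_fst {g : ℝ → E3 → ℝ} {W : Set (ℝ × E3)}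
    (hg : ContDiffOn ℝ (⊤ : ℕ∞) (fun p : ℝ × E3 => g p.1 p.2) W) {U : Set ℝ} {x : E3}
    (hU : ∀ s ∈ U, (s, x) ∈ W) : ContDiffOn ℝ (⊤ : ℕ∞) (fun s => g s x) U :=
  hg.comp (f := fun s => (s, x)) (contDiffOn_id.prodMk contDiffOn_const) hU

/-- A smooth function of one variable on an open set has two classical derivatives there. -/
theorem smooth_hasDerivAt {a : ℝ → ℝ} {U : Set ℝ} (hU : IsOpen U)
    (ha : ContDiffOn ℝ (⊤ : ℕ∞) a U) {s : ℝ} (hs : s ∈ U) :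
    HasDerivAt a (deriv a s) s ∧ HasDerivAt (deriv a) (deriv (deriv a) s) s := by
  refine ⟨(diff_at hU ha hs).hasDerivAt, ?_⟩
  have : ContDiffOn ℝ (⊤ : ℕ∞) (deriv a) U := ha.deriv_of_isOpen hU (by simp)
  exact (diff_at hU this hs).hasDerivAt

theorem deriv_comp_fun {a f : ℝ → ℝ} {d f' t : ℝ} (hf : HasDerivAt f f' t)
    (ha : HasDerivAt a d (f t)) : HasDerivAt (fun u => a (f u)) (d * f') t := ha.comp t hf

theorem abs_div_lt_one {t r : ℝ} (h : |t| < r) : |t / r| < 1 := by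
  have hr : 0 < r := (abs_nonneg t).trans_lt h
  rw [abs_div, abs_of_pos hr]; exact (div_lt_one hr).2 h

/-- The one-variable identity behind `wave_conversion`, relating the second time derivative and the
first two radial derivatives of `a(t/r)/(r² - t²)` to `a''`. Radial derivatives are taken along
`l ↦ l r` at `l = 1`. -/
theorem conversion_aux {a : ℝ → ℝ} (ha : ContDiffOn ℝ (⊤ : ℕ∞) a {s | |s| < 1}) {t r : ℝ}
    (h : |t| < r) :
    r ^ 2 * deriv (deriv (fun u => a (u / r) / (r ^ 2 - u ^ 2))) t -
      deriv (deriv (fun l => a (t / (l * r)) / ((l * r) ^ 2 - t ^ 2))) 1 -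
      2 * deriv (fun l => a (t / (l * r)) / ((l * r) ^ 2 - t ^ 2)) 1 =
    deriv (deriv a) (t / r) / r ^ 2 := by
  have hr : 0 < r := (abs_nonneg t).trans_lt h
  have hU : IsOpen {s : ℝ | |s| < 1} := isOpen_lt (by fun_prop) (by fun_prop)
  have hsq : ∀ u l : ℝ, |u| < l → l ^ 2 - u ^ 2 ≠ 0 := fun u l hul => by
    have := sq_lt_sq' (neg_lt_of_abs_lt hul) (lt_of_abs_lt hul); linarith
  have e1 : deriv (fun u => a (u / r) / (r ^ 2 - u ^ 2)) =ᶠ[𝓝 t] fun u =>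
      (deriv a (u / r) * (1 / r) * (r ^ 2 - u ^ 2) - a (u / r) * (-(2 * u))) /
        (r ^ 2 - u ^ 2) ^ 2 := by
    have : {u : ℝ | |u| < r} ∈ 𝓝 t :=
      (isOpen_lt (by fun_prop) (by fun_prop) : IsOpen {u : ℝ | |u| < r}).mem_nhds h
    filter_upwards [this] with u hu
    have h1 := (smooth_hasDerivAt hU ha (abs_div_lt_one hu)).1
    have h2 : HasDerivAt (fun u => a (u / r)) (deriv a (u / r) * (1 / r)) u :=
      deriv_comp_fun ((hasDerivAt_id u).div_const r) h1
    have h3 : HasDerivAt (fun u => r ^ 2 - u ^ 2) (-(2 * u)) u := by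
      simpa using (hasDerivAt_pow 2 u).const_sub (r ^ 2)
    exact (h2.fun_div h3 (hsq u r hu)).deriv
  have e2 : deriv (deriv (fun u => a (u / r) / (r ^ 2 - u ^ 2))) t =
      deriv (deriv a) (t / r) / r ^ 2 / (r ^ 2 - t ^ 2)
       + 4 * t * (deriv a (t / r) / r) / (r ^ 2 - t ^ 2) ^ 2
       + a (t / r) * (2 / (r ^ 2 - t ^ 2) ^ 2 + 8 * t ^ 2 / (r ^ 2 - t ^ 2) ^ 3) := by
    rw [e1.deriv_eq]
    obtain ⟨h1, h1'⟩ := smooth_hasDerivAt hU ha (abs_div_lt_one h)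
    have h2 : HasDerivAt (fun u => a (u / r)) (deriv a (t / r) * (1 / r)) t :=
      deriv_comp_fun ((hasDerivAt_id t).div_const r) h1
    have h2' : HasDerivAt (fun u => deriv a (u / r)) (deriv (deriv a) (t / r) * (1 / r)) t :=
      deriv_comp_fun ((hasDerivAt_id t).div_const r) h1'
    have h3 : HasDerivAt (fun u => r ^ 2 - u ^ 2) (-(2 * t)) t := by
      simpa using (hasDerivAt_pow 2 t).const_sub (r ^ 2)
    have h4 : HasDerivAt (fun u : ℝ => -(2 * u)) (-(2 * 1)) t :=
      ((hasDerivAt_id t).const_mul 2).fun_neg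
    have hne := hsq t r h
    rw [((((h2'.mul_const (1 / r)).fun_mul h3).fun_sub (h2.fun_mul h4)).fun_div (h3.fun_pow 2)
      (pow_ne_zero 2 hne)).deriv]
    field_simp
    ring
  have hnl : {l : ℝ | 0 < l ∧ |t| < l * r} ∈ 𝓝 (1 : ℝ) :=
    (IsOpen.and (isOpen_lt (by fun_prop) (by fun_prop))
      (isOpen_lt (by fun_prop) (by fun_prop)) : IsOpen {l : ℝ | 0 < l ∧ |t| < l * r}).mem_nhds
      (by simpa using h)
  have hdl : ∀ l : ℝ, 0 < l → HasDerivAt (fun l => t / (l * r)) (-(t / (l ^ 2 * r))) l := by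
    intro l hl
    have := (hasDerivAt_const l t).fun_div ((hasDerivAt_id l).mul_const r)
      (mul_pos hl hr).ne'
    refine this.congr_deriv ?_
    simp only [id]; field_simp; ring
  have hp : ∀ l : ℝ, HasDerivAt (fun l => (l * r) ^ 2 - t ^ 2) (2 * l * r ^ 2) l := by
    intro l
    have := ((((hasDerivAt_id l).mul_const r).fun_pow 2).sub_const (t ^ 2))
    refine this.congr_deriv ?_
    simp; ring
  have hd1 : ∀ l : ℝ, 0 < l ∧ |t| < l * r →
      HasDerivAt (fun l => a (t / (l * r)) / ((l * r) ^ 2 - t ^ 2))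
      ((deriv a (t / (l * r)) * (-(t / (l ^ 2 * r))) * ((l * r) ^ 2 - t ^ 2) -
        a (t / (l * r)) * (2 * l * r ^ 2)) / ((l * r) ^ 2 - t ^ 2) ^ 2) l := by
    rintro l ⟨hl, hlt⟩
    have h1 := (smooth_hasDerivAt hU ha (abs_div_lt_one hlt)).1
    exact ((deriv_comp_fun (hdl l hl) h1).fun_div (hp l) (hsq t _ hlt))
  have h11 : (0:ℝ) < 1 ∧ |t| < 1 * r := by simpa using h
  rw [e2, (hd1 1 h11).deriv]
  have e3 : deriv (fun l => a (t / (l * r)) / ((l * r) ^ 2 - t ^ 2)) =ᶠ[𝓝 1] fun l =>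
      (deriv a (t / (l * r)) * (-(t / (l ^ 2 * r))) * ((l * r) ^ 2 - t ^ 2) -
        a (t / (l * r)) * (2 * l * r ^ 2)) / ((l * r) ^ 2 - t ^ 2) ^ 2 := by
    filter_upwards [hnl] with l hl using (hd1 l hl).deriv
  rw [e3.deriv_eq]
  have hne : (1 * r) ^ 2 - t ^ 2 ≠ 0 := by simpa using hsq t r h
  obtain ⟨h1, h1'⟩ := smooth_hasDerivAt hU ha (abs_div_lt_one h11.2)
  have k1 : HasDerivAt (fun l : ℝ => -(t / (l ^ 2 * r))) (2 * t / r) 1 := by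
    have := ((hasDerivAt_const (1:ℝ) t).fun_div (((hasDerivAt_id (1:ℝ)).fun_pow 2).mul_const r)
      (by simpa using hr.ne')).fun_neg
    refine this.congr_deriv ?_
    simp; field_simp
  have k2 : HasDerivAt (fun l : ℝ => 2 * l * r ^ 2) (2 * 1 * r ^ 2) 1 :=
    ((hasDerivAt_id (1:ℝ)).const_mul 2).mul_const (r ^ 2)
  rw [(((((deriv_comp_fun (hdl 1 one_pos) h1').fun_mul k1).fun_mul (hp 1)).fun_sub
    ((deriv_comp_fun (hdl 1 one_pos) h1).fun_mul k2)).fun_div ((hp 1).fun_pow 2) (pow_ne_zero 2 hne)).deriv]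
  have hne' := hsq t r h
  simp only [one_mul, one_pow, mul_one]
  field_simp
  ring

/-- In self-similar coordinates the wave equation for `φ = g/(‖x‖² - t²)` becomes
`(1 - s²) ∂ₛ² g = lapS g`. -/
theorem wave_conversion {g φ : ℝ → E3 → ℝ}
    (hg : ContDiffOn ℝ (⊤ : ℕ∞) (fun p : ℝ × E3 => g p.1 p.2) Cyl)
    (hh : ∀ s, |s| < 1 → HomogZero (g s))
    (hφ : ContDiffOn ℝ (⊤ : ℕ∞) (fun p : ℝ × E3 => φ p.1 p.2) Ext)
    (h : ∀ t x, |t| < ‖x‖ → φ t x = g (t / ‖x‖) x / (‖x‖ ^ 2 - t ^ 2)) {t : ℝ} {x : E3}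
    (htx : |t| < ‖x‖) :
    ‖x‖ ^ 4 * (dt2 φ t x - lap3 (φ t) x) = deriv (deriv (fun s => g s x)) (t / ‖x‖) -
      lapS (g (t / ‖x‖)) x / (1 - (t / ‖x‖) ^ 2) := by
  have hr : 0 < ‖x‖ := (abs_nonneg t).trans_lt htx
  have hx : x ≠ 0 := norm_pos_iff.1 hr
  have hs := abs_div_lt_one htx
  have hopen : IsOpen {y : E3 | |t| < ‖y‖} := isOpen_lt (by fun_prop) (by fun_prop)
  have hφt : ContDiffOn ℝ (⊤ : ℕ∞) (φ t) {y : E3 | |t| < ‖y‖} := smooth_slice hφ fun y hy => hy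
  have hgs : SmoothOnSphere (g (t / ‖x‖)) := ⟨hh _ hs, smooth_slice hg fun y hy => ⟨hs, hy⟩⟩
  have ha : ContDiffOn ℝ (⊤ : ℕ∞) (fun s => g s x) {s | |s| < 1} :=
    smooth_slice_fst hg fun s hs => (show (s, x) ∈ Cyl from ⟨hs, hx⟩)
  obtain ⟨a, hag⟩ : ∃ a : ℝ → ℝ, a = fun s => g s x := ⟨_, rfl⟩
  have hag' : ∀ s, g s x = a s := fun s => by rw [hag]
  rw [← hag] at ha ⊢
  have hrot := rot_sum_eq hopen hφt (x := x) htx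
  have e1 : ∀ k, deriv (deriv (fun β => φ t (rot k β x))) 0 =
      deriv (deriv (fun β => g (t / ‖x‖) (rot k β x))) 0 / (‖x‖ ^ 2 - t ^ 2) := by
    intro k
    have : (fun β => φ t (rot k β x)) =
        fun β => g (t / ‖x‖) (rot k β x) / (‖x‖ ^ 2 - t ^ 2) := by
      ext β; rw [h t _ (by simpa using htx)]; simp
    have h2 : deriv (fun β => φ t (rot k β x)) =
        fun β => deriv (fun β => g (t / ‖x‖) (rot k β x)) β / (‖x‖ ^ 2 - t ^ 2) := by
      ext β; rw [this, deriv_div_const]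
    rw [h2, deriv_div_const]
  simp only [e1] at hrot
  rw [← Finset.sum_div, rot_sum_lapS hgs hx] at hrot
  -- the radial derivatives
  have hnl : {l : ℝ | 0 < l ∧ |t| < l * ‖x‖} ∈ 𝓝 (1 : ℝ) :=
    (IsOpen.and (isOpen_lt (by fun_prop) (by fun_prop))
      (isOpen_lt (by fun_prop) (by fun_prop)) :
        IsOpen {l : ℝ | 0 < l ∧ |t| < l * ‖x‖}).mem_nhds (by simpa using htx)
  have hrad : (fun l : ℝ => φ t (l • x)) =ᶠ[𝓝 1] fun l =>
      a (t / (l * ‖x‖)) / ((l * ‖x‖) ^ 2 - t ^ 2) := by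
    filter_upwards [hnl] with l hl
    have hn : ‖l • x‖ = l * ‖x‖ := by rw [norm_smul, norm_of_nonneg hl.1.le]
    rw [h t _ (by rw [hn]; exact hl.2), hn, hh _ (abs_div_lt_one hl.2) l hl.1, hag']
  have hd : ∀ b : ℝ, HasDerivAt (fun l : ℝ => l • x) x b := fun b => by
    simpa using (hasDerivAt_id b).smul_const x
  have hx1 : (1 : ℝ) • x ∈ {y : E3 | |t| < ‖y‖} := by simpa using htx
  have r1 : deriv (fun l => a (t / (l * ‖x‖)) / ((l * ‖x‖) ^ 2 - t ^ 2)) 1 =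
      fderiv ℝ (φ t) x x := by
    rw [← hrad.deriv_eq]
    have := ((diff_at hopen hφt hx1).hasFDerivAt.comp_hasDerivAt 1 (hd 1)).deriv
    simpa [Function.comp_def] using this
  have r2 : deriv (deriv (fun l => a (t / (l * ‖x‖)) /
      ((l * ‖x‖) ^ 2 - t ^ 2))) 1 = hess (φ t) x x x := by
    rw [← hrad.deriv.deriv_eq]
    have := deriv_deriv_path (γ := fun l : ℝ => l • x) (β := 1) (γ' := fun _ => x) hopen hφt hx1 hd (hasDerivAt_const 1 x)
    rw [one_smul, map_zero, add_zero] at this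
    exact this
  have ht : dt2 φ t x = deriv (deriv (fun u => a (u / ‖x‖) /
      (‖x‖ ^ 2 - u ^ 2))) t := by
    have : (fun u => φ u x) =ᶠ[𝓝 t] fun u => a (u / ‖x‖) / (‖x‖ ^ 2 - u ^ 2) := by
      have hn : {u : ℝ | |u| < ‖x‖} ∈ 𝓝 t :=
        (isOpen_lt (by fun_prop) (by fun_prop) : IsOpen {u : ℝ | |u| < ‖x‖}).mem_nhds htx
      filter_upwards [hn] with u hu using (by rw [h u x hu, hag'])
    exact (this.deriv).deriv_eq
  have hc := conversion_aux ha htx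
  rw [r1, r2, ← ht] at hc
  have hne : ‖x‖ ^ 2 - t ^ 2 ≠ 0 := by
    have := sq_lt_sq' (neg_lt_of_abs_lt htx) (lt_of_abs_lt htx); linarith
  have hq : 1 - (t / ‖x‖) ^ 2 = (‖x‖ ^ 2 - t ^ 2) / ‖x‖ ^ 2 := by field_simp
  rw [hq, div_div_eq_mul_div, ← sub_eq_zero]
  have hc' : deriv (deriv a) (t / ‖x‖) = ‖x‖ ^ 2 * (‖x‖ ^ 2 * dt2 φ t x -
      hess (φ t) x x x - 2 * fderiv ℝ (φ t) x x) := by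
    rw [hc]; field_simp
  have hrot' : lapS (g (t / ‖x‖)) x * ‖x‖ ^ 2 / (‖x‖ ^ 2 - t ^ 2) = ‖x‖ ^ 2 *
      (‖x‖ ^ 2 * lap3 (φ t) x - hess (φ t) x x x - 2 * fderiv ℝ (φ t) x x) := by
    rw [← hrot]; ring
  rw [hc', hrot']; ring

/-! ### Circle means -/

theorem sum_isometry (B : E3 →L[ℝ] E3 →L[ℝ] ℝ) (Q : E3 ≃ₗᵢ[ℝ] E3) :
    ∑ i, B (Q (bv i)) (Q (bv i)) = ∑ i, B (bv i) (bv i) := by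
  let T : E3 →ₗ[ℝ] E3 := ((InnerProductSpace.toDual ℝ E3).symm.toLinearIsometry.toLinearMap).comp
    (B : E3 →ₗ[ℝ] (E3 →L[ℝ] ℝ))
  have hT : ∀ u v, B u v = ⟪v, T u⟫ := fun u v => by
    rw [real_inner_comm]
    exact (InnerProductSpace.toDual_symm_apply (𝕜 := ℝ)).symm
  have h1 := T.trace_eq_sum_inner (EuclideanSpace.basisFun (Fin 3) ℝ)
  have h2 := T.trace_eq_sum_inner ((EuclideanSpace.basisFun (Fin 3) ℝ).map Q)
  simp only [hT]
  rw [h1] at h2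
  simpa [bv] using h2.symm

theorem smooth_comp_isometry {N : E3 → ℝ} (hN : SmoothOnSphere N) (Q : E3 ≃ₗᵢ[ℝ] E3) :
    SmoothOnSphere (fun x => N (Q x)) := by
  refine ⟨fun c hc x => by simp only [map_smul, hN.1 c hc], ?_⟩
  exact hN.2.comp Q.contDiff.contDiffOn fun x hx => by simpa using hx

/-- Rotation invariance of the Laplace–Beltrami operator. -/
theorem lapS_comp_isometry {N : E3 → ℝ} (hN : SmoothOnSphere N) (Q : E3 ≃ₗᵢ[ℝ] E3) {x : E3}
    (hx : x ≠ 0) : lapS (fun y => N (Q y)) x = lapS N (Q x) := by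
  have hQx : Q x ≠ 0 := by simpa using hx
  have hQN := smooth_comp_isometry hN Q
  unfold lapS
  rw [lap3_eq_hess isOpen_ne hQN.2 hx, lap3_eq_hess isOpen_ne hN.2 hQx,
    ← sum_isometry (hess N (Q x)) Q, LinearIsometryEquiv.norm_map]
  congr 1
  refine Finset.sum_congr rfl fun i _ => ?_
  have hd : ∀ b : ℝ, HasDerivAt (fun l : ℝ => x + l • bv i) (bv i) b := fun b => by
    simpa using ((hasDerivAt_id b).smul_const (bv i)).const_add x
  have hd' : ∀ b : ℝ, HasDerivAt (fun l : ℝ => Q (x + l • bv i)) (Q (bv i)) b := fun b => by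
    have := (Q.toContinuousLinearEquiv : E3 →L[ℝ] E3).hasFDerivAt.comp_hasDerivAt b (hd b)
    exact this
  have e0 : x + (0 : ℝ) • bv i = x := by simp
  have h1 := deriv_deriv_path (γ := fun l : ℝ => x + l • bv i) (β := 0) (γ' := fun _ => bv i)
    isOpen_ne hQN.2 (by simpa using hx) hd (hasDerivAt_const 0 (bv i))
  have h2 := deriv_deriv_path (γ := fun l : ℝ => Q (x + l • bv i)) (β := 0)
    (γ' := fun _ => Q (bv i)) isOpen_ne hN.2 (by simpa using hx) hd' (hasDerivAt_const 0 (Q (bv i)))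
  rw [map_zero, add_zero] at h1 h2
  simp only [e0] at h1 h2
  rw [← h1, ← h2]

/-- Stereographic parametrisation of the circles of latitude around the third coordinate axis:
`pt w θ / (1 + w²)` has colatitude `2 arctan w` and longitude `θ`. -/
def pt (w θ : ℝ) : E3 := (1 - w ^ 2) • bv 2 + (2 * w) • (cos θ • bv 0 + sin θ • bv 1)

theorem norm_pt (w θ : ℝ) : ‖pt w θ‖ = 1 + w ^ 2 := by
  rw [← sq_eq_sq₀ (norm_nonneg _) (by positivity), norm_sq_e3]
  simp [pt, bv_apply]
  linear_combination (4 * w ^ 2) * sin_sq_add_cos_sq θ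

theorem pt_ne (w θ : ℝ) : pt w θ ≠ 0 := by
  rw [← norm_pos_iff, norm_pt]; positivity

theorem contDiff_pt : ContDiff ℝ (⊤ : ℕ∞) (fun p : ℝ × ℝ => pt p.1 p.2) := by
  unfold pt; fun_prop

/-- Integral of `N`, with respect to the angle `θ`, over the circle with stereographic radius `w`
around the point `Q e₃`; that is, `2π` times the circle mean. -/
def circ (N : E3 → ℝ) (w : ℝ) (Q : E3 ≃ₗᵢ[ℝ] E3) : ℝ := ∫ θ in (0)..(2 * π), N (Q (pt w θ))

theorem interval_eq_set (f : ℝ → ℝ) :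
    ∫ θ in (0)..(2 * π), f θ = ∫ θ in Icc 0 (2 * π), (1 : ℝ) * f θ := by
  rw [intervalIntegral.integral_of_le (by positivity), integral_Icc_eq_integral_Ioc]
  simp

theorem inner_e3 (u v : E3) : ⟪u, v⟫ = u 0 * v 0 + u 1 * v 1 + u 2 * v 2 := by
  simp [PiLp.inner_apply, Fin.sum_univ_three, mul_comm]

/-- The circle mean depends only on the centre of the circle. -/
theorem circ_eq_of_center (N : E3 → ℝ) (w : ℝ) (Q Q' : E3 ≃ₗᵢ[ℝ] E3) (h : Q (bv 2) = Q' (bv 2)) :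
    circ N w Q = circ N w Q' := by
  -- `T = Q'⁻¹ Q` fixes the axis and acts on the orthogonal plane by an orthogonal matrix
  set T : E3 ≃ₗᵢ[ℝ] E3 := Q.trans Q'.symm
  have hT2 : T (bv 2) = bv 2 := by
    change Q'.symm (Q (bv 2)) = bv 2
    rw [h]; simp
  have hTQ : ∀ x, Q x = Q' (T x) := fun x => by
    change Q x = Q' (Q'.symm (Q x)); simp
  have hin : ∀ u v, ⟪T u, T v⟫ = ⟪u, v⟫ := T.inner_map_map
  have a02 : T (bv 0) 2 = 0 := by
    have := hin (bv 0) (bv 2); rw [hT2] at this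
    simpa [bv, PiLp.inner_apply, Fin.sum_univ_three] using this
  have a12 : T (bv 1) 2 = 0 := by
    have := hin (bv 1) (bv 2); rw [hT2] at this
    simpa [bv, PiLp.inner_apply, Fin.sum_univ_three] using this
  have h00 := hin (bv 0) (bv 0)
  have h11 := hin (bv 1) (bv 1)
  have h01 := hin (bv 0) (bv 1)
  rw [inner_e3, inner_e3] at h00 h11 h01
  simp only [a02, a12, bv_apply] at h00 h11 h01
  simp at h00 h11 h01
  set c := T (bv 0) 0
  set s := T (bv 0) 1
  set c' := T (bv 1) 0
  set s' := T (bv 1) 1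
  obtain ⟨γ, hc, hs⟩ : ∃ γ : ℝ, c = cos γ ∧ s = sin γ := by
    have hz : ‖(⟨c, s⟩ : ℂ)‖ = 1 := by
      rw [← sq_eq_sq₀ (norm_nonneg _) zero_le_one, ← Complex.normSq_eq_norm_sq, Complex.normSq_mk]
      linarith
    refine ⟨Complex.arg ⟨c, s⟩, ?_, ?_⟩
    · rw [Complex.cos_arg (by rw [← norm_pos_iff, hz]; exact one_pos), hz]; simp
    · rw [Complex.sin_arg, hz]; simp
  obtain ⟨ε, hε⟩ : ∃ ε : ℝ, ε = c * s' - s * c' := ⟨_, rfl⟩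
  have hc' : c' = -ε * s := by rw [hε]; linear_combination (-c') * h00 + c * h01
  have hs' : s' = ε * c := by rw [hε]; linear_combination (-s') * h00 + s * h01
  have hε2 : ε = 1 ∨ ε = -1 := by
    have : ε ^ 2 = 1 := by
      rw [hc', hs'] at h11
      linear_combination h11 - ε ^ 2 * h00
    exact sq_eq_one_iff.1 this
  have hT0 : T (bv 0) = c • bv 0 + s • bv 1 := by
    conv_lhs => rw [e3_expand (T (bv 0)), a02]
    simp [c, s]
  have hT1 : T (bv 1) = c' • bv 0 + s' • bv 1 := by
    conv_lhs => rw [e3_expand (T (bv 1)), a12]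
    simp [c', s']
  have hpt : ∀ θ, T (pt w θ) = pt w (ε * θ + γ) := by
    intro θ
    have e1 : cos (ε * θ + γ) = cos θ * c + sin θ * c' := by
      rw [cos_add, hc', hs, hc]
      rcases hε2 with rfl | rfl <;> simp
      ring
    have e2 : sin (ε * θ + γ) = cos θ * s + sin θ * s' := by
      rw [sin_add, hs', hs, hc]
      rcases hε2 with rfl | rfl <;> simp <;> ring
    simp only [pt, map_add, map_smul, hT0, hT1, hT2, e1, e2]
    module
  unfold circ
  simp only [hTQ, hpt]
  have hper : Function.Periodic (fun θ => N (Q' (pt w θ))) (2 * π) := fun θ => by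
    simp [pt]
  rcases hε2 with rfl | rfl
  · simp only [one_mul]
    rw [intervalIntegral.integral_comp_add_right (fun θ => N (Q' (pt w θ))) γ]
    have := hper.intervalIntegral_add_eq γ 0
    simpa [add_comm] using this
  · simp only [neg_one_mul, neg_add_eq_sub]
    rw [intervalIntegral.integral_comp_sub_left (fun θ => N (Q' (pt w θ))) γ]
    have := hper.intervalIntegral_add_eq (γ - 2 * π) 0
    simpa using this

theorem exists_frame (x : E3) : ∃ Q : E3 ≃ₗᵢ[ℝ] E3, x ≠ 0 → Q (bv 2) = ‖x‖⁻¹ • x := by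
  refine ⟨Submodule.reflection (ℝ ∙ (bv 2 - ‖x‖⁻¹ • x))ᗮ, fun hx => ?_⟩
  apply Submodule.reflection_sub
  rw [norm_smul, norm_inv, norm_norm, inv_mul_cancel₀ (norm_ne_zero_iff.2 hx)]
  simp [bv]

/-- A linear isometry taking `e₃` to the direction of `x`; arbitrary at `x = 0`. -/
def frame (x : E3) : E3 ≃ₗᵢ[ℝ] E3 := (exists_frame x).choose

theorem frame_spec {x : E3} (hx : x ≠ 0) : frame x (bv 2) = ‖x‖⁻¹ • x :=
  (exists_frame x).choose_spec hx

/-- The circle integral of `N` around the direction of `x`, with stereographic radius `w`. By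
`FF_eq` it does not depend on the choice made in `frame`. -/
def FF (N : E3 → ℝ) (w : ℝ) (x : E3) : ℝ := circ N w (frame x)

theorem FF_eq (N : E3 → ℝ) (w : ℝ) {x : E3} (hx : x ≠ 0) {Q : E3 ≃ₗᵢ[ℝ] E3}
    (hQ : Q (bv 2) = ‖x‖⁻¹ • x) : FF N w x = circ N w Q :=
  circ_eq_of_center N w _ _ ((frame_spec hx).trans hQ.symm)

theorem FF_homog (N : E3 → ℝ) (w : ℝ) : HomogZero (FF N w) := by
  intro c hc x
  by_cases hx : x = 0
  · simp [hx]
  · refine FF_eq N w (smul_ne_zero hc.ne' hx) ?_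
    rw [frame_spec hx, norm_smul, norm_of_nonneg hc.le, smul_smul]
    congr 1; field_simp

theorem FF_zero {N : E3 → ℝ} (hN : HomogZero N) {x : E3} (hx : x ≠ 0) :
    FF N 0 x = 2 * π * N x := by
  have : ∀ θ, N (frame x (pt 0 θ)) = N x := fun θ => by
    have : pt 0 θ = bv 2 := by simp [pt]
    rw [this, frame_spec hx, hN _ (by positivity)]
  simp [FF, circ, this]

theorem FF_isometry (N : E3 → ℝ) (w : ℝ) (R : E3 ≃ₗᵢ[ℝ] E3) {x : E3} (hx : x ≠ 0) :
    FF N w (R x) = ∫ θ in Icc 0 (2 * π), (1 : ℝ) * N (R (frame x (pt w θ))) := by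
  rw [FF_eq N w (x := R x) (by simpa using hx) (Q := (frame x).trans R) (by simp [frame_spec hx]),
    circ, interval_eq_set]
  rfl

/-! ### Smoothness of circle means -/

theorem integrableOn_one {S : Set ℝ} (hS : IsCompact S) :
    IntegrableOn (fun _ : ℝ => (1 : ℝ)) S volume :=
  continuousOn_const.integrableOn_compact hS

/-- Circle means are smooth wherever a smooth frame is available. -/
theorem FF_smooth_aux {N : E3 → ℝ} (hN : SmoothOnSphere N) {U : Set E3} (hU : IsOpen U)
    (hU0 : ∀ x ∈ U, x ≠ 0) (Q : E3 → E3 ≃ₗᵢ[ℝ] E3)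
    (hQ : ∀ x ∈ U, Q x (bv 2) = ‖x‖⁻¹ • x)
    (hQs : ∀ v, ContDiffOn ℝ (⊤ : ℕ∞) (fun x => Q x v) U) :
    ContDiffOn ℝ (⊤ : ℕ∞) (fun p : ℝ × E3 => FF N p.1 p.2) {p | p.2 ∈ U} := by
  have hW : IsOpen {q : (ℝ × E3) × ℝ | q.1.2 ∈ U} := hU.preimage (by fun_prop)
  have h := param_contDiffOn (E := ℝ × E3) (μ := (volume : Measure ℝ)) (S := Icc 0 (2 * π))
    isCompact_Icc
    (integrableOn_one isCompact_Icc) (U := {p : ℝ × E3 | p.2 ∈ U}) (hU.preimage continuous_snd) hW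
    (K := fun q : (ℝ × E3) × ℝ => N (Q q.1.2 (pt q.1.1 q.2))) (fun q hq => hq.1) ?_
  · refine h.congr fun p hp => ?_
    rw [FF_eq N p.1 (hU0 _ hp) (hQ _ hp), circ, interval_eq_set]
    rfl
  · have hv : ∀ v, ContDiffOn ℝ (⊤ : ℕ∞) (fun q : (ℝ × E3) × ℝ => Q q.1.2 v)
        {q : (ℝ × E3) × ℝ | q.1.2 ∈ U} := fun v =>
      (hQs v).comp (f := fun q : (ℝ × E3) × ℝ => q.1.2) (by fun_prop) fun q hq => hq
    have h1 : ∀ {f : (ℝ × E3) × ℝ → ℝ} {s}, ContDiff ℝ (⊤ : ℕ∞) f → ContDiffOn ℝ (⊤ : ℕ∞) f s :=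
      fun h => h.contDiffOn
    have : ContDiffOn ℝ (⊤ : ℕ∞) (fun q : (ℝ × E3) × ℝ => Q q.1.2 (pt q.1.1 q.2))
        {q : (ℝ × E3) × ℝ | q.1.2 ∈ U} := by
      simp only [pt, map_add, map_smul]
      exact ((h1 (by fun_prop)).smul (hv _)).add ((h1 (by fun_prop)).smul
        (((h1 (by fun_prop)).smul (hv _)).add ((h1 (by fun_prop)).smul (hv _))))
    exact hN.2.comp this fun q _ => by simpa using pt_ne _ _

theorem smooth_dirx : ContDiffOn ℝ (⊤ : ℕ∞) (fun x : E3 => ‖x‖⁻¹ • x) {x | x ≠ 0} := by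
  have hn : ContDiffOn ℝ (⊤ : ℕ∞) (fun x : E3 => ‖x‖) {x | x ≠ 0} :=
    contDiffOn_id.norm ℝ fun x hx => hx
  exact (hn.inv fun x hx => norm_ne_zero_iff.2 hx).smul contDiffOn_id

theorem norm_dirx {x : E3} (hx : x ≠ 0) : ‖‖x‖⁻¹ • x‖ = 1 := by
  rw [norm_smul, norm_inv, norm_norm, inv_mul_cancel₀ (norm_ne_zero_iff.2 hx)]

/-- Reflections in the mirror orthogonal to a smooth nonvanishing field depend smoothly on the
point. -/
theorem smooth_reflection {u : E3 → E3} {U : Set E3} (hu : ContDiffOn ℝ (⊤ : ℕ∞) u U)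
    (hu0 : ∀ x ∈ U, u x ≠ 0) (v : E3) :
    ContDiffOn ℝ (⊤ : ℕ∞) (fun x => Submodule.reflection (ℝ ∙ (u x))ᗮ v) U := by
  have : ∀ x ∈ U, Submodule.reflection (ℝ ∙ (u x))ᗮ v =
      v - (2 * (⟪u x, v⟫ / (‖u x‖ ^ 2))) • u x := by
    intro x _
    rw [Submodule.reflection_orthogonal_apply, Submodule.reflection_singleton_apply]
    simp only [RCLike.ofReal_real_eq_id, id]
    module
  refine ContDiffOn.congr ?_ this
  exact contDiffOn_const.sub ((contDiffOn_const.mul ((hu.inner ℝ contDiffOn_const).div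
    (hu.norm_sq ℝ) fun x hx => by simpa using hu0 x hx)).smul hu)

/-- Circle means are jointly smooth in the radius and the centre. Although `frame` need not be
continuous, the circle mean depends only on the centre, so smooth local frames may be used instead. -/
theorem FF_smooth {N : E3 → ℝ} (hN : SmoothOnSphere N) :
    ContDiffOn ℝ (⊤ : ℕ∞) (fun p : ℝ × E3 => FF N p.1 p.2) {p | p.2 ≠ 0} := by
  have hb : ‖bv 2‖ = 1 := by simp [bv]
  -- two charts, with frames obtained from a reflection taking `e₃` to `± x / ‖x‖`
  have h1 : ContDiffOn ℝ (⊤ : ℕ∞) (fun p : ℝ × E3 => FF N p.1 p.2)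
      {p | p.2 ∈ {x : E3 | x ≠ 0} ∩ (fun x : E3 => bv 2 - ‖x‖⁻¹ • x) ⁻¹' {x | x ≠ 0}} := by
    refine FF_smooth_aux hN ?_ (fun x hx => hx.1)
      (fun x => Submodule.reflection (ℝ ∙ (bv 2 - ‖x‖⁻¹ • x))ᗮ) (fun x hx => ?_) (fun v => ?_)
    · exact (contDiffOn_const.sub smooth_dirx).continuousOn.isOpen_inter_preimage isOpen_ne isOpen_ne
    · exact Submodule.reflection_sub (by rw [hb, norm_dirx hx.1])
    · exact smooth_reflection ((contDiffOn_const.sub smooth_dirx).mono inter_subset_left)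
        (fun x hx => hx.2) v
  have h2 : ContDiffOn ℝ (⊤ : ℕ∞) (fun p : ℝ × E3 => FF N p.1 p.2)
      {p | p.2 ∈ {x : E3 | x ≠ 0} ∩ (fun x : E3 => bv 2 - (-(‖x‖⁻¹ • x))) ⁻¹' {x | x ≠ 0}} := by
    refine FF_smooth_aux hN ?_ (fun x hx => hx.1)
      (fun x => (Submodule.reflection (ℝ ∙ (bv 2 - (-(‖x‖⁻¹ • x))))ᗮ).trans
        (LinearIsometryEquiv.neg ℝ)) (fun x hx => ?_) (fun v => ?_)
    · exact (contDiffOn_const.sub smooth_dirx.neg).continuousOn.isOpen_inter_preimage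
        isOpen_ne isOpen_ne
    · have := Submodule.reflection_sub (v := bv 2) (w := -(‖x‖⁻¹ • x))
        (by rw [hb, norm_neg, norm_dirx hx.1])
      rw [LinearIsometryEquiv.trans_apply, this]; simp
    · exact (smooth_reflection ((contDiffOn_const.sub smooth_dirx.neg).mono inter_subset_left)
        (fun x hx => hx.2) v).neg
  intro p hp
  by_cases h : bv 2 = ‖p.2‖⁻¹ • p.2
  · have hp2 : p ∈ {p : ℝ × E3 | p.2 ∈ {x : E3 | x ≠ 0} ∩
        (fun x : E3 => bv 2 - (-(‖x‖⁻¹ • x))) ⁻¹' {x | x ≠ 0}} := by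
      refine ⟨hp, ?_⟩
      change bv 2 - (-(‖p.2‖⁻¹ • p.2)) ≠ 0
      rw [← h, sub_neg_eq_add, ← two_smul ℝ, ← norm_pos_iff, norm_smul, hb]; simp
    have ho : IsOpen {p : ℝ × E3 | p.2 ∈ {x : E3 | x ≠ 0} ∩
        (fun x : E3 => bv 2 - (-(‖x‖⁻¹ • x))) ⁻¹' {x | x ≠ 0}} :=
      ((contDiffOn_const.sub smooth_dirx.neg).continuousOn.isOpen_inter_preimage
        isOpen_ne isOpen_ne).preimage continuous_snd
    exact (smooth_at ho h2 hp2).contDiffWithinAt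
  · have hp2 : p ∈ {p : ℝ × E3 | p.2 ∈ {x : E3 | x ≠ 0} ∩
        (fun x : E3 => bv 2 - ‖x‖⁻¹ • x) ⁻¹' {x | x ≠ 0}} := ⟨hp, sub_ne_zero.2 h⟩
    have ho : IsOpen {p : ℝ × E3 | p.2 ∈ {x : E3 | x ≠ 0} ∩
        (fun x : E3 => bv 2 - ‖x‖⁻¹ • x) ⁻¹' {x | x ≠ 0}} :=
      ((contDiffOn_const.sub smooth_dirx).continuousOn.isOpen_inter_preimage
        isOpen_ne isOpen_ne).preimage continuous_snd
    exact (smooth_at ho h1 hp2).contDiffWithinAt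

theorem FF_smoothOnSphere {N : E3 → ℝ} (hN : SmoothOnSphere N) (w : ℝ) :
    SmoothOnSphere (FF N w) :=
  ⟨FF_homog N w, smooth_slice (FF_smooth hN) fun _ hx => hx⟩

theorem FF_smooth_fst {N : E3 → ℝ} (hN : SmoothOnSphere N) {x : E3} (hx : x ≠ 0) :
    ContDiff ℝ (⊤ : ℕ∞) (fun w => FF N w x) := by
  rw [← contDiffOn_univ]
  exact smooth_slice_fst (FF_smooth hN) fun s _ => hx

theorem rot_kernel_smooth {N : E3 → ℝ} (hN : SmoothOnSphere N) (k : Fin 3) (Q : E3 ≃ₗᵢ[ℝ] E3)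
    (w : ℝ) : ContDiffOn ℝ (⊤ : ℕ∞) (fun q : ℝ × ℝ => N (rot k q.1 (Q (pt w q.2)))) univ := by
  have h1 : ContDiff ℝ (⊤ : ℕ∞) (fun q : ℝ × ℝ => Q (pt w q.2)) := by
    simp only [pt, map_add, map_smul]; fun_prop
  have h2 : ContDiff ℝ (⊤ : ℕ∞) (fun q : ℝ × ℝ => rot k q.1 (Q (pt w q.2))) :=
    ContDiff.comp (g := fun p : ℝ × E3 => rot k p.1 p.2)
      (f := fun q : ℝ × ℝ => (q.1, Q (pt w q.2))) (contDiff_rot k) (contDiff_fst.prodMk h1)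
  have h3 : ∀ q : ℝ × ℝ, rot k q.1 (Q (pt w q.2)) ≠ 0 := fun q => by simpa using pt_ne _ _
  exact hN.2.comp h2.contDiffOn fun q _ => h3 q

/-- Circle means commute with the Laplace–Beltrami operator. -/
theorem lapS_FF {N : E3 → ℝ} (hN : SmoothOnSphere N) (w : ℝ) {x : E3} (hx : x ≠ 0) :
    lapS (FF N w) x = FF (lapS N) w x := by
  rw [← rot_sum_lapS (FF_smoothOnSphere hN w) hx]
  have h1 : ∀ k, deriv (deriv (fun β => FF N w (rot k β x))) 0 =
      ∫ θ in Icc 0 (2 * π), (1 : ℝ) *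
        deriv (deriv (fun β => N (rot k β (frame x (pt w θ))))) 0 := by
    intro k
    have e : (fun β => FF N w (rot k β x)) = fun β => ∫ θ in Icc 0 (2 * π), (1 : ℝ) *
        N (rot k β (frame x (pt w θ))) := funext fun β => FF_isometry N w (rot k β) hx
    rw [e]
    exact param_deriv_deriv (K := fun q : ℝ × ℝ => N (rot k q.1 (frame x (pt w q.2))))
      isCompact_Icc (integrableOn_one isCompact_Icc) isOpen_univ isOpen_univ (subset_univ _)
      (rot_kernel_smooth hN k _ w) (mem_univ _)
  have hint : ∀ k, IntegrableOn (fun θ => (1 : ℝ) *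
      deriv (deriv (fun β => N (rot k β (frame x (pt w θ))))) 0) (Icc 0 (2 * π)) volume := by
    intro k
    have hK := rot_kernel_smooth hN k (frame x) w
    have hK2 := dir_contDiffOn isOpen_univ (dir_contDiffOn isOpen_univ hK (1, 0)) (1, 0)
    have : (fun θ => deriv (deriv (fun β => N (rot k β (frame x (pt w θ))))) 0) =
        fun θ => dir (1, 0) (dir (1, 0)
          (fun q : ℝ × ℝ => N (rot k q.1 (frame x (pt w q.2))))) (0, θ) := by
      ext θ
      have e : deriv (fun β => N (rot k β (frame x (pt w θ)))) = fun s => dir (1, 0)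
          (fun q : ℝ × ℝ => N (rot k q.1 (frame x (pt w q.2)))) (s, θ) :=
        funext fun s => (dir_one_eq_deriv (a := θ) isOpen_univ hK (mem_univ (s, θ))).deriv
      rw [e]
      exact (dir_one_eq_deriv (a := θ) isOpen_univ
        (dir_contDiffOn isOpen_univ hK (1, 0)) (mem_univ (0, θ))).deriv
    simp only [one_mul]
    rw [this]
    exact ((hK2.continuousOn.comp (f := fun θ : ℝ => ((0 : ℝ), θ)) (by fun_prop)
      fun _ _ => mem_univ _)).integrableOn_compact isCompact_Icc
  simp only [h1]
  rw [← integral_finsetSum _ fun k _ => hint k, FF, circ, interval_eq_set]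
  congr 1
  ext θ
  rw [← rot_sum_lapS hN (x := frame x (pt w θ)) (by simpa using pt_ne _ _), Finset.mul_sum]

/-! ### The Darboux equation for circle means -/

/-- The Hessian of a function homogeneous of degree zero, contracted once with the position. -/
theorem hess_euler {N : E3 → ℝ} (hN : SmoothOnSphere N) {p : E3} (hp : p ≠ 0) (v : E3) :
    hess N p v p = - fderiv ℝ N p v := by
  have hd : DifferentiableAt ℝ (fderiv ℝ N) p :=
    diff_at isOpen_ne (hN.2.fderiv_of_isOpen isOpen_ne (by simp)) hp
  have h1 := hd.hasFDerivAt.clm_apply (hasFDerivAt_id p)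
  have h2 : (fun y => fderiv ℝ N y (id y)) =ᶠ[𝓝 p] fun _ => 0 := by
    filter_upwards [isOpen_ne.mem_nhds hp] with y hy using (radial_zero hN hy).1
  have h3 := h1.fderiv
  rw [h2.fderiv_eq] at h3
  have h4 := congrArg (fun L : E3 →L[ℝ] ℝ => L v) h3
  simp only [fderiv_fun_const] at h4
  simp at h4
  change fderiv ℝ (fderiv ℝ N) p v p = _
  linarith

theorem hess_symm {N : E3 → ℝ} (hN : SmoothOnSphere N) {p : E3} (hp : p ≠ 0) (u v : E3) :
    hess N p u v = hess N p v u := by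
  rw [← dir_dir_eq_hess isOpen_ne hN.2 hp, ← dir_dir_eq_hess isOpen_ne hN.2 hp]
  exact dir_comm isOpen_ne hN.2 hp u v

/-- The Laplace–Beltrami operator in stereographic polar coordinates. -/
theorem polar {N : E3 → ℝ} (hN : SmoothOnSphere N) (w θ : ℝ) :
    w ^ 2 * deriv (deriv (fun v => N (pt v θ))) w + w * deriv (fun v => N (pt v θ)) w +
      deriv (deriv (fun η => N (pt w η))) θ = 4 * w ^ 2 / (1 + w ^ 2) ^ 2 * lapS N (pt w θ) := by
  set e : E3 := cos θ • bv 0 + sin θ • bv 1 with he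
  set T : E3 := -sin θ • bv 0 + cos θ • bv 1 with hT
  set P := pt w θ with hP
  have hP' : P = (1 - w ^ 2) • bv 2 + (2 * w) • e := rfl
  set R : E3 := (-(2 * w)) • bv 2 + (1 - w ^ 2) • e with hR
  have hp : P ≠ 0 := pt_ne w θ
  have dw : ∀ v, HasDerivAt (fun v => pt v θ) ((-(2 * v)) • bv 2 + (2 : ℝ) • e) v := fun v => by
    have h1 : HasDerivAt (fun v : ℝ => 1 - v ^ 2) (-(2 * v)) v := by
      simpa using (hasDerivAt_pow 2 v).const_sub 1
    have h2 : HasDerivAt (fun v : ℝ => 2 * v) 2 v := by simpa using (hasDerivAt_id v).const_mul 2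
    exact (h1.smul_const (bv 2)).add (h2.smul_const e)
  have dw2 : HasDerivAt (fun v : ℝ => (-(2 * v)) • bv 2 + (2 : ℝ) • e) ((-2 : ℝ) • bv 2) w := by
    have h2 : HasDerivAt (fun v : ℝ => -(2 * v)) (-2) w := by
      simpa using ((hasDerivAt_id w).const_mul 2).fun_neg
    exact (h2.smul_const (bv 2)).add_const _
  have dt : ∀ η, HasDerivAt (fun η => pt w η) ((2 * w) • (-sin η • bv 0 + cos η • bv 1)) η :=
    fun η => ((((hasDerivAt_cos η).smul_const (bv 0)).add
      ((hasDerivAt_sin η).smul_const (bv 1))).const_smul (2 * w)).const_add _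
  have dt2 : HasDerivAt (fun η : ℝ => (2 * w) • (-sin η • bv 0 + cos η • bv 1))
      ((2 * w) • (-cos θ • bv 0 + -sin θ • bv 1)) θ :=
    (((hasDerivAt_sin θ).neg.smul_const (bv 0)).add
      ((hasDerivAt_cos θ).smul_const (bv 1))).const_smul (2 * w)
  have k1 := deriv_deriv_path (γ := fun v => pt v θ) (β := w)
    (γ' := fun v => (-(2 * v)) • bv 2 + (2 : ℝ) • e) isOpen_ne hN.2 hp dw dw2
  have k2 := deriv_deriv_path (γ := fun η => pt w η) (β := θ)
    (γ' := fun η => (2 * w) • (-sin η • bv 0 + cos η • bv 1)) isOpen_ne hN.2 hp dt dt2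
  have k3 : deriv (fun v => N (pt v θ)) w = fderiv ℝ N P ((-(2 * w)) • bv 2 + (2 : ℝ) • e) :=
    ((diff_at isOpen_ne hN.2 hp).hasFDerivAt.comp_hasDerivAt w (dw w)).deriv
  have ht : (1 + w ^ 2) ^ 2 * ∑ i, hess N P (bv i) (bv i) =
      hess N P P P + hess N P R R + (1 + w ^ 2) ^ 2 * hess N P T T := by
    generalize hess N P = B
    rw [hP', hR, hT, he]
    simp only [Fin.sum_univ_three, map_add, map_smul, add_apply,
      smul_apply, smul_eq_mul]
    linear_combination (-(1 + w ^ 2) ^ 2 * (B (bv 0) (bv 0) + B (bv 1) (bv 1))) *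
      sin_sq_add_cos_sq θ
  rw [k1, k2, k3, lapS, lap3_eq_hess isOpen_ne hN.2 hp, hP, norm_pt, ht]
  have r0 := radial_zero hN hp
  have r1 := hess_euler hN hp R
  have r2 := hess_symm hN hp P R
  have v1 : (-(2 * w)) • bv 2 + (2 : ℝ) • e = (1 + w ^ 2)⁻¹ • ((2 * w) • P + (2 : ℝ) • R) := by
    rw [hP', hR]; match_scalars <;> field_simp <;> ring
  have v2 : bv 2 = ((1 + w ^ 2) ^ 2)⁻¹ • ((1 - w ^ 2) • P - (2 * w) • R) := by
    rw [hP', hR]; match_scalars <;> field_simp <;> ring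
  have v3 : -cos θ • bv 0 + -sin θ • bv 1 =
      -((1 + w ^ 2) ^ 2)⁻¹ • ((2 * w) • P + (1 - w ^ 2) • R) := by
    have : -cos θ • bv 0 + -sin θ • bv 1 = -e := by rw [he]; module
    rw [this, hP', hR]; match_scalars <;> field_simp <;> ring
  rw [v1, v2, v3]
  change _ * (hess N P _ _ + fderiv ℝ N P _) + _ + (hess N P _ _ + fderiv ℝ N P _) = _
  rw [← hT]
  simp only [← hP]
  simp only [map_add, map_sub, map_smul, add_apply, smul_apply, smul_eq_mul, r0.1, r0.2, r1, r2]
  field_simp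
  ring

theorem deriv_deriv_eq_dir {K : ℝ × ℝ → ℝ} (hK : ContDiffOn ℝ (⊤ : ℕ∞) K univ) (s a : ℝ) :
    deriv (deriv (fun s => K (s, a))) s = dir (1, 0) (dir (1, 0) K) (s, a) := by
  have e : deriv (fun s => K (s, a)) = fun s => dir (1, 0) K (s, a) :=
    funext fun s => (dir_one_eq_deriv isOpen_univ hK (mem_univ (s, a))).deriv
  rw [e]
  exact (dir_one_eq_deriv isOpen_univ (dir_contDiffOn isOpen_univ hK (1, 0))
    (mem_univ (s, a))).deriv

theorem pt_kernel_smooth {N : E3 → ℝ} (hN : SmoothOnSphere N) :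
    ContDiff ℝ (⊤ : ℕ∞) (fun q : ℝ × ℝ => N (pt q.1 q.2)) := by
  rw [← contDiffOn_univ]
  have h1 : ContDiff ℝ (⊤ : ℕ∞) (fun q : ℝ × ℝ => pt q.1 q.2) := by
    simp only [pt]; fun_prop
  exact hN.2.comp h1.contDiffOn fun q _ => pt_ne _ _

/-- The Darboux equation for circle means: with `D = w d/dw`, one has
`D² F_N = 4w²/(1+w²)² F_{ΔN}`. -/
theorem FF_ode {N : E3 → ℝ} (hN : SmoothOnSphere N) {x : E3} (hx : x ≠ 0) (w : ℝ) :
    w ^ 2 * deriv (deriv (fun v => FF N v x)) w + w * deriv (fun v => FF N v x) w =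
      4 * w ^ 2 / (1 + w ^ 2) ^ 2 * FF (lapS N) w x := by
  set M : E3 → ℝ := fun y => N (frame x y) with hM
  have hMs : SmoothOnSphere M := smooth_comp_isometry hN (frame x)
  have hK := (pt_kernel_smooth hMs).contDiffOn (s := univ)
  have e : (fun v => FF N v x) = fun v => ∫ θ in Icc 0 (2 * π), (1 : ℝ) * M (pt v θ) :=
    funext fun v => by rw [FF, circ, interval_eq_set]
  have d1 := (param_hasDerivAt (K := fun q : ℝ × ℝ => M (pt q.1 q.2)) (μ := volume)
    isCompact_Icc (integrableOn_one (S := Icc 0 (2 * π)) isCompact_Icc) isOpen_univ isOpen_univ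
    (subset_univ _) hK (mem_univ w)).deriv
  have d2 := param_deriv_deriv (K := fun q : ℝ × ℝ => M (pt q.1 q.2)) (μ := volume)
    isCompact_Icc (integrableOn_one (S := Icc 0 (2 * π)) isCompact_Icc) isOpen_univ isOpen_univ
    (subset_univ _) hK (mem_univ w)
  have c1 : Continuous fun θ => dir (1, 0) (fun q : ℝ × ℝ => M (pt q.1 q.2)) (w, θ) :=
    (contDiffOn_univ.1 (dir_contDiffOn isOpen_univ hK (1, 0))).continuous.comp
      (by fun_prop : Continuous fun θ : ℝ => (w, θ))
  have c2 : Continuous fun θ => dir (1, 0) (dir (1, 0) (fun q : ℝ × ℝ => M (pt q.1 q.2))) (w, θ) :=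
    (contDiffOn_univ.1 (dir_contDiffOn isOpen_univ
      (dir_contDiffOn isOpen_univ hK (1, 0)) (1, 0))).continuous.comp
      (by fun_prop : Continuous fun θ : ℝ => (w, θ))
  have sθ : ContDiff ℝ (⊤ : ℕ∞) fun θ => M (pt w θ) :=
    (pt_kernel_smooth hMs).comp (f := fun θ : ℝ => (w, θ)) (by fun_prop)
  have s1 := (contDiff_infty_iff_deriv.1 sθ)
  have s2 := (contDiff_infty_iff_deriv.1 s1.2)
  have i3 : ∫ θ in (0)..(2 * π), deriv (deriv (fun η => M (pt w η))) θ = 0 := by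
    rw [intervalIntegral.integral_deriv_eq_sub (fun θ _ => s2.1 θ)
      (s2.2.continuous.intervalIntegrable _ _)]
    have hp : Function.Periodic (fun η => M (pt w η)) (2 * π) := fun η => by simp [pt]
    have hp' : ∀ θ, deriv (fun η => M (pt w η)) (θ + 2 * π) = deriv (fun η => M (pt w η)) θ := by
      intro θ
      rw [← deriv_comp_add_const]
      congr 1
      exact funext hp
    rw [sub_eq_zero, ← hp' 0, zero_add]
  rw [e, d1, d2]
  have e2 : FF (lapS N) w x = ∫ θ in (0)..(2 * π), lapS M (pt w θ) := by
    rw [FF, circ]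
    congr 1; ext θ
    rw [lapS_comp_isometry hN (frame x) (pt_ne w θ)]
  simp only [deriv_deriv_eq_dir hK]
  rw [← interval_eq_set, ← interval_eq_set, e2, ← intervalIntegral.integral_const_mul,
    ← intervalIntegral.integral_const_mul, ← intervalIntegral.integral_const_mul]
  refine (((congrArg (_ + ·) i3).trans (add_zero _)).symm).trans ?_
  rw [← intervalIntegral.integral_add, ← intervalIntegral.integral_add]
  · congr 1; ext θ
    rw [← polar hMs, deriv_deriv_eq_dir hK w θ,
      (dir_one_eq_deriv isOpen_univ hK (mem_univ (w, θ))).deriv]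
  · exact ((c2.const_mul _).add (c1.const_mul _)).intervalIntegrable _ _
  · exact s2.2.continuous.intervalIntegrable _ _
  · exact (c2.const_mul _).intervalIntegrable _ _
  · exact (c1.const_mul _).intervalIntegrable _ _

/-! ### The one-dimensional profile -/

/-- The weight `log (1 - τ²)`. -/
def lw (τ : ℝ) : ℝ := log (1 - τ ^ 2)

theorem lw_integrable : IntegrableOn lw (Icc 0 1) volume := by
  rw [integrableOn_Icc_iff_integrableOn_Ioc, ← intervalIntegrable_iff_integrableOn_Ioc_of_le
    zero_le_one]
  have h1 : IntervalIntegrable (fun x : ℝ => log (1 - x)) volume 0 1 := by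
    have := (intervalIntegral.intervalIntegrable_log' (a := 0) (b := 1)).comp_sub_left 1
    simpa using this.symm
  have h2 : IntervalIntegrable (fun x : ℝ => log (1 + x)) volume 0 1 := by
    have := (intervalIntegral.intervalIntegrable_log' (a := 1) (b := 2)).comp_add_left 1
    norm_num at this
    exact this
  refine (h1.add h2).congr_uIoo ?_
  intro x hx
  rw [uIoo_of_le zero_le_one] at hx
  have : (1 : ℝ) - x ^ 2 = (1 - x) * (1 + x) := by ring
  simp only [lw, this, log_mul (by linarith [hx.2] : (1 : ℝ) - x ≠ 0)
    (by linarith [hx.1] : (1 : ℝ) + x ≠ 0)]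

/-- The scaled integral `∫₀¹ ℓ(τ) w h(τ w) dτ`; for `ℓ = 1` it is the primitive of `h`. -/
def mell (ℓ h : ℝ → ℝ) (w : ℝ) : ℝ := ∫ τ in Icc 0 1, ℓ τ * (w * h (τ * w))

theorem icc_eq_interval (f : ℝ → ℝ) : ∫ τ in Icc 0 1, f τ = ∫ τ in (0)..1, f τ := by
  rw [integral_Icc_eq_integral_Ioc, intervalIntegral.integral_of_le zero_le_one]

theorem mell_one (h : ℝ → ℝ) (w : ℝ) : mell (fun _ => 1) h w = ∫ v in (0)..w, h v := by
  have := intervalIntegral.mul_integral_comp_mul_right (a := 0) (b := 1) (f := h) w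
  rw [zero_mul, one_mul] at this
  rw [mell, icc_eq_interval, ← this, ← intervalIntegral.integral_const_mul]
  simp

theorem mell_one_hasDerivAt {h : ℝ → ℝ} (hh : Continuous h) (w : ℝ) :
    HasDerivAt (mell (fun _ => 1) h) (h w) w := by
  rw [show mell (fun _ => 1) h = fun w => ∫ v in (0)..w, h v from funext (mell_one h)]
  exact intervalIntegral.integral_hasDerivAt_right (hh.intervalIntegrable _ _)
    (hh.stronglyMeasurableAtFilter _ _) hh.continuousAt

/-- The area density `4v/(1+v²)²` of stereographic circles. -/
def av (v : ℝ) : ℝ := 4 * v / (1 + v ^ 2) ^ 2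

theorem av_smooth : ContDiff ℝ (⊤ : ℕ∞) av := by
  unfold av
  exact ContDiff.div (by fun_prop) (by fun_prop) fun x => by positivity

theorem av_hasDerivAt (v : ℝ) : HasDerivAt av (4 * (1 - 3 * v ^ 2) / (1 + v ^ 2) ^ 3) v := by
  have h1 : HasDerivAt (fun v : ℝ => 4 * v) 4 v := by simpa using (hasDerivAt_id v).const_mul 4
  have h2 : HasDerivAt (fun v : ℝ => (1 + v ^ 2) ^ 2) (2 * (1 + v ^ 2) * (2 * v)) v := by
    simpa using ((hasDerivAt_pow 2 v).const_add 1).fun_pow 2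
  have := h1.fun_div h2 (by positivity)
  unfold av
  refine HasDerivAt.congr_deriv (this) ?_
  field_simp
  ring

/-- The operator `y ↦ w d/dw (a(w)⁻¹ dy/dw)` with `a = av`, in terms of the first two derivatives
of `y`; this is `(1 - s²) d²/ds²` under `s = (1-w²)/(1+w²)`. -/
def opT (w y1 y2 : ℝ) : ℝ :=
  (1 + w ^ 2) ^ 2 / 4 * y2 + (1 + w ^ 2) * (3 * w ^ 2 - 1) / (4 * w) * y1

theorem integral_lin4 {a b c d : ℝ → ℝ} {S : Set ℝ} (x y : ℝ) (ha : IntegrableOn a S volume)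
    (hb : IntegrableOn b S volume) (hc : IntegrableOn c S volume) (hd : IntegrableOn d S volume) :
    ∫ τ in S, (x * a τ + y * b τ - c τ - d τ) =
      x * (∫ τ in S, a τ) + y * (∫ τ in S, b τ) - (∫ τ in S, c τ) - ∫ τ in S, d τ := by
  have h1 : Integrable (fun τ => x * a τ) (volume.restrict S) := ha.const_mul x
  have h2 : Integrable (fun τ => y * b τ) (volume.restrict S) := hb.const_mul y
  have h3 : Integrable (fun τ => x * a τ + y * b τ) (volume.restrict S) := h1.add h2
  have h4 : Integrable (fun τ => x * a τ + y * b τ - c τ) (volume.restrict S) := h3.sub hc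
  rw [integral_sub h4 hd, integral_sub h3 hc, integral_add h1 h2, integral_const_mul,
    integral_const_mul]

/-- Action of the operator on the term with kernel `log (1 - τ²)`. The commutator of the operator
with scaling is an exact `τ`-derivative, so one integration by parts removes the logarithm. -/
theorem J_ode {f1 f2 : ℝ → ℝ} (h1 : ContDiff ℝ (⊤ : ℕ∞) f1) (h2 : ContDiff ℝ (⊤ : ℕ∞) f2)
    (hf : ∀ v, 0 < v → av v * f2 v = v * deriv (deriv f1) v + deriv f1 v) {w : ℝ} (hw : 0 < w) :
    opT w (deriv (mell lw fun v => av v * f1 v) w) (deriv (deriv (mell lw fun v => av v * f1 v)) w)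
      = mell lw (fun v => av v * f2 v) w + 2 * (w ^ 4 - 1) * (f1 w / (1 + w ^ 2) ^ 2)
        + (w ^ 2)⁻¹ * mell (fun _ => 1) (fun v => av v * f1 v) w := by
  set B : ℝ → ℝ := fun v => f1 v / (1 + v ^ 2) ^ 2 with hB
  have Bs : ContDiff ℝ (⊤ : ℕ∞) B := h1.div (by fun_prop) fun x => by positivity
  have B1 := contDiff_infty_iff_deriv.1 Bs
  have B2 := contDiff_infty_iff_deriv.1 B1.2
  have b0 : ∀ v, HasDerivAt B (deriv B v) v := fun v => (B1.1 v).hasDerivAt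
  have b1 : ∀ v, HasDerivAt (deriv B) (deriv (deriv B) v) v := fun v => (B2.1 v).hasDerivAt
  have c0 := Bs.continuous
  have c1 := B1.2.continuous
  have c2 := B2.2.continuous
  have aB : ∀ v, av v * f1 v = 4 * v * B v := fun v => by
    simp only [av, hB]; field_simp
  have e1 : f1 = fun v => (1 + v ^ 2) ^ 2 * B v := by
    ext v; simp only [hB]; field_simp
  have hq : ∀ v : ℝ, HasDerivAt (fun v : ℝ => (1 + v ^ 2) ^ 2) (2 * (1 + v ^ 2) * (2 * v)) v :=
    fun v => by simpa using ((hasDerivAt_pow 2 v).const_add 1).fun_pow 2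
  have df1 : deriv f1 = fun v => 2 * (1 + v ^ 2) * (2 * v) * B v + (1 + v ^ 2) ^ 2 * deriv B v := by
    ext v; rw [e1]; exact ((hq v).fun_mul (b0 v)).deriv
  have ddf1 : ∀ v, deriv (deriv f1) v = (4 + 12 * v ^ 2) * B v
      + 2 * (2 * (1 + v ^ 2) * (2 * v)) * deriv B v + (1 + v ^ 2) ^ 2 * deriv (deriv B) v := by
    intro v
    rw [df1]
    have hr : HasDerivAt (fun v : ℝ => 2 * (1 + v ^ 2) * (2 * v)) (4 + 12 * v ^ 2) v := by
      have := (((hasDerivAt_pow 2 v).const_add 1).const_mul 2).fun_mul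
        ((hasDerivAt_id v).const_mul 2)
      refine HasDerivAt.congr_deriv (this) ?_
      simp; ring
    rw [((hr.fun_mul (b0 v)).fun_add ((hq v).fun_mul (b1 v))).deriv]
    ring
  -- derivatives of the kernel
  set K : ℝ × ℝ → ℝ := fun q => q.1 * (4 * (q.2 * q.1) * B (q.2 * q.1)) with hK
  have Ks : ContDiffOn ℝ (⊤ : ℕ∞) K univ := by
    have : ContDiff ℝ (⊤ : ℕ∞) fun q : ℝ × ℝ => B (q.2 * q.1) :=
      Bs.comp (by fun_prop)
    exact ContDiff.contDiffOn (by fun_prop)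
  have eJ : (mell lw fun v => av v * f1 v) = fun w => ∫ τ in Icc 0 1, lw τ * K (w, τ) := by
    ext w; simp only [mell, aB, hK]
  have bc : ∀ τ w, HasDerivAt (fun w => B (τ * w)) (τ * deriv B (τ * w)) w := fun τ w => by
    have := (b0 (τ * w)).comp w ((hasDerivAt_id w).const_mul τ)
    refine HasDerivAt.congr_deriv (this) ?_; simp [mul_comm]
  have bc1 : ∀ τ w, HasDerivAt (fun w => deriv B (τ * w)) (τ * deriv (deriv B) (τ * w)) w :=
    fun τ w => by
      have := (b1 (τ * w)).comp w ((hasDerivAt_id w).const_mul τ)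
      refine HasDerivAt.congr_deriv (this) ?_; simp [mul_comm]
  have dK : ∀ τ, deriv (fun w => K (w, τ)) = fun w => 8 * τ * w * B (τ * w)
      + 4 * τ ^ 2 * w ^ 2 * deriv B (τ * w) := fun τ => by
    ext w
    have h : HasDerivAt (fun w : ℝ => 4 * τ * w ^ 2) (8 * τ * w) w := by
      refine HasDerivAt.congr_deriv ((hasDerivAt_pow 2 w).const_mul (4 * τ)) ?_; simp; ring
    have := (h.fun_mul (bc τ w)).deriv
    have e : (fun w => K (w, τ)) = fun w => 4 * τ * w ^ 2 * B (τ * w) := by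
      ext w; simp only [hK]; ring
    rw [e, this]; ring
  have ddK : ∀ τ, deriv (deriv (fun w => K (w, τ))) w = 8 * τ * B (τ * w)
      + 16 * τ ^ 2 * w * deriv B (τ * w) + 4 * τ ^ 3 * w ^ 2 * deriv (deriv B) (τ * w) := fun τ => by
    rw [dK]
    have h : HasDerivAt (fun w : ℝ => 8 * τ * w) (8 * τ) w := by
      simpa using (hasDerivAt_id w).const_mul (8 * τ)
    have h' : HasDerivAt (fun w : ℝ => 4 * τ ^ 2 * w ^ 2) (8 * τ ^ 2 * w) w := by
      refine HasDerivAt.congr_deriv ((hasDerivAt_pow 2 w).const_mul (4 * τ ^ 2)) ?_; simp; ring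
    rw [((h.fun_mul (bc τ w)).fun_add (h'.fun_mul (bc1 τ w))).deriv]
    ring
  have d1 := (param_hasDerivAt (K := K) (μ := volume) isCompact_Icc lw_integrable isOpen_univ
    isOpen_univ (subset_univ _) Ks (mem_univ w)).deriv
  have d2 := param_deriv_deriv (K := K) (μ := volume) isCompact_Icc lw_integrable isOpen_univ
    isOpen_univ (subset_univ _) Ks (mem_univ w)
  have dd : ∀ τ, dir (1, 0) K (w, τ) = 8 * τ * w * B (τ * w)
      + 4 * τ ^ 2 * w ^ 2 * deriv B (τ * w) := fun τ => by
    rw [← (dir_one_eq_deriv isOpen_univ Ks (mem_univ (w, τ))).deriv, dK]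
  simp only [ddK] at d2
  simp only [dd] at d1
  have i : ∀ {k : ℝ → ℝ}, Continuous k → IntegrableOn (fun τ => lw τ * k τ) (Icc 0 1) volume :=
    fun hk => integrableOn_weight isCompact_Icc lw_integrable hk.continuousOn
  have i1 := i (k := fun τ => 8 * τ * w * B (τ * w)
      + 4 * τ ^ 2 * w ^ 2 * deriv B (τ * w)) (by fun_prop)
  have i2 := i (k := fun τ => 8 * τ * B (τ * w)
      + 16 * τ ^ 2 * w * deriv B (τ * w) + 4 * τ ^ 3 * w ^ 2 * deriv (deriv B) (τ * w))
      (by fun_prop)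
  have c3 : Continuous f2 := h2.continuous
  have c4 : Continuous av := av_smooth.continuous
  have i3 := i (k := fun τ => w * (av (τ * w) * f2 (τ * w))) (by fun_prop)
  -- the primitive in `τ`
  set Z : ℝ → ℝ := fun τ => 4 * τ ^ 2 * w ^ 4 * B (τ * w)
    + (τ ^ 2 * w ^ 4 - 1) * (τ * w) * deriv B (τ * w) with hZ
  set Z' : ℝ → ℝ := fun τ => 8 * τ * w ^ 4 * B (τ * w) + 4 * τ ^ 2 * w ^ 5 * deriv B (τ * w)
    + (3 * τ ^ 2 * w ^ 4 - 1) * w * deriv B (τ * w)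
    + (τ ^ 2 * w ^ 4 - 1) * τ * w ^ 2 * deriv (deriv B) (τ * w) with hZ'
  have bt : ∀ τ, HasDerivAt (fun τ => B (τ * w)) (w * deriv B (τ * w)) τ := fun τ => by
    have := (b0 (τ * w)).comp τ ((hasDerivAt_id τ).mul_const w)
    refine HasDerivAt.congr_deriv (this) ?_; simp [mul_comm]
  have bt1 : ∀ τ, HasDerivAt (fun τ => deriv B (τ * w)) (w * deriv (deriv B) (τ * w)) τ :=
    fun τ => by
      have := (b1 (τ * w)).comp τ ((hasDerivAt_id τ).mul_const w)
      refine HasDerivAt.congr_deriv (this) ?_; simp [mul_comm]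
  have dZ : ∀ τ, HasDerivAt Z (Z' τ) τ := fun τ => by
    have p1 : HasDerivAt (fun τ : ℝ => 4 * τ ^ 2 * w ^ 4) (8 * τ * w ^ 4) τ := by
      refine HasDerivAt.congr_deriv (((hasDerivAt_pow 2 τ).const_mul 4).mul_const (w ^ 4)) ?_
      simp; left; ring
    have p2 : HasDerivAt (fun τ : ℝ => (τ ^ 2 * w ^ 4 - 1) * (τ * w))
        ((3 * τ ^ 2 * w ^ 4 - 1) * w) τ := by
      refine HasDerivAt.congr_deriv ((((hasDerivAt_pow 2 τ).mul_const (w ^ 4)).sub_const 1).fun_mul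
        ((hasDerivAt_id τ).mul_const w)) ?_
      simp; ring
    refine HasDerivAt.congr_deriv ((p1.fun_mul (bt τ)).fun_add (p2.fun_mul (bt1 τ))) ?_
    simp only [hZ']; ring
  set Y : ℝ → ℝ := fun τ => (1 - τ ^ 2) * log (1 - τ ^ 2) * Z τ
    + 2 * τ ^ 2 * (τ ^ 2 * w ^ 4 - 1) * B (τ * w) with hY
  have key : ∀ τ ∈ Ioo (0 : ℝ) 1, HasDerivAt Y
      ((1 + w ^ 2) ^ 2 / 4 * (lw τ * (8 * τ * B (τ * w)
      + 16 * τ ^ 2 * w * deriv B (τ * w) + 4 * τ ^ 3 * w ^ 2 * deriv (deriv B) (τ * w)))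
      + (1 + w ^ 2) * (3 * w ^ 2 - 1) / (4 * w) * (lw τ * (8 * τ * w * B (τ * w)
      + 4 * τ ^ 2 * w ^ 2 * deriv B (τ * w))) - lw τ * (w * (av (τ * w) * f2 (τ * w)))
      - 4 * τ * B (τ * w)) τ := by
    intro τ hτ
    have hp : (0 : ℝ) < 1 - τ ^ 2 := by nlinarith [hτ.1, hτ.2]
    have q1 : HasDerivAt (fun τ : ℝ => 1 - τ ^ 2) (-(2 * τ)) τ := by
      simpa using (hasDerivAt_pow 2 τ).const_sub 1
    have q2 : HasDerivAt (fun τ : ℝ => 2 * τ ^ 2 * (τ ^ 2 * w ^ 4 - 1))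
        (8 * τ ^ 3 * w ^ 4 - 4 * τ) τ := by
      refine HasDerivAt.congr_deriv (((hasDerivAt_pow 2 τ).const_mul 2).fun_mul
        (((hasDerivAt_pow 2 τ).mul_const (w ^ 4)).sub_const 1)) ?_
      simp; ring
    have q3 := ((q1.fun_mul (q1.log hp.ne')).fun_mul (dZ τ)).fun_add (q2.fun_mul (bt τ))
    refine HasDerivAt.congr_deriv (q3) ?_
    rw [hf (τ * w) (mul_pos hτ.1 hw), ddf1, df1]
    simp only [hZ, hZ', lw]
    field_simp
    ring
  have hcY : ContinuousOn Y (Icc 0 1) := by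
    have : Continuous fun τ : ℝ => (1 - τ ^ 2) * log (1 - τ ^ 2) :=
      continuous_mul_log.comp (by fun_prop)
    simp only [hY, hZ]
    exact Continuous.continuousOn (by fun_prop)
  have i4 : IntegrableOn (fun τ => 4 * τ * B (τ * w)) (Icc 0 1) volume :=
    (by fun_prop : Continuous fun τ => 4 * τ * B (τ * w)).continuousOn.integrableOn_compact
      isCompact_Icc
  have iA := (i2.const_mul ((1 + w ^ 2) ^ 2 / 4)).add
    (i1.const_mul ((1 + w ^ 2) * (3 * w ^ 2 - 1) / (4 * w)))
  have ftc := intervalIntegral.integral_eq_sub_of_hasDerivAt_of_le zero_le_one hcY key (by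
    rw [intervalIntegrable_iff_integrableOn_Icc_of_le zero_le_one]
    exact (iA.sub i3).sub i4)
  rw [← icc_eq_interval] at ftc
  replace ftc := (integral_lin4 _ _ i2 i1 i3 i4).symm.trans ftc
  have hm : ∫ τ in Icc 0 1, 4 * τ * B (τ * w) =
      (w ^ 2)⁻¹ * mell (fun _ => 1) (fun v => av v * f1 v) w := by
    rw [mell, ← integral_const_mul]
    congr 1; ext τ
    rw [aB]; field_simp
  rw [hm] at ftc
  rw [opT, eJ, d1, d2, mell]
  simp only [hY] at ftc
  norm_num at ftc
  simp only [hB] at ftc ⊢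
  linarith

theorem deriv_facts {f : ℝ → ℝ} (hf : ContDiff ℝ (⊤ : ℕ∞) f) :
    (∀ v, HasDerivAt f (deriv f v) v) ∧ (∀ v, HasDerivAt (deriv f) (deriv (deriv f) v) v) ∧
      Continuous f ∧ Continuous (deriv f) ∧ Continuous (deriv (deriv f)) := by
  have h1 := contDiff_infty_iff_deriv.1 hf
  have h2 := contDiff_infty_iff_deriv.1 h1.2
  exact ⟨fun v => (h1.1 v).hasDerivAt, fun v => (h2.1 v).hasDerivAt, hf.continuous,
    h1.2.continuous, h2.2.continuous⟩

/-- The Darboux equation integrated once: `(v f1')' = av f2` gives `∫₀ʷ av f2 = w f1'(w)`. -/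
theorem mell_eq {f1 f2 : ℝ → ℝ} (h1 : ContDiff ℝ (⊤ : ℕ∞) f1) (h2 : ContDiff ℝ (⊤ : ℕ∞) f2)
    (hf : ∀ v, 0 < v → av v * f2 v = v * deriv (deriv f1) v + deriv f1 v) {w : ℝ} (hw : 0 < w) :
    mell (fun _ => 1) (fun v => av v * f2 v) w = w * deriv f1 w := by
  obtain ⟨d0, d1, c0, c1, c2⟩ := deriv_facts h1
  have c4 := av_smooth.continuous
  have c5 := h2.continuous
  rw [mell_one, intervalIntegral.integral_eq_sub_of_hasDerivAt_of_le
    (f := fun v => v * deriv f1 v) hw.le (by fun_prop) (fun v hv => ?_)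
    ((by fun_prop : Continuous fun v => av v * f2 v).intervalIntegrable _ _)]
  · simp
  · rw [hf v hv.1]
    refine ((hasDerivAt_id v).fun_mul (d1 v)).congr_deriv ?_
    simp; ring

theorem log_hasDerivAt (v : ℝ) : HasDerivAt (fun v : ℝ => log (1 + v ^ 2)) (2 * v / (1 + v ^ 2)) v := by
  have : HasDerivAt (fun v : ℝ => 1 + v ^ 2) (2 * v) v := by
    simpa using (hasDerivAt_pow 2 v).const_add 1
  exact this.log (by positivity)

theorem log_cont : Continuous fun v : ℝ => log (1 + v ^ 2) :=
  continuous_iff_continuousAt.2 fun v => (log_hasDerivAt v).continuousAt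

/-- The Darboux equation `(v f1')' = av f2` integrated against `log (1 + v²)`, by two integrations by
parts. -/
theorem mell_log_eq {f1 f2 : ℝ → ℝ} (h1 : ContDiff ℝ (⊤ : ℕ∞) f1) (h2 : ContDiff ℝ (⊤ : ℕ∞) f2)
    (hf : ∀ v, 0 < v → av v * f2 v = v * deriv (deriv f1) v + deriv f1 v) {w : ℝ} (hw : 0 < w) :
    mell (fun _ => 1) (fun v => av v * f2 v * log (1 + v ^ 2)) w =
      w * deriv f1 w * log (1 + w ^ 2) - 2 * w ^ 2 / (1 + w ^ 2) * f1 w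
        + mell (fun _ => 1) (fun v => av v * f1 v) w := by
  obtain ⟨d0, d1, c0, c1, c2⟩ := deriv_facts h1
  have c4 := av_smooth.continuous
  have c5 := h2.continuous
  have c6 := log_cont
  have c7 : Continuous fun v : ℝ => 2 * v ^ 2 / (1 + v ^ 2) :=
    Continuous.div (by fun_prop) (by fun_prop) fun v => by positivity
  have i1 : IntervalIntegrable (fun v => av v * f2 v * log (1 + v ^ 2)) volume 0 w :=
    (by fun_prop : Continuous fun v => av v * f2 v * log (1 + v ^ 2)).intervalIntegrable _ _
  have i2 : IntervalIntegrable (fun v => av v * f1 v) volume 0 w :=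
    (by fun_prop : Continuous fun v => av v * f1 v).intervalIntegrable _ _
  have := intervalIntegral.integral_eq_sub_of_hasDerivAt_of_le
    (f := fun v => v * deriv f1 v * log (1 + v ^ 2) - 2 * v ^ 2 / (1 + v ^ 2) * f1 v)
    (f' := fun v => av v * f2 v * log (1 + v ^ 2) - av v * f1 v) hw.le
    (Continuous.continuousOn (by fun_prop)) (fun v hv => ?_) (i1.sub i2)
  · rw [intervalIntegral.integral_sub i1 i2] at this
    rw [mell_one, mell_one]
    simp at this
    linarith
  · have e1 : HasDerivAt (fun v : ℝ => 2 * v ^ 2) (4 * v) v := by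
      refine ((hasDerivAt_pow 2 v).const_mul 2).congr_deriv ?_
      simp; ring
    have e2 : HasDerivAt (fun v : ℝ => 1 + v ^ 2) (2 * v) v := by
      simpa using (hasDerivAt_pow 2 v).const_add 1
    have e3 := e1.fun_div e2 (by positivity)
    refine ((((hasDerivAt_id v).fun_mul (d1 v)).fun_mul (log_hasDerivAt v)).fun_sub
      (e3.fun_mul (d0 v))).congr_deriv ?_
    rw [hf v hv.1, av]
    simp
    field_simp
    ring

/-- The operator sends the primitive of `av f1` to that of `av f2`; this is the part of the solution
carrying the free data. -/
theorem U_ode {f1 f2 : ℝ → ℝ} (h1 : ContDiff ℝ (⊤ : ℕ∞) f1) (h2 : ContDiff ℝ (⊤ : ℕ∞) f2)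
    (hf : ∀ v, 0 < v → av v * f2 v = v * deriv (deriv f1) v + deriv f1 v) {w : ℝ} (hw : 0 < w) :
    opT w (deriv (mell (fun _ => 1) fun v => av v * f1 v) w)
      (deriv (deriv (mell (fun _ => 1) fun v => av v * f1 v)) w)
      = mell (fun _ => 1) (fun v => av v * f2 v) w := by
  obtain ⟨d0, d1, c0, c1, c2⟩ := deriv_facts h1
  have c4 := av_smooth.continuous
  have e : deriv (mell (fun _ => 1) fun v => av v * f1 v) = fun v => av v * f1 v :=
    funext fun v => (mell_one_hasDerivAt (by fun_prop) v).deriv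
  rw [e, ((av_hasDerivAt w).fun_mul (d0 w)).deriv, mell_eq h1 h2 hf hw]
  simp only [opT, av]
  field_simp
  ring

/-- The one-dimensional profile, in the stereographic variable `w`, of the solution with leading
radiation field `f0`, where `f1` stands for the Laplacian of `f0`. The terms with `log w`, `lw` and
`log (1 + v²)` together form the logarithmic kernel required by the Laplacian term. -/
def GG (f0 f1 : ℝ → ℝ) (w : ℝ) : ℝ :=
  mell (fun _ => 1) (fun v => av v * f0 v) w + (1 + 2 * log w) *
    mell (fun _ => 1) (fun v => av v * f1 v) w + 2 * mell lw (fun v => av v * f1 v) w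
    - 2 * mell (fun _ => 1) (fun v => av v * f1 v * log (1 + v ^ 2)) w
    + 2 * ((1 - w ^ 2) / (1 + w ^ 2)) * f0 w

theorem mell_lw_smooth {h : ℝ → ℝ} (hh : ContDiff ℝ (⊤ : ℕ∞) h) :
    ContDiff ℝ (⊤ : ℕ∞) (mell lw h) := by
  rw [← contDiffOn_univ]
  have : ContDiff ℝ (⊤ : ℕ∞) fun q : ℝ × ℝ => q.1 * h (q.2 * q.1) :=
    contDiff_fst.mul (hh.comp (by fun_prop))
  exact param_contDiffOn (K := fun q : ℝ × ℝ => q.1 * h (q.2 * q.1)) (μ := volume)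
    isCompact_Icc lw_integrable isOpen_univ isOpen_univ (subset_univ _) this.contDiffOn

/-- If `f0, f1, f2` are successive Laplacians, in the sense of the Darboux equation, then the operator
sends the profile of `(f0, f1)` to the profile of `(f1, f2)`. -/
theorem G_ode {f0 f1 f2 : ℝ → ℝ} (h0 : ContDiff ℝ (⊤ : ℕ∞) f0) (h1 : ContDiff ℝ (⊤ : ℕ∞) f1)
    (h2 : ContDiff ℝ (⊤ : ℕ∞) f2)
    (hf : ∀ v, 0 < v → av v * f1 v = v * deriv (deriv f0) v + deriv f0 v)
    (hf' : ∀ v, 0 < v → av v * f2 v = v * deriv (deriv f1) v + deriv f1 v) {w : ℝ} (hw : 0 < w) :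
    opT w (deriv (GG f0 f1) w) (deriv (deriv (GG f0 f1)) w) = GG f1 f2 w := by
  obtain ⟨d0, d0', c0, c0', -⟩ := deriv_facts h0
  obtain ⟨d1, d1', c1, c1', -⟩ := deriv_facts h1
  obtain ⟨dJ, dJ', -, -, -⟩ := deriv_facts (mell_lw_smooth (av_smooth.mul h1))
  have J := J_ode h1 h2 hf' hw
  rw [mell_eq h0 h1 hf hw] at J
  set j := mell lw fun v => av v * f1 v with hj
  have c4 := av_smooth.continuous
  have c6 := log_cont
  have es : ∀ v : ℝ, HasDerivAt (fun v : ℝ => (1 - v ^ 2) / (1 + v ^ 2)) (-av v) v := fun v => by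
    have e1 : HasDerivAt (fun v : ℝ => 1 - v ^ 2) (-(2 * v)) v := by
      simpa using (hasDerivAt_pow 2 v).const_sub 1
    have e2 : HasDerivAt (fun v : ℝ => 1 + v ^ 2) (2 * v) v := by
      simpa using (hasDerivAt_pow 2 v).const_add 1
    refine (e1.fun_div e2 (by positivity)).congr_deriv ?_
    rw [av]; field_simp; ring
  have p0 : ∀ v, HasDerivAt (mell (fun _ => 1) fun v => av v * f0 v) (av v * f0 v) v :=
    mell_one_hasDerivAt (by fun_prop)
  have p1 : ∀ v, HasDerivAt (mell (fun _ => 1) fun v => av v * f1 v) (av v * f1 v) v :=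
    mell_one_hasDerivAt (by fun_prop)
  have p2 : ∀ v, HasDerivAt (mell (fun _ => 1) fun v => av v * f1 v * log (1 + v ^ 2))
      (av v * f1 v * log (1 + v ^ 2)) v := mell_one_hasDerivAt (by fun_prop)
  have D1 : ∀ v, 0 < v → HasDerivAt (GG f0 f1) (-(av v * f0 v) + 2 * deriv f0 v
      + (1 + 2 * log v - 2 * log (1 + v ^ 2)) * (av v * f1 v) + 2 * deriv j v
      + 2 * ((1 - v ^ 2) / (1 + v ^ 2)) * deriv f0 v) v := by
    intro v hv
    have hl : HasDerivAt (fun v => 1 + 2 * log v) (2 * v⁻¹) v :=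
      ((hasDerivAt_log hv.ne').const_mul 2).const_add 1
    refine (((((p0 v).fun_add (hl.fun_mul (p1 v))).fun_add ((dJ v).const_mul 2)).fun_sub
      ((p2 v).const_mul 2)).fun_add (((es v).const_mul 2).fun_mul (d0 v))).congr_deriv ?_
    rw [mell_eq h0 h1 hf hv]
    field_simp
    ring
  have D2 : HasDerivAt (deriv (GG f0 f1)) (-(4 * (1 - 3 * w ^ 2) / (1 + w ^ 2) ^ 3 * f0 w
      + av w * deriv f0 w) + 2 * deriv (deriv f0) w
      + ((2 * w⁻¹ - 2 * (2 * w / (1 + w ^ 2))) * (av w * f1 w)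
        + (1 + 2 * log w - 2 * log (1 + w ^ 2)) * (4 * (1 - 3 * w ^ 2) / (1 + w ^ 2) ^ 3 * f1 w
          + av w * deriv f1 w)) + 2 * deriv (deriv j) w
      + (2 * (-av w) * deriv f0 w + 2 * ((1 - w ^ 2) / (1 + w ^ 2)) * deriv (deriv f0) w)) w := by
    have hl : HasDerivAt (fun v => 1 + 2 * log v - 2 * log (1 + v ^ 2))
        (2 * w⁻¹ - 2 * (2 * w / (1 + w ^ 2))) w :=
      (((hasDerivAt_log hw.ne').const_mul 2).const_add 1).fun_sub ((log_hasDerivAt w).const_mul 2)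
    have := (((((av_hasDerivAt w).fun_mul (d0 w)).fun_neg.fun_add ((d0' w).const_mul 2)).fun_add
      (hl.fun_mul ((av_hasDerivAt w).fun_mul (d1 w)))).fun_add ((dJ' w).const_mul 2)).fun_add
      (((es w).const_mul 2).fun_mul (d0' w))
    refine this.congr_of_eventuallyEq ?_
    filter_upwards [lt_mem_nhds hw] with v hv using (D1 v hv).deriv
  have ha := hf w hw
  have ha' : deriv (deriv f0) w = (av w * f1 w - deriv f0 w) / w := by
    rw [ha]; field_simp; ring
  rw [(D1 w hw).deriv, D2.deriv, ha', GG, mell_log_eq h1 h2 hf' hw, mell_eq h0 h1 hf hw,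
    mell_eq h1 h2 hf' hw]
  unfold opT at J ⊢
  rw [show mell lw (fun v => av v * f2 v) w = _ from (eq_sub_of_add_eq (eq_sub_of_add_eq J.symm))]
  simp only [av]
  field_simp
  ring

/-! ### Expansion at the light cone -/

/-- `∫₀¹ ℓ(τ) τ k(τ w) dτ`, so that scaled integrals of `v k(v)` are `w²` times it. -/
def kA (ℓ k : ℝ → ℝ) (w : ℝ) : ℝ := ∫ τ in Icc 0 1, ℓ τ * (τ * k (τ * w))

theorem mell_kA {ℓ k h : ℝ → ℝ} (hk : ∀ v, h v = v * k v) (w : ℝ) :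
    mell ℓ h w = w ^ 2 * kA ℓ k w := by
  rw [mell, kA, ← integral_const_mul]
  congr 1; ext τ
  rw [hk]; ring

theorem kA_smooth {ℓ k : ℝ → ℝ} (hl : IntegrableOn ℓ (Icc 0 1) volume)
    (hk : ContDiff ℝ (⊤ : ℕ∞) k) : ContDiff ℝ (⊤ : ℕ∞) (kA ℓ k) := by
  rw [← contDiffOn_univ]
  have : ContDiff ℝ (⊤ : ℕ∞) fun q : ℝ × ℝ => q.2 * k (q.2 * q.1) :=
    contDiff_snd.mul (hk.comp (by fun_prop))
  exact param_contDiffOn (K := fun q : ℝ × ℝ => q.2 * k (q.2 * q.1)) (μ := volume)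
    isCompact_Icc hl isOpen_univ isOpen_univ (subset_univ _) this.contDiffOn

theorem kA_zero (ℓ k : ℝ → ℝ) : kA ℓ k 0 = k 0 * ∫ τ in Icc 0 1, ℓ τ * τ := by
  rw [kA, ← integral_const_mul]
  congr 1; ext τ
  simp; ring

theorem int_id : ∫ τ in Icc (0 : ℝ) 1, (1 : ℝ) * τ = 1 / 2 := by
  rw [icc_eq_interval]; simp

theorem int_lw : ∫ τ in Icc (0 : ℝ) 1, lw τ * τ = -(1 / 2) := by
  rw [icc_eq_interval]
  have hc : Continuous fun τ : ℝ => (1 - τ ^ 2) * log (1 - τ ^ 2) :=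
    continuous_mul_log.comp (by fun_prop)
  have hi : IntegrableOn (fun τ => lw τ * τ) (Icc 0 1) volume :=
    integrableOn_weight isCompact_Icc lw_integrable (k := fun τ : ℝ => τ)
    continuous_id.continuousOn
  rw [intervalIntegral.integral_eq_sub_of_hasDerivAt_of_le
    (f := fun τ => -(1 / 2) * ((1 - τ ^ 2) * log (1 - τ ^ 2) - (1 - τ ^ 2))) zero_le_one
    (Continuous.continuousOn (by fun_prop)) (fun τ hτ => ?_)
    ((intervalIntegrable_iff_integrableOn_Icc_of_le zero_le_one).2 hi)]
  · norm_num
  · have hp : (0 : ℝ) < 1 - τ ^ 2 := by nlinarith [hτ.1, hτ.2]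
    have q1 : HasDerivAt (fun τ : ℝ => 1 - τ ^ 2) (-(2 * τ)) τ := by
      simpa using (hasDerivAt_pow 2 τ).const_sub 1
    refine (((q1.fun_mul (q1.log hp.ne')).fun_sub q1).const_mul (-(1 / 2))).congr_deriv ?_
    rw [lw]; field_simp; ring

theorem log_mul_tendsto {S : ℝ → ℝ} (hS : DifferentiableAt ℝ S 0) (h0 : S 0 = 0) :
    Tendsto (fun w => log w * S w) (𝓝[>] 0) (𝓝 0) := by
  have h1 := (hasDerivAt_iff_tendsto_slope.1 hS.hasDerivAt).mono_left
    (nhdsWithin_mono 0 (fun x (hx : 0 < x) => hx.ne'))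
  have h2 := (tendsto_log_mul_rpow_nhdsGT_zero one_pos).mul h1
  simp only [rpow_one] at h2
  rw [zero_mul] at h2
  refine h2.congr' ?_
  filter_upwards [self_mem_nhdsWithin] with w hw
  have : w ≠ 0 := (show 0 < w from hw).ne'
  rw [slope_def_field, h0]
  field_simp
  ring

/-- Expansion of the profile at the light cone `w = 0`. The factor `(1 + w²)²/(4w²)` is
`1/(1 - s²)`, `(1 + w²)/(2w²)` is `1/(1 - s)`, and the last bracket is `log (2/(1 - s))`. -/
theorem limit_w {f0 f1 m : ℝ → ℝ} (h0 : ContDiff ℝ (⊤ : ℕ∞) f0) (h1 : ContDiff ℝ (⊤ : ℕ∞) f1)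
    (hm : ContDiff ℝ (⊤ : ℕ∞) m)
    (hf : ∀ v, 0 < v → av v * f1 v = v * deriv (deriv f0) v + deriv f0 v) :
    Tendsto (fun w => (GG f0 f1 w + 2 * mell (fun _ => 1) (fun v => av v * m v) w) *
      ((1 + w ^ 2) ^ 2 / (4 * w ^ 2)) - f0 0 * ((1 + w ^ 2) / (2 * w ^ 2)) +
      1 / 2 * f1 0 * (log (1 + w ^ 2) - 2 * log w)) (𝓝[>] 0) (𝓝 (m 0)) := by
  set b : ℝ → ℝ := fun v => 4 / (1 + v ^ 2) ^ 2 with hb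
  have bs : ContDiff ℝ (⊤ : ℕ∞) b := contDiff_const.div (by fun_prop) fun v => by positivity
  have ls : ContDiff ℝ (⊤ : ℕ∞) fun v : ℝ => log (1 + v ^ 2) :=
    ContDiff.log (by fun_prop) fun v => by positivity
  have i1 : IntegrableOn (fun _ : ℝ => (1 : ℝ)) (Icc 0 1) volume := integrableOn_one isCompact_Icc
  have ab : ∀ v, av v = v * b v := fun v => by simp only [av, hb]; ring
  set A0 := kA (fun _ => 1) fun v => b v * f0 v with hA0
  set A1 := kA (fun _ => 1) fun v => b v * f1 v with hA1
  set AL := kA lw fun v => b v * f1 v with hAL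
  set AK := kA (fun _ => 1) fun v => b v * f1 v * log (1 + v ^ 2) with hAK
  set AM := kA (fun _ => 1) fun v => b v * m v with hAM
  have A1s : ContDiff ℝ (⊤ : ℕ∞) A1 := kA_smooth i1 (bs.mul h1)
  set R := kA (fun _ => 1) A1 with hR
  have n0 : Tendsto A0 (𝓝[>] 0) (𝓝 (A0 0)) :=
    (kA_smooth i1 (bs.mul h0)).continuous.continuousAt.continuousWithinAt
  have n1 : Tendsto A1 (𝓝[>] 0) (𝓝 (A1 0)) := A1s.continuous.continuousAt.continuousWithinAt
  have nL : Tendsto AL (𝓝[>] 0) (𝓝 (AL 0)) :=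
    (kA_smooth lw_integrable (bs.mul h1)).continuous.continuousAt.continuousWithinAt
  have nK : Tendsto AK (𝓝[>] 0) (𝓝 (AK 0)) :=
    (kA_smooth i1 ((bs.mul h1).mul ls)).continuous.continuousAt.continuousWithinAt
  have nM : Tendsto AM (𝓝[>] 0) (𝓝 (AM 0)) :=
    (kA_smooth i1 (bs.mul hm)).continuous.continuousAt.continuousWithinAt
  have nR : Tendsto R (𝓝[>] 0) (𝓝 (R 0)) :=
    (kA_smooth i1 A1s).continuous.continuousAt.continuousWithinAt
  have b0 : b 0 = 4 := by simp [hb]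
  have z0 : A0 0 = 2 * f0 0 := by rw [hA0, kA_zero, int_id, b0]; ring
  have z1 : A1 0 = 2 * f1 0 := by rw [hA1, kA_zero, int_id, b0]; ring
  have zL : AL 0 = -2 * f1 0 := by rw [hAL, kA_zero, int_lw, b0]; ring
  have zK : AK 0 = 0 := by rw [hAK, kA_zero]; simp
  have zM : AM 0 = 2 * m 0 := by rw [hAM, kA_zero, int_id, b0]; ring
  have zR : R 0 = f1 0 := by rw [hR, kA_zero, int_id, z1]; ring
  have eR : ∀ w, 0 < w → f0 w = f0 0 + w ^ 2 * R w := by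
    intro w hw
    rw [hR, ← mell_kA (h := fun v => v * A1 v) (fun _ => rfl), mell_one]
    obtain ⟨d0, -, -, -, -⟩ := deriv_facts h0
    rw [intervalIntegral.integral_eq_sub_of_hasDerivAt_of_le (f := f0) hw.le
      h0.continuous.continuousOn (fun v hv => ?_)
      ((by have := A1s.continuous; fun_prop : Continuous fun v => v * A1 v).intervalIntegrable _ _)]
    · ring
    · refine (d0 v).congr_deriv ?_
      have := mell_eq h0 h1 hf hv.1
      rw [mell_kA (k := fun v => b v * f1 v) (fun v => by rw [ab]; ring)] at this
      have hv0 : v ≠ 0 := hv.1.ne'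
      apply mul_left_cancel₀ hv0
      rw [← this]; ring
  have nS : Tendsto (fun w => log w * ((1 + w ^ 2) ^ 2 / 2 * A1 w - f1 0)) (𝓝[>] 0) (𝓝 0) := by
    have := contDiff_infty_iff_deriv.1 A1s
    refine log_mul_tendsto ?_ (by rw [z1]; ring)
    have h := this.1 0
    fun_prop
  have np : ∀ {p : ℝ → ℝ}, Continuous p → Tendsto p (𝓝[>] 0) (𝓝 (p 0)) :=
    fun h => h.continuousAt.continuousWithinAt
  have T := ((((np (p := fun w => (1 + w ^ 2) ^ 2 / 4) (by fun_prop)).mul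
    ((((n0.add n1).add (nL.const_mul 2)).sub (nK.const_mul 2)).add (nM.const_mul 2))).add nS).add
    ((np (p := fun w => (1 - w ^ 4) / 2) (by fun_prop)).mul nR)).add
    ((np (p := fun w => f0 0 * (-(1 + w ^ 2) / 2) + 1 / 2 * f1 0 * log (1 + w ^ 2))
      (by have := log_cont; fun_prop)))
  rw [z0, z1, zL, zK, zM, zR] at T
  refine (T.congr' ?_).trans_eq ?_
  · filter_upwards [self_mem_nhdsWithin] with w hw
    have hw0 : w ≠ 0 := (show 0 < w from hw).ne'
    have k0 := mell_kA (ℓ := fun _ => 1) (h := fun v => av v * f0 v) (k := fun v => b v * f0 v)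
      (fun v => by rw [ab]; ring) w
    have k1 := mell_kA (ℓ := fun _ => 1) (h := fun v => av v * f1 v) (k := fun v => b v * f1 v)
      (fun v => by rw [ab]; ring) w
    have kL := mell_kA (ℓ := lw) (h := fun v => av v * f1 v) (k := fun v => b v * f1 v)
      (fun v => by rw [ab]; ring) w
    have kK := mell_kA (ℓ := fun _ => 1) (h := fun v => av v * f1 v * log (1 + v ^ 2))
      (k := fun v => b v * f1 v * log (1 + v ^ 2)) (fun v => by rw [ab]; ring) w
    have kM := mell_kA (ℓ := fun _ => 1) (h := fun v => av v * m v) (k := fun v => b v * m v)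
      (fun v => by rw [ab]; ring) w
    rw [GG, k0, k1, kL, kK, kM, eR w hw]
    field_simp
    ring
  · congr 1
    norm_num
    ring

/-! ### The solution formula in terms of circle means -/

theorem smooth_rot_path {f : E3 → ℝ} (hf : SmoothOnSphere f) {x : E3} (hx : x ≠ 0) (k : Fin 3) :
    ContDiff ℝ (⊤ : ℕ∞) (fun β => f (rot k β x)) := by
  rw [← contDiffOn_univ]
  have h : ContDiff ℝ (⊤ : ℕ∞) (fun β : ℝ => rot k β x) :=
    (contDiff_rot k).comp (f := fun β : ℝ => (β, x)) (by fun_prop)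
  exact hf.2.comp h.contDiffOn fun β _ => by simpa using hx

theorem smoothOnSphere_lin {f g : E3 → ℝ} (hf : SmoothOnSphere f) (hg : SmoothOnSphere g) (a : ℝ) :
    SmoothOnSphere (fun x => a * f x + g x) :=
  ⟨fun c hc x => by simp only [hf.1 c hc, hg.1 c hc], (contDiffOn_const.mul hf.2).add hg.2⟩

theorem lapS_lin {f g : E3 → ℝ} (hf : SmoothOnSphere f) (hg : SmoothOnSphere g) (a : ℝ) {x : E3}
    (hx : x ≠ 0) : lapS (fun x => a * f x + g x) x = a * lapS f x + lapS g x := by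
  rw [← rot_sum_lapS (smoothOnSphere_lin hf hg a) hx, ← rot_sum_lapS hf hx, ← rot_sum_lapS hg hx,
    Finset.mul_sum, ← Finset.sum_add_distrib]
  refine Finset.sum_congr rfl fun k _ => ?_
  obtain ⟨f1, f2, -⟩ := deriv_facts (smooth_rot_path hf hx k)
  obtain ⟨g1, g2, -⟩ := deriv_facts (smooth_rot_path hg hx k)
  rw [show deriv (fun β => a * f (rot k β x) + g (rot k β x)) = fun β =>
    a * deriv (fun β => f (rot k β x)) β + deriv (fun β => g (rot k β x)) β from
    funext fun β => (((f1 β).const_mul a).fun_add (g1 β)).deriv]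
  exact (((f2 0).const_mul a).fun_add (g2 0)).deriv

theorem dd_continuous {K : ℝ × ℝ → ℝ} (hK : ContDiffOn ℝ (⊤ : ℕ∞) K univ) (s : ℝ) :
    Continuous (fun a => deriv (deriv (fun s => K (s, a))) s) := by
  have hK2 := dir_contDiffOn isOpen_univ (dir_contDiffOn isOpen_univ hK (1, 0)) (1, 0)
  simp only [deriv_deriv_eq_dir hK]
  exact (continuousOn_univ.1 hK2.continuousOn).comp (f := fun a : ℝ => (s, a)) (by fun_prop)

theorem mell_FF_smooth {ℓ k : ℝ → ℝ} (hl : IntegrableOn ℓ (Icc 0 1) volume)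
    (hk : ContDiff ℝ (⊤ : ℕ∞) k) {N : E3 → ℝ} (hN : SmoothOnSphere N) :
    ContDiffOn ℝ (⊤ : ℕ∞) (fun p : ℝ × E3 => mell ℓ (fun v => k v * FF N v p.2) p.1)
      {p | p.2 ≠ 0} := by
  have hU : IsOpen {p : ℝ × E3 | p.2 ≠ 0} := isOpen_ne.preimage continuous_snd
  refine param_contDiffOn (E := ℝ × E3) (μ := (volume : Measure ℝ)) (S := Icc 0 1)
    isCompact_Icc hl hU (W := {q : (ℝ × E3) × ℝ | q.1.2 ≠ 0})
    (isOpen_ne.preimage (by fun_prop : Continuous fun q : (ℝ × E3) × ℝ => q.1.2))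
    (K := fun q : (ℝ × E3) × ℝ => q.1.1 * (k (q.2 * q.1.1) * FF N (q.2 * q.1.1) q.1.2))
    (fun q hq => hq.1) ?_
  have h1 : ContDiff ℝ (⊤ : ℕ∞) (fun q : (ℝ × E3) × ℝ => k (q.2 * q.1.1)) :=
    hk.comp (by fun_prop)
  have h2 : ContDiffOn ℝ (⊤ : ℕ∞) (fun q : (ℝ × E3) × ℝ => FF N (q.2 * q.1.1) q.1.2)
      {q | q.1.2 ≠ 0} :=
    (FF_smooth hN).comp (f := fun q : (ℝ × E3) × ℝ => (q.2 * q.1.1, q.1.2))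
      (ContDiff.contDiffOn (by fun_prop)) fun q hq => hq
  exact (ContDiff.contDiffOn (by fun_prop)).mul (h1.contDiffOn.mul h2)

theorem mell_FF_smoothOnSphere {ℓ k : ℝ → ℝ} (hl : IntegrableOn ℓ (Icc 0 1) volume)
    (hk : ContDiff ℝ (⊤ : ℕ∞) k) {N : E3 → ℝ} (hN : SmoothOnSphere N) (w : ℝ) :
    SmoothOnSphere (fun x => mell ℓ (fun v => k v * FF N v x) w) := by
  refine ⟨fun c hc x => ?_, ?_⟩
  · simp only [FF_homog N _ c hc x]
  · exact smooth_slice (g := fun w x => mell ℓ (fun v => k v * FF N v x) w)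
      (mell_FF_smooth hl hk hN) fun _ hx => hx

theorem mell_kernel_smooth {k : ℝ → ℝ} (hk : ContDiff ℝ (⊤ : ℕ∞) k) {N : E3 → ℝ}
    (hN : SmoothOnSphere N) (w : ℝ) {x : E3} (hx : x ≠ 0) (i : Fin 3) :
    ContDiffOn ℝ (⊤ : ℕ∞)
      (fun q : ℝ × ℝ => w * (k (q.2 * w) * FF N (q.2 * w) (rot i q.1 x))) univ := by
  have h1 : ContDiff ℝ (⊤ : ℕ∞) (fun q : ℝ × ℝ => k (q.2 * w)) := hk.comp (by fun_prop)
  have h3 : ContDiff ℝ (⊤ : ℕ∞) (fun q : ℝ × ℝ => rot i q.1 x) :=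
    (contDiff_rot i).comp (f := fun q : ℝ × ℝ => (q.1, x)) (by fun_prop)
  have h2 : ContDiffOn ℝ (⊤ : ℕ∞) (fun q : ℝ × ℝ => FF N (q.2 * w) (rot i q.1 x)) univ :=
    (FF_smooth hN).comp (f := fun q : ℝ × ℝ => (q.2 * w, rot i q.1 x))
      (ContDiff.prodMk (by fun_prop) h3).contDiffOn fun q _ => by simpa using hx
  exact contDiffOn_const.mul (h1.contDiffOn.mul h2)

/-- Radial integrals of circle means commute with the Laplace–Beltrami operator. -/
theorem lapS_mell {ℓ k : ℝ → ℝ} (hl : IntegrableOn ℓ (Icc 0 1) volume)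
    (hk : ContDiff ℝ (⊤ : ℕ∞) k) {N : E3 → ℝ} (hN : SmoothOnSphere N) (w : ℝ) {x : E3}
    (hx : x ≠ 0) : lapS (fun x => mell ℓ (fun v => k v * FF N v x) w) x =
      mell ℓ (fun v => k v * FF (lapS N) v x) w := by
  rw [← rot_sum_lapS (mell_FF_smoothOnSphere hl hk hN w) hx]
  have h1 : ∀ i, deriv (deriv (fun β => mell ℓ (fun v => k v * FF N v (rot i β x)) w)) 0 =
      ∫ τ in Icc 0 1, ℓ τ * deriv (deriv fun β =>
        w * (k (τ * w) * FF N (τ * w) (rot i β x))) 0 := fun i =>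
    param_deriv_deriv (μ := volume)
      (K := fun q : ℝ × ℝ => w * (k (q.2 * w) * FF N (q.2 * w) (rot i q.1 x)))
      isCompact_Icc hl isOpen_univ isOpen_univ (subset_univ _)
      (mell_kernel_smooth hk hN w hx i) (mem_univ _)
  have hint : ∀ i, IntegrableOn (fun τ => ℓ τ * deriv (deriv fun β =>
        w * (k (τ * w) * FF N (τ * w) (rot i β x))) 0) (Icc 0 1) volume := fun i =>
    integrableOn_weight isCompact_Icc hl
      (dd_continuous (mell_kernel_smooth hk hN w hx i) 0).continuousOn
  simp only [h1]
  rw [← integral_finsetSum _ fun i _ => hint i, mell]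
  congr 1
  ext τ
  have hF := FF_smoothOnSphere hN (τ * w)
  rw [← lapS_FF hN _ hx, ← rot_sum_lapS hF hx, ← Finset.mul_sum]
  congr 1
  rw [← mul_assoc, Finset.mul_sum]
  refine Finset.sum_congr rfl fun i _ => ?_
  obtain ⟨f1, f2, -⟩ := deriv_facts (smooth_rot_path hF hx i)
  rw [show deriv (fun β => w * (k (τ * w) * FF N (τ * w) (rot i β x))) = fun β =>
    w * k (τ * w) * deriv (fun β => FF N (τ * w) (rot i β x)) β from
    funext fun β => by simpa only [mul_assoc] using ((f1 β).const_mul (w * k (τ * w))).deriv]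
  exact ((f2 0).const_mul _).deriv

/-- The unnormalised solution in the coordinate `w`, with leading coefficient `N` and free data
`M`. -/
def HH (N M : E3 → ℝ) (w : ℝ) (x : E3) : ℝ :=
  GG (fun v => FF N v x) (fun v => FF (lapS N) v x) w +
    2 * mell (fun _ => 1) (fun v => av v * FF M v x) w

/-- The kernel of the logarithmic correction. -/
def avl (v : ℝ) : ℝ := av v * log (1 + v ^ 2)

theorem avl_smooth : ContDiff ℝ (⊤ : ℕ∞) avl :=
  av_smooth.mul (ContDiff.log (by fun_prop) fun v => by positivity)

theorem HH_eq (N M : E3 → ℝ) (w : ℝ) : HH N M w = fun x =>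
    (1 + 2 * log w) * mell (fun _ => 1) (fun v => av v * FF (lapS N) v x) w +
    (2 * mell lw (fun v => av v * FF (lapS N) v x) w +
    ((-2) * mell (fun _ => 1) (fun v => avl v * FF (lapS N) v x) w +
    (2 * ((1 - w ^ 2) / (1 + w ^ 2)) * FF N w x +
    (2 * mell (fun _ => 1) (fun v => av v * FF M v x) w +
    mell (fun _ => 1) (fun v => av v * FF N v x) w)))) := by
  ext x
  have : (fun v => av v * FF (lapS N) v x * log (1 + v ^ 2)) =
      fun v => avl v * FF (lapS N) v x := by ext v; simp only [avl]; ring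
  simp only [HH, GG, this]
  ring

theorem one_int : IntegrableOn (fun _ : ℝ => (1 : ℝ)) (Icc 0 1) volume :=
  integrableOn_one isCompact_Icc

theorem HH_smoothOnSphere {N M : E3 → ℝ} (hN : SmoothOnSphere N) (hM : SmoothOnSphere M) (w : ℝ) :
    SmoothOnSphere (HH N M w) := by
  rw [HH_eq]
  have hN' := lapS_smooth hN
  exact smoothOnSphere_lin (mell_FF_smoothOnSphere one_int av_smooth hN' w)
    (smoothOnSphere_lin (mell_FF_smoothOnSphere lw_integrable av_smooth hN' w)
    (smoothOnSphere_lin (mell_FF_smoothOnSphere one_int avl_smooth hN' w)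
    (smoothOnSphere_lin (FF_smoothOnSphere hN w)
    (smoothOnSphere_lin (mell_FF_smoothOnSphere one_int av_smooth hM w)
    (mell_FF_smoothOnSphere one_int av_smooth hN w) _) _) _) _) _

/-- The Laplace–Beltrami operator acts on `HH` through its data. -/
theorem lapS_HH {N M : E3 → ℝ} (hN : SmoothOnSphere N) (hM : SmoothOnSphere M) (w : ℝ) {x : E3}
    (hx : x ≠ 0) : lapS (HH N M w) x = HH (lapS N) (lapS M) w x := by
  have hN' := lapS_smooth hN
  have s1 := mell_FF_smoothOnSphere one_int av_smooth hN' w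
  have s2 := mell_FF_smoothOnSphere lw_integrable av_smooth hN' w
  have s3 := mell_FF_smoothOnSphere one_int avl_smooth hN' w
  have s4 := FF_smoothOnSphere hN w
  have s5 := mell_FF_smoothOnSphere one_int av_smooth hM w
  have s6 := mell_FF_smoothOnSphere one_int av_smooth hN w
  have t5 := smoothOnSphere_lin s5 s6 2
  have t4 := smoothOnSphere_lin s4 t5 (2 * ((1 - w ^ 2) / (1 + w ^ 2)))
  have t3 := smoothOnSphere_lin s3 t4 (-2)
  have t2 := smoothOnSphere_lin s2 t3 2
  rw [HH_eq, HH_eq, lapS_lin s1 t2 _ hx, lapS_lin s2 t3 _ hx, lapS_lin s3 t4 _ hx,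
    lapS_lin s4 t5 _ hx, lapS_lin s5 s6 _ hx, lapS_mell one_int av_smooth hN' w hx,
    lapS_mell lw_integrable av_smooth hN' w hx, lapS_mell one_int avl_smooth hN' w hx,
    lapS_FF hN w hx, lapS_mell one_int av_smooth hM w hx, lapS_mell one_int av_smooth hN w hx]

theorem HH_smooth {N M : E3 → ℝ} (hN : SmoothOnSphere N) (hM : SmoothOnSphere M) :
    ContDiffOn ℝ (⊤ : ℕ∞) (fun p : ℝ × E3 => HH N M p.1 p.2) {p | 0 < p.1 ∧ p.2 ≠ 0} := by
  simp only [HH_eq]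
  have hN' := lapS_smooth hN
  have hs : {p : ℝ × E3 | 0 < p.1 ∧ p.2 ≠ 0} ⊆ {p | p.2 ≠ 0} := fun p hp => hp.2
  have c0 : ContDiffOn ℝ (⊤ : ℕ∞) (fun p : ℝ × E3 => 1 + 2 * log p.1)
      {p | 0 < p.1 ∧ p.2 ≠ 0} :=
    contDiffOn_const.add (contDiffOn_const.mul (contDiffOn_fst.log fun p hp => hp.1.ne'))
  have c1 : ContDiff ℝ (⊤ : ℕ∞) (fun p : ℝ × E3 => 2 * ((1 - p.1 ^ 2) / (1 + p.1 ^ 2))) :=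
    contDiff_const.mul (ContDiff.div (by fun_prop) (by fun_prop) fun p => by positivity)
  exact (c0.mul ((mell_FF_smooth one_int av_smooth hN').mono hs)).add
    ((contDiffOn_const.mul ((mell_FF_smooth lw_integrable av_smooth hN').mono hs)).add
    ((contDiffOn_const.mul ((mell_FF_smooth one_int avl_smooth hN').mono hs)).add
    ((c1.contDiffOn.mul ((FF_smooth hN).mono hs)).add
    ((contDiffOn_const.mul ((mell_FF_smooth one_int av_smooth hM).mono hs)).add
    ((mell_FF_smooth one_int av_smooth hN).mono hs)))))

theorem FF_ode' {N : E3 → ℝ} (hN : SmoothOnSphere N) {x : E3} (hx : x ≠ 0) (v : ℝ) (hv : 0 < v) :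
    av v * FF (lapS N) v x = v * deriv (deriv fun v => FF N v x) v + deriv (fun v => FF N v x) v := by
  have := FF_ode hN hx v
  have h2 : v * (av v * FF (lapS N) v x) =
      v * (v * deriv (deriv fun v => FF N v x) v + deriv (fun v => FF N v x) v) := by
    simp only [av]
    rw [mul_add, ← mul_assoc v v, ← sq, this]; ring
  exact mul_left_cancel₀ (ne_of_gt hv) h2

/-- The radial operator also acts on `HH` through its data; compared with `lapS_HH` this is the reduced
wave equation for `HH`. -/
theorem HH_ode {N M : E3 → ℝ} (hN : SmoothOnSphere N) (hM : SmoothOnSphere M) {x : E3}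
    (hx : x ≠ 0) {w : ℝ} (hw : 0 < w) :
    opT w (deriv (fun w => HH N M w x) w) (deriv (deriv fun w => HH N M w x) w) =
      HH (lapS N) (lapS M) w x := by
  have hN' := lapS_smooth hN
  have hG := G_ode (FF_smooth_fst hN hx) (FF_smooth_fst hN' hx)
    (FF_smooth_fst (lapS_smooth hN') hx) (FF_ode' hN hx) (FF_ode' hN' hx) hw
  have hU := U_ode (FF_smooth_fst hM hx) (FF_smooth_fst (lapS_smooth hM) hx) (FF_ode' hM hx) hw
  have sU : ContDiffOn ℝ (⊤ : ℕ∞) (fun w => mell (fun _ => 1) (fun v => av v * FF M v x) w)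
      (Ioi 0) := smooth_slice_fst (g := fun w x => mell (fun _ => 1) (fun v => av v * FF M v x) w)
    (mell_FF_smooth one_int av_smooth hM) fun s _ => hx
  have sH : ContDiffOn ℝ (⊤ : ℕ∞) (fun w => HH N M w x) (Ioi 0) :=
    smooth_slice_fst (HH_smooth hN hM) fun s hs => ⟨hs, hx⟩
  have sG : ContDiffOn ℝ (⊤ : ℕ∞) (GG (fun v => FF N v x) (fun v => FF (lapS N) v x)) (Ioi 0) := by
    refine (sH.sub (contDiffOn_const (c := (2 : ℝ)) |>.mul sU)).congr fun w _ => ?_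
    simp only [HH]; ring
  have hU' := fun {w} (hw : w ∈ Ioi 0) => smooth_hasDerivAt isOpen_Ioi sU hw
  have hG' := fun {w} (hw : w ∈ Ioi 0) => smooth_hasDerivAt isOpen_Ioi sG hw
  have e1 : ∀ w ∈ Ioi 0, deriv (fun w => HH N M w x) w =
      deriv (GG (fun v => FF N v x) (fun v => FF (lapS N) v x)) w +
      2 * deriv (mell (fun _ => 1) (fun v => av v * FF M v x)) w := fun w hw =>
    ((hG' hw).1.fun_add ((hU' hw).1.const_mul 2)).deriv
  have e2 : deriv (deriv (fun w => HH N M w x)) w =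
      deriv (deriv (GG (fun v => FF N v x) (fun v => FF (lapS N) v x))) w +
      2 * deriv (deriv (mell (fun _ => 1) (fun v => av v * FF M v x))) w := by
    have : deriv (fun w => HH N M w x) =ᶠ[𝓝 w] fun w =>
        deriv (GG (fun v => FF N v x) (fun v => FF (lapS N) v x)) w +
        2 * deriv (mell (fun _ => 1) (fun v => av v * FF M v x)) w := by
      filter_upwards [isOpen_Ioi.mem_nhds hw] with v hv using e1 v hv
    rw [this.deriv_eq]
    exact ((hG' hw).2.fun_add ((hU' hw).2.const_mul 2)).deriv
  rw [e1 w hw, e2]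
  simp only [HH]
  rw [← hG, ← hU]
  simp only [opT]
  ring

/-! ### Existence -/

/-- The stereographic radius `w = √((1-s)/(1+s))` of the circle at height `s`. -/
def ws (s : ℝ) : ℝ := √((1 - s) / (1 + s))

theorem ws_arg {s : ℝ} (hs : |s| < 1) : 0 < (1 - s) / (1 + s) := by
  have := abs_lt.1 hs
  exact div_pos (by linarith) (by linarith)

theorem ws_pos {s : ℝ} (hs : |s| < 1) : 0 < ws s := Real.sqrt_pos.2 (ws_arg hs)

theorem ws_sq {s : ℝ} (hs : |s| < 1) : ws s ^ 2 = (1 - s) / (1 + s) := Real.sq_sqrt (ws_arg hs).le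

theorem s_eq_ws {s : ℝ} (hs : |s| < 1) : s = (1 - ws s ^ 2) / (1 + ws s ^ 2) := by
  have := abs_lt.1 hs
  have h : 1 + s ≠ 0 := by linarith
  rw [ws_sq hs]; field_simp; ring

theorem ws_smooth : ContDiffOn ℝ (⊤ : ℕ∞) ws {s | |s| < 1} := by
  refine ContDiffOn.sqrt (ContDiffOn.div (by fun_prop) (by fun_prop) fun s hs => ?_)
    fun s hs => (ws_arg hs).ne'
  have := abs_lt.1 (show |s| < 1 from hs)
  linarith

theorem isOpen_abs : IsOpen {s : ℝ | |s| < 1} := isOpen_lt (by fun_prop) (by fun_prop)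

theorem ws_hasDerivAt {s : ℝ} (hs : |s| < 1) :
    HasDerivAt ws (-(1 + ws s ^ 2) ^ 2 / (4 * ws s)) s := by
  have h1 := abs_lt.1 hs
  have hw := ws_pos hs
  have hd : HasDerivAt ws (deriv ws s) s := (diff_at isOpen_abs ws_smooth hs).hasDerivAt
  have h2 : HasDerivAt (fun s => (1 - ws s ^ 2) / (1 + ws s ^ 2)) 1 s := by
    refine (hasDerivAt_id s).congr_of_eventuallyEq ?_
    filter_upwards [isOpen_abs.mem_nhds hs] with v hv using (s_eq_ws hv).symm
  have h3 := ((hd.fun_pow 2).const_sub 1).fun_div ((hd.fun_pow 2).const_add 1)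
    (by positivity)
  have h4 := h3.unique h2
  refine hd.congr_deriv ?_
  rw [div_eq_iff (by positivity)] at h4
  rw [eq_div_iff (by positivity)]
  simp at h4
  linear_combination (-1 : ℝ) * h4

/-- The operator `(1 - s²) d²/ds²` becomes `opT` in the stereographic variable. -/
theorem ws_ode {Y : ℝ → ℝ} (hY : ContDiffOn ℝ (⊤ : ℕ∞) Y (Ioi 0)) {s : ℝ} (hs : |s| < 1) :
    (1 - s ^ 2) * deriv (deriv fun s => Y (ws s)) s =
      opT (ws s) (deriv Y (ws s)) (deriv (deriv Y) (ws s)) := by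
  have hw := ws_pos hs
  have h1 : deriv (fun s => Y (ws s)) =ᶠ[𝓝 s] fun s =>
      deriv Y (ws s) * (-(1 + ws s ^ 2) ^ 2 / (4 * ws s)) := by
    filter_upwards [isOpen_abs.mem_nhds hs] with v hv
    exact (deriv_comp_fun (ws_hasDerivAt hv)
      (smooth_hasDerivAt isOpen_Ioi hY (ws_pos hv)).1).deriv
  have hd := ws_hasDerivAt hs
  have h2 := deriv_comp_fun hd (smooth_hasDerivAt isOpen_Ioi hY hw).2
  have h3 := ((((hd.fun_pow 2).const_add 1).fun_pow 2).fun_neg).fun_div (hd.const_mul 4)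
    (by positivity)
  rw [h1.deriv_eq, (h2.fun_mul h3).deriv]
  have h4 : 1 - s ^ 2 = 4 * ws s ^ 2 / (1 + ws s ^ 2) ^ 2 := by
    have h5 := s_eq_ws hs
    rw [eq_div_iff (by positivity)] at h5 ⊢
    linear_combination (-((1 - ws s ^ 2) + s * (1 + ws s ^ 2))) * h5
  rw [h4]
  simp only [opT]
  field_simp
  simp
  ring

/-- The explicit solution on the exterior region: `HH`, normalised by the length `2π` of the angle
interval and divided by the conformal factor `‖x‖² - t²`. -/
def sol (N M : E3 → ℝ) (t : ℝ) (x : E3) : ℝ :=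
  ((2 * π)⁻¹ * HH N M (ws (t / ‖x‖)) x) / (‖x‖ ^ 2 - t ^ 2)

theorem gsol_smooth {N M : E3 → ℝ} (hN : SmoothOnSphere N) (hM : SmoothOnSphere M) :
    ContDiffOn ℝ (⊤ : ℕ∞) (fun p : ℝ × E3 => (2 * π)⁻¹ * HH N M (ws p.1) p.2) Cyl := by
  have h1 : ContDiffOn ℝ (⊤ : ℕ∞) (fun p : ℝ × E3 => ws p.1) Cyl :=
    ws_smooth.comp contDiffOn_fst fun p hp => hp.1
  exact contDiffOn_const.mul ((HH_smooth hN hM).comp (f := fun p : ℝ × E3 => (ws p.1, p.2))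
    (h1.prodMk contDiffOn_snd) fun p hp => ⟨ws_pos hp.1, hp.2⟩)

theorem sol_smooth {N M : E3 → ℝ} (hN : SmoothOnSphere N) (hM : SmoothOnSphere M) :
    ContDiffOn ℝ (⊤ : ℕ∞) (fun p : ℝ × E3 => sol N M p.1 p.2) Ext := by
  have hr : ∀ p ∈ Ext, 0 < ‖p.2‖ := fun p hp => (abs_nonneg p.1).trans_lt hp
  have h0 : ContDiffOn ℝ (⊤ : ℕ∞) (fun p : ℝ × E3 => ‖p.2‖) Ext :=
    contDiffOn_snd.norm ℝ fun p hp => norm_pos_iff.1 (hr p hp)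
  have h1 : ContDiffOn ℝ (⊤ : ℕ∞) (fun p : ℝ × E3 => p.1 / ‖p.2‖) Ext :=
    contDiffOn_fst.div h0 fun p hp => (hr p hp).ne'
  refine ((gsol_smooth hN hM).comp (f := fun p : ℝ × E3 => (p.1 / ‖p.2‖, p.2))
    (h1.prodMk contDiffOn_snd) fun p hp => ⟨abs_div_lt_one hp, norm_pos_iff.1 (hr p hp)⟩).div
    ((h0.pow 2).sub (contDiffOn_fst.pow 2)) fun p hp => ?_
  have : |p.1| ^ 2 < ‖p.2‖ ^ 2 := pow_lt_pow_left₀ hp (abs_nonneg _) two_ne_zero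
  rw [sq_abs] at this
  linarith

theorem gsol_ode {N M : E3 → ℝ} (hN : SmoothOnSphere N) (hM : SmoothOnSphere M) {s : ℝ}
    (hs : |s| < 1) {x : E3} (hx : x ≠ 0) :
    (1 - s ^ 2) * deriv (deriv fun s => (2 * π)⁻¹ * HH N M (ws s) x) s =
      lapS (fun x => (2 * π)⁻¹ * HH N M (ws s) x) x := by
  have hY : ContDiffOn ℝ (⊤ : ℕ∞) (fun w => HH N M w x) (Ioi 0) :=
    smooth_slice_fst (HH_smooth hN hM) fun s hs => ⟨hs, hx⟩
  have h1 := ws_ode ((contDiffOn_const (c := (2 * π)⁻¹)).mul hY) hs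
  rw [h1]
  have e1 : deriv (fun w => (2 * π)⁻¹ * HH N M w x) = fun w =>
      (2 * π)⁻¹ * deriv (fun w => HH N M w x) w := by ext w; simp
  have e2 : lapS (fun x => (2 * π)⁻¹ * HH N M (ws s) x) x =
      (2 * π)⁻¹ * lapS (HH N M (ws s)) x := by
    have hz : SmoothOnSphere (fun _ => 0) := ⟨fun _ _ _ => rfl, contDiffOn_const⟩
    have := lapS_lin (HH_smoothOnSphere hN hM (ws s)) hz (2 * π)⁻¹ hx
    have h0 := lapS_lin hz hz 0 hx
    simp only [mul_zero, zero_mul, zero_add, add_zero] at this h0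
    have h00 := lapS_lin hz hz 1 hx
    simp only [mul_zero, one_mul, add_zero] at h00
    rw [this]; linarith
  rw [e2, lapS_HH hN hM _ hx, ← HH_ode hN hM hx (ws_pos hs)]
  simp only [e1, opT]
  rw [deriv_const_mul_field]
  ring

theorem ws_tendsto : Tendsto ws (𝓝[<] 1) (𝓝[>] 0) := by
  refine tendsto_nhdsWithin_iff.2 ⟨?_, ?_⟩
  · have : ContinuousAt ws 1 := by
      unfold ws
      exact ((continuousAt_const.sub continuousAt_id).div (continuousAt_const.add continuousAt_id)
        (by norm_num)).sqrt
    have h := this.tendsto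
    rw [show ws 1 = 0 by simp [ws]] at h
    exact h.mono_left nhdsWithin_le_nhds
  · filter_upwards [Ioo_mem_nhdsLT (show (-1 : ℝ) < 1 by norm_num)] with s hs
    exact ws_pos (abs_lt.2 ⟨hs.1, hs.2⟩)

theorem sol_isExtHomTwo {N M : E3 → ℝ} (hN : SmoothOnSphere N) (hM : SmoothOnSphere M) :
    IsExtHomTwo N M (sol N M) := by
  refine ⟨sol_smooth hN hM, fun t x htx => ?_, fun c hc t x htx => ?_, fun ω hω => ?_⟩
  · have hr : 0 < ‖x‖ := (abs_nonneg t).trans_lt htx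
    have hs := abs_div_lt_one htx
    have hc := wave_conversion (g := fun s x => (2 * π)⁻¹ * HH N M (ws s) x) (gsol_smooth hN hM)
      (fun s _ c hc x => by simp only [(HH_smoothOnSphere hN hM (ws s)).1 c hc x])
      (sol_smooth hN hM) (fun t x _ => rfl) htx
    have hs2 : 0 < 1 - (t / ‖x‖) ^ 2 := by
      have : |t / ‖x‖| ^ 2 < 1 := pow_lt_one₀ (abs_nonneg _) hs two_ne_zero
      rw [sq_abs] at this; linarith
    rw [← gsol_ode hN hM hs (norm_pos_iff.1 hr), mul_div_cancel_left₀ _ hs2.ne', sub_self] at hc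
    have := (mul_eq_zero.1 hc).resolve_left (by positivity)
    linarith
  · have h1 : c * t / ‖c • x‖ = t / ‖x‖ := by
      rw [norm_smul, Real.norm_of_nonneg hc.le, mul_div_mul_left _ _ hc.ne']
    simp only [sol, h1, (HH_smoothOnSphere hN hM _).1 c hc x]
    rw [norm_smul, Real.norm_of_nonneg hc.le, mul_pow, mul_pow, ← mul_sub, div_mul_eq_div_div,
      div_right_comm, div_eq_inv_mul _ (c ^ 2)]
  · have hω0 : ω ≠ 0 := norm_pos_iff.1 (by rw [hω]; exact one_pos)
    have hL := limit_w (FF_smooth_fst hN hω0) (FF_smooth_fst (lapS_smooth hN) hω0)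
      (FF_smooth_fst hM hω0) (FF_ode' hN hω0)
    have h1 := (hL.comp ws_tendsto).const_mul (2 * π)⁻¹
    rw [FF_zero hN.1 hω0, FF_zero (lapS_smooth hN).1 hω0, FF_zero hM.1 hω0] at h1
    have hπ : (2 * π)⁻¹ * (2 * π * M ω) = M ω := by field_simp
    rw [hπ] at h1
    refine h1.congr' ?_
    filter_upwards [Ioo_mem_nhdsLT (show (-1 : ℝ) < 1 by norm_num)] with s hs
    have hs' : |s| < 1 := abs_lt.2 ⟨hs.1, hs.2⟩
    have hw := ws_pos hs'
    have a1 : 1 - s = 2 * ws s ^ 2 / (1 + ws s ^ 2) := by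
      have := s_eq_ws hs'
      rw [eq_div_iff (by positivity)] at this ⊢
      linarith
    have a2 : log (2 / (1 - s)) = log (1 + ws s ^ 2) - 2 * log (ws s) := by
      rw [a1, show 2 / (2 * ws s ^ 2 / (1 + ws s ^ 2)) = (1 + ws s ^ 2) / ws s ^ 2 by field_simp,
        log_div (by positivity) (by positivity), log_pow]
      norm_num
    have a3 : 1 - s ^ 2 = 4 * ws s ^ 2 / (1 + ws s ^ 2) ^ 2 := by
      have : 1 - s ^ 2 = (1 - s) * (2 - (1 - s)) := by ring
      rw [this, a1]; field_simp; ring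
    simp only [Function.comp, sol, hω, div_one, one_pow, lapS, one_mul, HH, a2]
    rw [a3, a1]
    field_simp
    ring

/-! ### A scalar equation at the light cone -/

theorem second_deriv_nonpos_of_max {F : ℝ → ℝ} (hF : ContDiff ℝ (⊤ : ℕ∞) F)
    (hmax : ∀ β, F β ≤ F 0) : deriv (deriv F) 0 ≤ 0 := by
  by_contra hpos
  push Not at hpos
  have hM : IsLocalMax F 0 := Eventually.of_forall hmax
  have hm := isLocalMin_of_deriv_deriv_pos hpos hM.deriv_eq_zero hF.continuous.continuousAt
  have he : F =ᶠ[𝓝 0] fun _ => F 0 := by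
    filter_upwards [hm] with β hβ using le_antisymm (hmax β) hβ
  have h1 := he.deriv.deriv_eq
  simp at h1
  exact hpos.ne h1.symm

/-- A function convex near `1` and `o(1 - s)` there is nonincreasing, hence nonnegative. -/
theorem convex_flat {p p' p'' : ℝ → ℝ} {s0 : ℝ} (h1 : ∀ s ∈ Ico s0 1, HasDerivAt p (p' s) s)
    (h2 : ∀ s ∈ Ico s0 1, HasDerivAt p' (p'' s) s) (hc : ∀ s ∈ Ico s0 1, 0 ≤ p'' s)
    (hl : Tendsto (fun s => p s / (1 - s)) (𝓝[<] 1) (𝓝 0)) {s : ℝ} (hs : s ∈ Ico s0 1) :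
    p' s ≤ 0 ∧ 0 ≤ p s := by
  have hmono : MonotoneOn p' (Ico s0 1) := by
    refine monotoneOn_of_deriv_nonneg (convex_Ico _ _)
      (fun s hs => (h2 s hs).continuousAt.continuousWithinAt)
      (fun s hs => (h2 s (interior_subset hs)).differentiableAt.differentiableWithinAt)
      fun s hs => ?_
    rw [(h2 s (interior_subset hs)).deriv]
    exact hc s (interior_subset hs)
  have hl0 : Tendsto p (𝓝[<] 1) (𝓝 0) := by
    have h : Tendsto (fun s : ℝ => 1 - s) (𝓝[<] 1) (𝓝 0) := by
      have : Continuous fun s : ℝ => 1 - s := by fun_prop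
      have h := this.tendsto 1
      rw [sub_self] at h
      exact h.mono_left nhdsWithin_le_nhds
    have := hl.mul h
    rw [zero_mul] at this
    refine this.congr' ?_
    filter_upwards [self_mem_nhdsWithin] with s hs
    have : (1 : ℝ) - s ≠ 0 := by have : s < 1 := hs; linarith
    field_simp
  have mvt : ∀ s ∈ Ico s0 1, ∀ σ ∈ Ioo s 1, ∃ c ∈ Ioo s σ, p σ - p s = p' c * (σ - s) := by
    intro s hs σ hσ
    have hsub : ∀ c ∈ Icc s σ, c ∈ Ico s0 1 := fun c hc => ⟨hs.1.trans hc.1, hc.2.trans_lt hσ.2⟩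
    obtain ⟨c, hc, e⟩ := exists_hasDerivAt_eq_slope p p' hσ.1
      (fun c hc => (h1 c (hsub c hc)).continuousAt.continuousWithinAt)
      fun c hc => h1 c (hsub c (Ioo_subset_Icc_self hc))
    refine ⟨c, hc, ?_⟩
    rw [e, div_mul_cancel₀ _ (by linarith [hσ.1])]
  have tang : ∀ s ∈ Ico s0 1, p s ≤ -p' s * (1 - s) := by
    intro s hs
    have ht : Tendsto (fun σ => p σ - p s - p' s * (σ - s)) (𝓝[<] 1)
        (𝓝 (0 - p s - p' s * (1 - s))) :=
      (hl0.sub_const _).sub (((tendsto_id.mono_left nhdsWithin_le_nhds).sub_const s).const_mul _)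
    have : 0 ≤ 0 - p s - p' s * (1 - s) := by
      refine ge_of_tendsto ht ?_
      filter_upwards [Ioo_mem_nhdsLT hs.2] with σ hσ
      obtain ⟨c, hc, e⟩ := mvt s hs σ hσ
      have := hmono hs ⟨hs.1.trans hc.1.le, hc.2.trans hσ.2⟩ hc.1.le
      rw [e, ← sub_mul]
      exact mul_nonneg (by linarith) (by linarith [hσ.1])
    linarith
  have neg : ∀ s ∈ Ico s0 1, p' s ≤ 0 := by
    intro s hs
    by_contra hpos
    push Not at hpos
    have : (0 : ℝ) ≤ -p' s := by
      refine le_of_tendsto hl ?_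
      filter_upwards [Ioo_mem_nhdsLT hs.2] with σ hσ
      have hσ' : σ ∈ Ico s0 1 := ⟨hs.1.trans hσ.1.le, hσ.2⟩
      have h := hmono hs hσ' hσ.1.le
      rw [div_le_iff₀ (by linarith [hσ.2])]
      refine (tang σ hσ').trans ?_
      exact mul_le_mul_of_nonneg_right (by linarith) (by linarith [hσ.2])
    linarith
  refine ⟨neg s hs, ?_⟩
  refine le_of_tendsto hl0 ?_
  filter_upwards [Ioo_mem_nhdsLT hs.2] with σ hσ
  obtain ⟨c, hc, e⟩ := mvt s hs σ hσ
  have := neg c ⟨hs.1.trans hc.1.le, hc.2.trans hσ.2⟩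
  nlinarith [hσ.1]

/-- The fourth root `(1-s)^(1/4)`. -/
def kap (s : ℝ) : ℝ := √(√(1 - s))

theorem kap_pos {s : ℝ} (hs : s < 1) : 0 < kap s :=
  Real.sqrt_pos.2 (Real.sqrt_pos.2 (by linarith))

theorem kap_sq (s : ℝ) : kap s ^ 2 = √(1 - s) := Real.sq_sqrt (Real.sqrt_nonneg _)

theorem kap_four {s : ℝ} (hs : s < 1) : kap s ^ 4 = 1 - s := by
  rw [show kap s ^ 4 = (kap s ^ 2) ^ 2 by ring, kap_sq, Real.sq_sqrt (by linarith)]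

theorem kap_continuous : Continuous kap := by unfold kap; fun_prop

theorem kap_tendsto : Tendsto kap (𝓝[<] 1) (𝓝 0) := by
  have := kap_continuous.tendsto 1
  rw [show kap 1 = 0 by simp [kap]] at this
  exact this.mono_left nhdsWithin_le_nhds

theorem kap_hasDerivAt {s : ℝ} (hs : s < 1) : HasDerivAt kap (-1 / (4 * kap s ^ 3)) s := by
  have hk := kap_pos hs
  have h0 : HasDerivAt (fun s : ℝ => 1 - s) (-1) s := by simpa using (hasDerivAt_id s).const_sub 1
  have h1 := h0.sqrt (by linarith)
  have h2 := h1.sqrt (Real.sqrt_pos.2 (by linarith)).ne'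
  refine h2.congr_deriv ?_
  change -1 / (2 * √(1 - s)) / (2 * kap s) = _
  rw [← kap_sq]
  field_simp
  norm_num

/-- A second derivative bounded below by `c / (1 - s)` is incompatible with being `o(1 - s)`. -/
theorem no_log {a a' a'' : ℝ → ℝ} {s0 c : ℝ} (h01 : s0 < 1) (hc : 0 < c)
    (h1 : ∀ s ∈ Ico s0 1, HasDerivAt a (a' s) s)
    (h2 : ∀ s ∈ Ico s0 1, HasDerivAt a' (a'' s) s) (hb : ∀ s ∈ Ico s0 1, c / (1 - s) ≤ a'' s)
    (hl : Tendsto (fun s => a s / (1 - s)) (𝓝[<] 1) (𝓝 0)) : False := by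
  have hneg : ∀ s ∈ Ico s0 1, a' s ≤ 0 := fun s hs => (convex_flat h1 h2 (fun s hs =>
    (div_nonneg hc.le (by linarith [hs.2])).trans (hb s hs)) hl hs).1
  have hd : ∀ s ∈ Ico s0 1, HasDerivAt (fun s => a' s + c * log (1 - s))
      (a'' s + c * (-1 / (1 - s))) s := fun s hs => by
    have h0 : HasDerivAt (fun s : ℝ => 1 - s) (-1) s := by simpa using (hasDerivAt_id s).const_sub 1
    exact (h2 s hs).fun_add ((h0.log (by linarith [hs.2])).const_mul c)
  have hmono : MonotoneOn (fun s => a' s + c * log (1 - s)) (Ico s0 1) := by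
    refine monotoneOn_of_deriv_nonneg (convex_Ico _ _)
      (fun s hs => (hd s hs).continuousAt.continuousWithinAt)
      (fun s hs => (hd s (interior_subset hs)).differentiableAt.differentiableWithinAt)
      fun s hs => ?_
    rw [(hd s (interior_subset hs)).deriv]
    have := hb s (interior_subset hs)
    rw [neg_div, mul_neg, mul_one_div]; linarith
  have ht : Tendsto (fun s : ℝ => c * log (1 - s)) (𝓝[<] 1) atBot := by
    refine Tendsto.const_mul_atBot hc (tendsto_log_nhdsGT_zero.comp ?_)
    refine tendsto_nhdsWithin_iff.2 ⟨?_, ?_⟩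
    · have : Continuous fun s : ℝ => 1 - s := by fun_prop
      have h := this.tendsto 1
      rw [sub_self] at h
      exact h.mono_left nhdsWithin_le_nhds
    · filter_upwards [self_mem_nhdsWithin] with s hs
      have : s < 1 := hs
      simpa using this
  have h3 := (tendsto_atBot.1 ht (a' s0 + c * log (1 - s0) - 1)).and (Ioo_mem_nhdsLT h01)
  obtain ⟨s, hs, hs'⟩ := h3.exists
  have h4 := hmono ⟨le_rfl, h01⟩ ⟨hs'.1.le, hs'.2⟩ hs'.1.le
  have := hneg s ⟨hs'.1.le, hs'.2⟩
  simp only at h4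
  linarith

/-- Let `(1 - s²) a'' = h` with `h` Hölder continuous up to `s = 1`, with exponent `1/4`. If `a` is
`o(1 - s)`, then `h` and `a'` are `O((1-s)^(1/4))` and `a` is `O((1-s)^(5/4))`: the limit of `h` at
`s = 1` vanishes, since otherwise `a` would contain a term `(1-s) log (1-s)` (`no_log`). -/
theorem scalar_decay {a a' h : ℝ → ℝ} {B : ℝ} (hB : 0 ≤ B)
    (h1 : ∀ s ∈ Ico (0 : ℝ) 1, HasDerivAt a (a' s) s)
    (h2 : ∀ s ∈ Ico (0 : ℝ) 1, HasDerivAt a' (h s / (1 - s ^ 2)) s)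
    (hh : ∀ s ∈ Ico (0 : ℝ) 1, ∀ r ∈ Ico s 1, |h s - h r| ≤ B * kap s)
    (hl : Tendsto (fun s => a s / (1 - s)) (𝓝[<] 1) (𝓝 0)) {s : ℝ} (hs : s ∈ Ico (0 : ℝ) 1) :
    |h s| ≤ B * kap s ∧ |a' s| ≤ 4 * B * kap s ∧ |a s| ≤ 4 * B * kap s ^ 5 := by
  have hcau : Cauchy (map h (𝓝[<] 1)) := by
    refine Metric.cauchy_iff.2 ⟨inferInstance, fun ε hε => ?_⟩
    have hk : Tendsto (fun s => B * kap s) (𝓝[<] 1) (𝓝 0) := by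
      simpa using kap_tendsto.const_mul B
    obtain ⟨s, hs1, hs2⟩ := ((hk.eventually (gt_mem_nhds (half_pos hε))).and
      (Ioo_mem_nhdsLT (show (0 : ℝ) < 1 by norm_num))).exists
    refine ⟨h '' Ico s 1, image_mem_map (Ico_mem_nhdsLT hs2.2), ?_⟩
    rintro _ ⟨u, hu, rfl⟩ _ ⟨v, hv, rfl⟩
    have e1 := hh s ⟨hs2.1.le, hs2.2⟩ u hu
    have e2 := hh s ⟨hs2.1.le, hs2.2⟩ v hv
    rw [Real.dist_eq]
    have : |h u - h v| ≤ |h s - h u| + |h s - h v| := by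
      have := abs_sub (h s - h v) (h s - h u)
      rw [show h s - h v - (h s - h u) = h u - h v by ring] at this
      linarith
    linarith
  obtain ⟨l, hlim⟩ := cauchy_map_iff_exists_tendsto.1 hcau
  have hb : ∀ s ∈ Ico (0 : ℝ) 1, |h s - l| ≤ B * kap s := fun s hs => by
    refine le_of_tendsto (tendsto_const_nhds.sub hlim).abs ?_
    filter_upwards [Ico_mem_nhdsLT hs.2] with r hr using hh s hs r hr
  have hden : ∀ s ∈ Ico (0 : ℝ) 1, 0 < 1 - s ^ 2 ∧ 1 - s ^ 2 ≤ 2 * (1 - s) ∧ 1 - s ≤ 1 - s ^ 2 :=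
    fun s hs => ⟨by nlinarith [hs.1, hs.2], by nlinarith [hs.1, hs.2], by nlinarith [hs.1, hs.2]⟩
  have hl0 : l = 0 := by
    rcases lt_trichotomy l 0 with hneg | h0 | hpos
    · exfalso
      obtain ⟨s0, hs0, hs0'⟩ := mem_nhdsLT_iff_exists_Ico_subset.1
        ((hlim.eventually (gt_mem_nhds (show l < l / 2 by linarith))).and
          (Ioo_mem_nhdsLT (show (0 : ℝ) < 1 by norm_num)))
      have hI : ∀ s ∈ Ico s0 1, s ∈ Ico (0 : ℝ) 1 := fun s hs => ⟨(hs0' hs).2.1.le, hs.2⟩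
      refine no_log (a := fun s => -a s) (a' := fun s => -a' s)
        (a'' := fun s => -(h s / (1 - s ^ 2))) hs0 (show 0 < -l / 4 by linarith)
        (fun s hs => (h1 s (hI s hs)).fun_neg) (fun s hs => (h2 s (hI s hs)).fun_neg)
        (fun s hs => ?_) (by simpa only [neg_div, neg_zero] using hl.neg)
      obtain ⟨d1, d2, -⟩ := hden s (hI s hs)
      have h3 : h s < l / 2 := (hs0' hs).1
      rw [← neg_div, div_le_div_iff₀ (by linarith [hs.2]) d1]
      nlinarith [hs.2]
    · exact h0
    · exfalso
      obtain ⟨s0, hs0, hs0'⟩ := mem_nhdsLT_iff_exists_Ico_subset.1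
        ((hlim.eventually (lt_mem_nhds (show l / 2 < l by linarith))).and
          (Ioo_mem_nhdsLT (show (0 : ℝ) < 1 by norm_num)))
      have hI : ∀ s ∈ Ico s0 1, s ∈ Ico (0 : ℝ) 1 := fun s hs => ⟨(hs0' hs).2.1.le, hs.2⟩
      refine no_log (a'' := fun s => h s / (1 - s ^ 2)) hs0 (show 0 < l / 4 by linarith)
        (fun s hs => h1 s (hI s hs)) (fun s hs => h2 s (hI s hs)) (fun s hs => ?_) hl
      obtain ⟨d1, d2, -⟩ := hden s (hI s hs)
      have h3 : l / 2 < h s := (hs0' hs).1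
      rw [div_le_div_iff₀ (by linarith [hs.2]) d1]
      nlinarith [hs.2]
  subst hl0
  simp only [sub_zero] at hb
  -- the barrier `q = b (1-s)^(5/4)` has `q'' = B (1-s)^(-3/4) ≥ |a''|`
  set b : ℝ := 16 / 5 * B with hbd
  have q1 : ∀ s ∈ Ico (0 : ℝ) 1, HasDerivAt (fun s => b * kap s ^ 5) (-(4 * B * kap s)) s :=
    fun s hs => by
      have hk := kap_pos hs.2
      refine (((kap_hasDerivAt hs.2).fun_pow 5).const_mul b).congr_deriv ?_
      rw [hbd]; field_simp; push_cast; ring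
  have q2 : ∀ s ∈ Ico (0 : ℝ) 1, HasDerivAt (fun s => -(4 * B * kap s)) (B / kap s ^ 3) s :=
    fun s hs => by
      have hk := kap_pos hs.2
      refine (((kap_hasDerivAt hs.2).const_mul (4 * B)).fun_neg).congr_deriv ?_
      field_simp
  have hbound : ∀ s ∈ Ico (0 : ℝ) 1, |h s / (1 - s ^ 2)| ≤ B / kap s ^ 3 := fun s hs => by
    obtain ⟨d1, -, d2⟩ := hden s hs
    have hk := kap_pos hs.2
    rw [abs_div, abs_of_pos d1, div_le_div_iff₀ d1 (by positivity)]
    calc |h s| * kap s ^ 3 ≤ B * kap s * kap s ^ 3 :=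
          mul_le_mul_of_nonneg_right (hb s hs) (by positivity)
      _ = B * kap s ^ 4 := by ring
      _ = B * (1 - s) := by rw [kap_four hs.2]
      _ ≤ B * (1 - s ^ 2) := mul_le_mul_of_nonneg_left d2 hB
  have hq : Tendsto (fun s => b * kap s ^ 5 / (1 - s)) (𝓝[<] 1) (𝓝 0) := by
    have : Tendsto (fun s => b * kap s) (𝓝[<] 1) (𝓝 0) := by simpa using kap_tendsto.const_mul b
    refine this.congr' ?_
    filter_upwards [self_mem_nhdsWithin] with s hs
    have hk := kap_pos hs
    rw [← kap_four hs]
    field_simp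
  have p1 := convex_flat (p := fun s => b * kap s ^ 5 + a s)
    (fun s hs => (q1 s hs).fun_add (h1 s hs)) (fun s hs => (q2 s hs).fun_add (h2 s hs))
    (fun s hs => by linarith [neg_le_of_abs_le (hbound s hs)])
    (by simpa only [add_div, add_zero] using hq.add hl) hs
  have p2 := convex_flat (p := fun s => b * kap s ^ 5 - a s)
    (fun s hs => (q1 s hs).fun_sub (h1 s hs)) (fun s hs => (q2 s hs).fun_sub (h2 s hs))
    (fun s hs => by linarith [le_of_abs_le (hbound s hs)])
    (by simpa only [sub_div, sub_zero] using hq.sub hl) hs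
  have hk5 : 0 ≤ B * kap s ^ 5 := mul_nonneg hB (pow_nonneg (kap_pos hs.2).le 5)
  have e : b * kap s ^ 5 = 16 / 5 * (B * kap s ^ 5) := by rw [hbd]; ring
  refine ⟨hb s hs, abs_le.2 ⟨by linarith [p2.1], by linarith [p1.1]⟩,
    abs_le.2 ⟨by linarith [p1.2], by linarith [p2.2]⟩⟩

/-! ### Integration over the annulus -/

/-- The closed annulus `1 ≤ |x| ≤ 2`; integrating degree-zero functions over it replaces
integration over the sphere. -/
def ann : Set E3 := {x | 1 ≤ ‖x‖ ∧ ‖x‖ ≤ 2}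

theorem ann_ne {x : E3} (hx : x ∈ ann) : x ≠ 0 := norm_pos_iff.1 (one_pos.trans_le hx.1)

theorem isCompact_ann : IsCompact ann := by
  refine (isCompact_closedBall (0 : E3) 2).of_isClosed_subset ?_ fun x hx => by simpa using hx.2
  exact (isClosed_le continuous_const continuous_norm).inter
    (isClosed_le continuous_norm continuous_const)

theorem ann_integrable {f : E3 → ℝ} (hf : ContinuousOn f {x | x ≠ 0}) :
    IntegrableOn f ann volume :=
  (hf.mono fun _ hx => ann_ne hx).integrableOn_compact isCompact_ann

theorem ann_rot (R : E3 ≃ₗᵢ[ℝ] E3) (f : E3 → ℝ) :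
    ∫ x in ann, f (R x) = ∫ x in ann, f x := by
  have h := R.measurePreserving.setIntegral_preimage_emb R.toHomeomorph.measurableEmbedding f ann
  have e : R ⁻¹' ann = ann := by ext x; simp [ann]
  rw [e] at h
  exact h

/-- The inner product of the restrictions to the annulus. -/
def ip (a b : E3 → ℝ) : ℝ := ∫ x in ann, a x * b x

theorem rot_smooth_on {a : E3 → ℝ} (ha : SmoothOnSphere a) (k : Fin 3) :
    ContDiffOn ℝ (⊤ : ℕ∞) (fun q : ℝ × E3 => a (rot k q.1 q.2)) {q | q.2 ≠ 0} :=
  ha.2.comp (contDiff_rot k).contDiffOn fun q hq => by simpa using hq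

theorem isOpen_snd_ne : IsOpen {q : ℝ × E3 | q.2 ≠ 0} := isOpen_ne.preimage continuous_snd

theorem prod_ann_subset (U : Set ℝ) : U ×ˢ ann ⊆ {q : ℝ × E3 | q.2 ≠ 0} :=
  fun _ hq => ann_ne hq.2

theorem ip_lapS {a b : E3 → ℝ} (ha : SmoothOnSphere a) (hb : SmoothOnSphere b) :
    ip (lapS a) b = ∑ k, deriv (deriv fun β => ∫ x in ann, b x * a (rot k β x)) 0 := by
  have hbi := ann_integrable hb.2.continuousOn
  have h1 : ∀ k, deriv (deriv fun β => ∫ x in ann, b x * a (rot k β x)) 0 =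
      ∫ x in ann, b x * deriv (deriv fun β => a (rot k β x)) 0 := fun k =>
    param_deriv_deriv (μ := volume) (K := fun q : ℝ × E3 => a (rot k q.1 q.2)) isCompact_ann hbi
      isOpen_univ isOpen_snd_ne (prod_ann_subset _) (rot_smooth_on ha k) (mem_univ _)
  have hint : ∀ k, IntegrableOn (fun x => b x * deriv (deriv fun β => a (rot k β x)) 0)
      ann volume := by
    intro k
    have hK := rot_smooth_on ha k
    have hK1 := dir_contDiffOn isOpen_snd_ne hK (1, 0)
    have hK2 := dir_contDiffOn isOpen_snd_ne hK1 (1, 0)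
    refine ann_integrable (hb.2.continuousOn.mul ?_)
    refine ((hK2.continuousOn.comp (f := fun x : E3 => ((0 : ℝ), x)) (s := {x | x ≠ 0})
      (by fun_prop) fun x hx => hx)).congr fun x hx => ?_
    have e : deriv (fun β => a (rot k β x)) = fun s => dir (1, 0)
        (fun q : ℝ × E3 => a (rot k q.1 q.2)) (s, x) :=
      funext fun s => (dir_one_eq_deriv (s := s) (a := x) isOpen_snd_ne hK hx).deriv
    simp only [e]
    exact (dir_one_eq_deriv (s := 0) (a := x) isOpen_snd_ne hK1 hx).deriv
  simp only [h1]
  rw [← integral_finsetSum _ fun k _ => hint k, ip]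
  refine setIntegral_congr_fun isCompact_ann.measurableSet fun x hx => ?_
  rw [← rot_sum_lapS ha (ann_ne hx), Finset.sum_mul]
  exact Finset.sum_congr rfl fun k _ => mul_comm _ _

/-- The Laplace–Beltrami operator is symmetric, by invariance of the integral under rotations. -/
theorem ip_lapS_symm {a b : E3 → ℝ} (ha : SmoothOnSphere a) (hb : SmoothOnSphere b) :
    ip (lapS a) b = ip (lapS b) a := by
  rw [ip_lapS ha hb, ip_lapS hb ha]
  refine Finset.sum_congr rfl fun k _ => ?_
  have h : (fun β => ∫ x in ann, b x * a (rot k β x)) =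
      fun β => (fun η => ∫ x in ann, a x * b (rot k η x)) (-β) := by
    ext β
    simp only
    rw [← ann_rot (rot k β) fun x => a x * b (rot k (-β) x)]
    refine integral_congr_ae (Eventually.of_forall fun x => ?_)
    simp only [rot_neg, mul_comm]
  rw [h]
  generalize (fun η => ∫ x in ann, a x * b (rot k η x)) = G
  have e : deriv (fun β => G (-β)) = fun β => -(deriv G (-β)) := funext fun β => deriv_comp_neg _ _
  rw [e, deriv.fun_neg, deriv_comp_neg]
  simp

theorem ip_lapS_nonpos {a : E3 → ℝ} (ha : SmoothOnSphere a) : ip (lapS a) a ≤ 0 := by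
  rw [ip_lapS ha ha]
  refine Finset.sum_nonpos fun k _ => ?_
  have hbi := ann_integrable ha.2.continuousOn
  refine second_deriv_nonpos_of_max ?_ fun β => ?_
  · rw [← contDiffOn_univ]
    exact param_contDiffOn (μ := volume) (K := fun q : ℝ × E3 => a (rot k q.1 q.2)) isCompact_ann
      hbi isOpen_univ isOpen_snd_ne (prod_ann_subset _) (rot_smooth_on ha k)
  · have ha2 : ContinuousOn (fun x => a (rot k β x)) {x | x ≠ 0} :=
      (smooth_comp_isometry ha (rot k β)).2.continuousOn
    have i1 : IntegrableOn (fun x => a x * a (rot k β x)) ann volume := ann_integrable (ha.2.continuousOn.mul ha2)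
    have i2 : IntegrableOn (fun x => a x ^ 2) ann volume := ann_integrable (ha.2.continuousOn.pow 2)
    have i3 : IntegrableOn (fun x => a (rot k β x) ^ 2) ann volume := ann_integrable (ha2.pow 2)
    have e0 : ∫ x in ann, a x * a (rot k 0 x) = ∫ x in ann, a x ^ 2 := by
      simp only [rot_zero, ← sq]
    have e1 : ∫ x in ann, a (rot k β x) ^ 2 = ∫ x in ann, a x ^ 2 :=
      ann_rot (rot k β) fun x => a x ^ 2
    rw [e0]
    have : ∫ x in ann, a x * a (rot k β x) ≤
        ∫ x in ann, ((1 / 2) * a x ^ 2 + (1 / 2) * a (rot k β x) ^ 2) :=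
      integral_mono i1 ((i2.const_mul _).add (i3.const_mul _)) fun x => by
        simp only; nlinarith [sq_nonneg (a x - a (rot k β x))]
    rw [integral_add (i2.const_mul _) (i3.const_mul _), integral_const_mul, integral_const_mul,
      e1] at this
    linarith

/-! ### Energy for the reduced equation -/

/-- A family of smooth functions on the sphere depending smoothly on `s ∈ (-1, 1)`. -/
structure Fam (g : ℝ → E3 → ℝ) : Prop where
  smooth : ContDiffOn ℝ (⊤ : ℕ∞) (fun p : ℝ × E3 => g p.1 p.2) Cyl
  homog : ∀ s, |s| < 1 → HomogZero (g s)

/-- The derivative of a family with respect to the parameter. -/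
def dt (g : ℝ → E3 → ℝ) (s : ℝ) (x : E3) : ℝ := deriv (fun σ => g σ x) s

/-- The Laplace–Beltrami operator applied to each member of a family. -/
def lapF (g : ℝ → E3 → ℝ) (s : ℝ) : E3 → ℝ := lapS (g s)

theorem Fam.slice {g : ℝ → E3 → ℝ} (hg : Fam g) {s : ℝ} (hs : |s| < 1) : SmoothOnSphere (g s) :=
  ⟨hg.homog s hs, smooth_slice hg.smooth fun _ hx => ⟨hs, hx⟩⟩

theorem Fam.dt_eq {g : ℝ → E3 → ℝ} (hg : Fam g) {p : ℝ × E3} (hp : p ∈ Cyl) :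
    dt g p.1 p.2 = dir (1, 0) (fun p : ℝ × E3 => g p.1 p.2) p :=
  (dir_one_eq_deriv (s := p.1) (a := p.2) isOpen_Cyl hg.smooth hp).deriv

theorem Fam.hasDerivAt {g : ℝ → E3 → ℝ} (hg : Fam g) {s : ℝ} (hs : |s| < 1) {x : E3} (hx : x ≠ 0) :
    HasDerivAt (fun σ => g σ x) (dt g s x) s := by
  have h := dir_one_eq_deriv (s := s) (a := x) isOpen_Cyl hg.smooth ⟨hs, hx⟩
  exact h.congr_deriv h.deriv.symm

theorem Fam.dt {g : ℝ → E3 → ℝ} (hg : Fam g) : Fam (dt g) := by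
  refine ⟨(dir_contDiffOn isOpen_Cyl hg.smooth (1, 0)).congr fun p hp => hg.dt_eq hp,
    fun s hs c hc x => ?_⟩
  have : (fun σ => g σ (c • x)) =ᶠ[𝓝 s] fun σ => g σ x := by
    filter_upwards [isOpen_abs.mem_nhds hs] with σ hσ using hg.homog σ hσ c hc x
  exact this.deriv_eq

theorem pd_slice {F : ℝ × E3 → ℝ} (hF : ContDiffOn ℝ (⊤ : ℕ∞) F Cyl) (i : Fin 3) {s : ℝ}
    (hs : |s| < 1) {x : E3} (hx : x ≠ 0) :
    pd i (fun y => F (s, y)) x = dir (0, bv i) F (s, x) := by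
  have h1 := (diff_at isOpen_Cyl hF (p := (s, x)) ⟨hs, hx⟩).hasFDerivAt
  have h2 : HasFDerivAt (fun y : E3 => (s, y)) (ContinuousLinearMap.inr ℝ ℝ E3) x :=
    hasFDerivAt_prodMk_right s x
  have h3 := (h1.comp x h2).fderiv
  change fderiv ℝ (F ∘ fun y => (s, y)) x (bv i) = _
  rw [h3]
  simp [dir]

theorem lap3_slice {F : ℝ × E3 → ℝ} (hF : ContDiffOn ℝ (⊤ : ℕ∞) F Cyl) {s : ℝ}
    (hs : |s| < 1) {x : E3} (hx : x ≠ 0) :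
    lap3 (fun y => F (s, y)) x = ∑ i, dir (0, bv i) (dir (0, bv i) F) (s, x) := by
  refine Finset.sum_congr rfl fun i _ => ?_
  rw [← pd_slice (dir_contDiffOn isOpen_Cyl hF _) i hs hx]
  have : pd i (fun y => F (s, y)) =ᶠ[𝓝 x] fun y => dir (0, bv i) F (s, y) := by
    filter_upwards [isOpen_ne.mem_nhds hx] with y hy using pd_slice hF i hs hy
  simp only [pd]
  rw [this.fderiv_eq]

theorem Fam.lapF {g : ℝ → E3 → ℝ} (hg : Fam g) : Fam (lapF g) := by
  refine ⟨?_, fun s hs => (lapS_smooth (hg.slice hs)).1⟩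
  have h : ∀ p ∈ Cyl, ExtHom.lapF g p.1 p.2 = ‖p.2‖ ^ 2 *
      ∑ i, dir (0, bv i) (dir (0, bv i) fun p : ℝ × E3 => g p.1 p.2) p := fun p hp => by
    rw [ExtHom.lapF, lapS, ← lap3_slice hg.smooth hp.1 hp.2]
  refine ContDiffOn.congr ?_ h
  refine ContDiffOn.mul ((contDiffOn_snd.norm_sq ℝ)) (ContDiffOn.sum fun i _ => ?_)
  exact dir_contDiffOn isOpen_Cyl (dir_contDiffOn isOpen_Cyl hg.smooth _) _

theorem Fam.lapF_dt {g : ℝ → E3 → ℝ} (hg : Fam g) {s : ℝ} (hs : |s| < 1) {x : E3} (hx : x ≠ 0) :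
    ExtHom.lapF (ExtHom.dt g) s x = ExtHom.dt (ExtHom.lapF g) s x := by
  set G : ℝ × E3 → ℝ := fun p => g p.1 p.2 with hG
  have hGs : ContDiffOn ℝ (⊤ : ℕ∞) G Cyl := hg.smooth
  have hp : (s, x) ∈ Cyl := ⟨hs, hx⟩
  have d1 := fun v => dir_contDiffOn isOpen_Cyl hGs v
  have d2 := fun v w => dir_contDiffOn isOpen_Cyl (d1 v) w
  have e1 : ExtHom.lapF (ExtHom.dt g) s x = ‖x‖ ^ 2 *
      ∑ i, dir (0, bv i) (dir (0, bv i) (dir (1, 0) G)) (s, x) := by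
    rw [ExtHom.lapF, lapS, ← lap3_slice (d1 _) hs hx]
    congr 1
    refine Finset.sum_congr rfl fun i _ => ?_
    refine dir_congr isOpen_ne (fun y hy => ?_) hx _
    exact dir_congr isOpen_ne (fun z hz => hg.dt_eq (p := (s, z)) ⟨hs, hz⟩) hy _
  have e2 : HasDerivAt (fun σ => ExtHom.lapF g σ x) (‖x‖ ^ 2 *
      ∑ i, dir (1, 0) (dir (0, bv i) (dir (0, bv i) G)) (s, x)) s := by
    have h := (HasDerivAt.fun_sum (u := Finset.univ) fun i _ =>
      dir_one_eq_deriv (s := s) (a := x) isOpen_Cyl (d2 (0, bv i) (0, bv i)) hp).const_mul (‖x‖ ^ 2)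
    refine h.congr_of_eventuallyEq ?_
    filter_upwards [isOpen_abs.mem_nhds hs] with σ hσ
    rw [ExtHom.lapF, lapS, ← lap3_slice hGs hσ hx]
  rw [e1]
  refine Eq.trans ?_ e2.deriv.symm
  congr 1
  refine Finset.sum_congr rfl fun i _ => ?_
  rw [dir_comm isOpen_Cyl (d1 _) hp (1, 0)]
  exact dir_congr isOpen_Cyl (fun q hq => dir_comm isOpen_Cyl hGs hq _ _) hp _

/-- Families solving the conformally reduced wave equation `(1 - s²) ∂ₛ² g = Δ_ω g`. -/
structure IsSol (g : ℝ → E3 → ℝ) : Prop extends Fam g where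
  ode : ∀ s, |s| < 1 → ∀ x, x ≠ 0 → (1 - s ^ 2) * dt (dt g) s x = lapS (g s) x

theorem one_sub_sq_pos {s : ℝ} (hs : |s| < 1) : 0 < 1 - s ^ 2 := by
  have : |s| ^ 2 < 1 := pow_lt_one₀ (abs_nonneg _) hs two_ne_zero
  rw [sq_abs] at this; linarith

theorem lapS_congr {f g : E3 → ℝ} (h : ∀ y, y ≠ 0 → f y = g y) {x : E3} (hx : x ≠ 0) :
    lapS f x = lapS g x := by
  rw [lapS, lapS]
  congr 1
  refine Finset.sum_congr rfl fun i _ => ?_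
  exact dir_congr isOpen_ne (fun y hy => dir_congr isOpen_ne (fun z hz => h z hz) hy _) hx _

theorem lapS_const_mul {f : E3 → ℝ} (hf : SmoothOnSphere f) (a : ℝ) {x : E3} (hx : x ≠ 0) :
    lapS (fun x => a * f x) x = a * lapS f x := by
  have hz : SmoothOnSphere (fun _ => 0) := ⟨fun _ _ _ => rfl, contDiffOn_const⟩
  have h1 := lapS_lin hf hz a hx
  have h0 := lapS_lin hz hz 1 hx
  simp only [mul_zero, one_mul, add_zero] at h1 h0
  linarith

theorem IsSol.lapF {g : ℝ → E3 → ℝ} (hg : IsSol g) : IsSol (lapF g) := by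
  refine ⟨hg.toFam.lapF, fun s hs x hx => ?_⟩
  have h0 := one_sub_sq_pos hs
  have e : dt (dt (ExtHom.lapF g)) s x = dt (ExtHom.lapF (dt g)) s x := by
    have : (fun σ => dt (ExtHom.lapF g) σ x) =ᶠ[𝓝 s] fun σ => ExtHom.lapF (dt g) σ x := by
      filter_upwards [isOpen_abs.mem_nhds hs] with σ hσ using (hg.lapF_dt hσ hx).symm
    exact this.deriv_eq
  rw [e, ← hg.toFam.dt.lapF_dt hs hx]
  have h1 : lapS (dt (dt g) s) x = lapS (fun y => (1 - s ^ 2)⁻¹ * ExtHom.lapF g s y) x := by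
    refine lapS_congr (fun y hy => ?_) hx
    rw [ExtHom.lapF, ← hg.ode s hs y hy, inv_mul_cancel_left₀ h0.ne']
  rw [ExtHom.lapF, h1, lapS_const_mul (hg.toFam.lapF.slice hs) _ hx, mul_inv_cancel_left₀ h0.ne']

theorem cyl_integrable {g : ℝ → E3 → ℝ}
    (hg : ContDiffOn ℝ (⊤ : ℕ∞) (fun p : ℝ × E3 => g p.1 p.2) Cyl) {s : ℝ} (hs : |s| < 1) :
    IntegrableOn (g s) ann volume :=
  ann_integrable (smooth_slice hg (U := {x | x ≠ 0}) fun _ hx => ⟨hs, hx⟩).continuousOn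

theorem one_int_ann : IntegrableOn (fun _ : E3 => (1 : ℝ)) ann volume :=
  ann_integrable continuousOn_const

theorem ann_hasDerivAt {g g' : ℝ → E3 → ℝ}
    (hg : ContDiffOn ℝ (⊤ : ℕ∞) (fun p : ℝ × E3 => g p.1 p.2) Cyl) {s : ℝ} (hs : |s| < 1)
    (h : ∀ x, x ≠ 0 → HasDerivAt (fun σ => g σ x) (g' s x) s) :
    HasDerivAt (fun s => ∫ x in ann, g s x) (∫ x in ann, g' s x) s := by
  have h1 := param_hasDerivAt (μ := (volume : Measure E3)) (K := fun p : ℝ × E3 => g p.1 p.2)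
    isCompact_ann one_int_ann isOpen_abs isOpen_Cyl (fun q hq => ⟨hq.1, ann_ne hq.2⟩) hg hs
  simp only [one_mul] at h1
  refine h1.congr_deriv (setIntegral_congr_fun isCompact_ann.measurableSet fun x hx => ?_)
  exact (dir_one_eq_deriv (s := s) (a := x) isOpen_Cyl hg ⟨hs, ann_ne hx⟩).unique (h x (ann_ne hx))

/-- The kinetic part of the energy. -/
def kin (g : ℝ → E3 → ℝ) (s : ℝ) : ℝ := ip (dt g s) (dt g s)

/-- Minus the potential part of the energy. -/
def pot (g : ℝ → E3 → ℝ) (s : ℝ) : ℝ := ip (lapS (g s)) (g s)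

theorem kin_nonneg (g : ℝ → E3 → ℝ) (s : ℝ) : 0 ≤ kin g s :=
  integral_nonneg fun _ => mul_self_nonneg _

theorem ip_hasDerivAt {a b : ℝ → E3 → ℝ} (ha : Fam a) (hb : Fam b) {s : ℝ} (hs : |s| < 1) :
    HasDerivAt (fun s => ip (a s) (b s)) (ip (dt a s) (b s) + ip (a s) (dt b s)) s := by
  have h := ann_hasDerivAt (g := fun s x => a s x * b s x)
    (g' := fun s x => dt a s x * b s x + a s x * dt b s x) (ha.smooth.mul hb.smooth) hs
    fun x hx => (ha.hasDerivAt hs hx).fun_mul (hb.hasDerivAt hs hx)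
  refine h.congr_deriv ?_
  exact integral_add (cyl_integrable (g := fun s x => dt a s x * b s x)
      (ha.dt.smooth.mul hb.smooth) hs)
    (cyl_integrable (g := fun s x => a s x * dt b s x) (ha.smooth.mul hb.dt.smooth) hs)

theorem ip_comm (a b : E3 → ℝ) : ip a b = ip b a := by simp only [ip, mul_comm]

theorem ip_congr {a b a' : E3 → ℝ} (h : ∀ x, x ≠ 0 → a x = a' x) : ip a b = ip a' b :=
  setIntegral_congr_fun isCompact_ann.measurableSet fun x hx => by
    simp only [h x (ann_ne hx)]

theorem IsSol.kin_hasDerivAt {g : ℝ → E3 → ℝ} (hg : IsSol g) {s : ℝ} (hs : |s| < 1) :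
    HasDerivAt (kin g) (2 * ip (lapS (g s)) (dt g s) / (1 - s ^ 2)) s := by
  have h0 := one_sub_sq_pos hs
  refine (ip_hasDerivAt hg.toFam.dt hg.toFam.dt hs).congr_deriv ?_
  rw [ip_comm (dt g s), ← two_mul, mul_div_assoc]
  congr 1
  rw [eq_div_iff h0.ne', mul_comm, ip, ip, ← integral_const_mul]
  refine setIntegral_congr_fun isCompact_ann.measurableSet fun x hx => ?_
  simp only [← hg.ode s hs x (ann_ne hx), mul_assoc]

theorem IsSol.pot_hasDerivAt {g : ℝ → E3 → ℝ} (hg : IsSol g) {s : ℝ} (hs : |s| < 1) :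
    HasDerivAt (pot g) (2 * ip (lapS (g s)) (dt g s)) s := by
  refine (ip_hasDerivAt hg.toFam.lapF hg.toFam hs).congr_deriv ?_
  rw [ip_congr fun x hx => (hg.lapF_dt hs hx).symm]
  change ip (lapS (dt g s)) (g s) + ip (lapS (g s)) (dt g s) = _
  rw [ip_lapS_symm (hg.toFam.dt.slice hs) (hg.slice hs)]
  ring

/-- The energy `(1 - s²) ∫ g_s² - ∫ g Δ g`. -/
def en (g : ℝ → E3 → ℝ) (s : ℝ) : ℝ := (1 - s ^ 2) * kin g s - pot g s

theorem IsSol.en_hasDerivAt {g : ℝ → E3 → ℝ} (hg : IsSol g) {s : ℝ} (hs : |s| < 1) :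
    HasDerivAt (en g) (-2 * s * kin g s) s := by
  have h0 := one_sub_sq_pos hs
  have h1 : HasDerivAt (fun s : ℝ => 1 - s ^ 2) (-(2 * s)) s := by
    simpa using (hasDerivAt_pow 2 s).const_sub 1
  refine ((h1.fun_mul (hg.kin_hasDerivAt hs)).fun_sub (hg.pot_hasDerivAt hs)).congr_deriv ?_
  rw [mul_div_cancel₀ _ h0.ne']
  ring

theorem IsSol.en_nonneg {g : ℝ → E3 → ℝ} (hg : IsSol g) {s : ℝ} (hs : |s| < 1) : 0 ≤ en g s := by
  have h1 := mul_nonneg (one_sub_sq_pos hs).le (kin_nonneg g s)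
  have h2 := ip_lapS_nonpos (hg.slice hs)
  simp only [en, pot]
  linarith

theorem abs_lt_one_of_Ico {s : ℝ} (hs : s ∈ Ico (0 : ℝ) 1) : |s| < 1 :=
  abs_lt.2 ⟨by linarith [hs.1], hs.2⟩

/-- The energy is nonincreasing forwards, which bounds the kinetic part. -/
theorem IsSol.kin_le {g : ℝ → E3 → ℝ} (hg : IsSol g) {s : ℝ} (hs : s ∈ Ico (0 : ℝ) 1) :
    (1 - s) * kin g s ≤ en g 0 := by
  have hanti : AntitoneOn (en g) (Ico 0 1) := by
    refine antitoneOn_of_deriv_nonpos (convex_Ico _ _)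
      (fun s hs => (hg.en_hasDerivAt (abs_lt_one_of_Ico hs)).continuousAt.continuousWithinAt)
      (fun s hs => (hg.en_hasDerivAt (abs_lt_one_of_Ico
        (interior_subset hs))).differentiableAt.differentiableWithinAt) fun s hs => ?_
    have hs' := interior_subset hs
    rw [(hg.en_hasDerivAt (abs_lt_one_of_Ico hs')).deriv]
    have := mul_nonneg hs'.1 (kin_nonneg g s)
    linarith
  have h1 := hanti ⟨le_rfl, one_pos⟩ hs hs.1
  have h2 := ip_lapS_nonpos (hg.slice (abs_lt_one_of_Ico hs))
  have h3 := kin_nonneg g s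
  have h4 : (1 - s) * kin g s ≤ (1 - s ^ 2) * kin g s :=
    mul_le_mul_of_nonneg_right (by nlinarith [hs.1, hs.2]) h3
  simp only [en, pot] at h1
  rw [en, pot]
  linarith

/-! ### Hölder bounds along rays -/

/-- A one-dimensional weighted Hölder estimate: a bound on `∫ √(1 - s) u'²` controls the modulus
of continuity of `u` up to `s = 1`. -/
theorem holder_scalar {u u' : ℝ → ℝ} (h1 : ∀ s ∈ Ico (0 : ℝ) 1, HasDerivAt u (u' s) s)
    (h2 : ContinuousOn u' (Ico 0 1))
    (hD : ∫⁻ s in Ico (0 : ℝ) 1, ENNReal.ofReal (√(1 - s) * u' s ^ 2) ≠ ⊤) :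
    ∀ s ∈ Ico (0 : ℝ) 1, ∀ r ∈ Ico s 1, |u s - u r| ≤
      3 / 2 * √(1 + (∫⁻ s in Ico (0 : ℝ) 1, ENNReal.ofReal (√(1 - s) * u' s ^ 2)).toReal) *
        kap s := by
  intro s hs r hr
  set D := ∫⁻ s in Ico (0 : ℝ) 1, ENNReal.ofReal (√(1 - s) * u' s ^ 2) with hDdef
  set d := D.toReal with hd
  set B := √(1 + d) with hB
  have hd0 : 0 ≤ d := ENNReal.toReal_nonneg
  have hB2 : B ^ 2 = 1 + d := Real.sq_sqrt (by linarith)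
  have hB0 : 0 < B := Real.sqrt_pos.2 (by linarith)
  have hk := kap_pos hs.2
  have hsub : Icc s r ⊆ Ico (0 : ℝ) 1 := fun y hy => ⟨hs.1.trans hy.1, hy.2.trans_lt hr.2⟩
  have hu : uIcc s r = Icc s r := uIcc_of_le hr.1
  have c1 : ContinuousOn u' (uIcc s r) := hu ▸ h2.mono hsub
  have c2 : ContinuousOn (fun σ => √(1 - σ) * u' σ ^ 2) (uIcc s r) :=
    (by fun_prop : Continuous fun σ : ℝ => √(1 - σ)).continuousOn.mul (c1.pow 2)
  have c3 : ContinuousOn (fun σ : ℝ => 1 / √(1 - σ)) (uIcc s r) := by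
    refine continuousOn_const.div (by fun_prop) fun σ hσ => ?_
    rw [hu] at hσ
    exact (Real.sqrt_pos.2 (by linarith [hσ.2, hr.2])).ne'
  have i1 : ∫ σ in s..r, √(1 - σ) * u' σ ^ 2 ≤ d := by
    rw [intervalIntegral.integral_of_le hr.1, hd, ← ENNReal.ofReal_le_iff_le_toReal hD]
    have hi : IntegrableOn (fun σ => √(1 - σ) * u' σ ^ 2) (Ioc s r) volume :=
      (intervalIntegrable_iff_integrableOn_Ioc_of_le hr.1).1 c2.intervalIntegrable
    rw [ofReal_integral_eq_lintegral_ofReal hi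
      (Eventually.of_forall fun σ => mul_nonneg (Real.sqrt_nonneg _) (sq_nonneg _))]
    exact lintegral_mono_set (Ioc_subset_Icc_self.trans hsub)
  have i2 : ∫ σ in s..r, 1 / √(1 - σ) ≤ 2 * √(1 - s) := by
    have : ∫ σ in s..r, 1 / √(1 - σ) = -2 * √(1 - r) - -2 * √(1 - s) := by
      refine intervalIntegral.integral_eq_sub_of_hasDerivAt (f := fun σ => -2 * √(1 - σ))
        (fun σ hσ => ?_) c3.intervalIntegrable
      rw [hu] at hσ
      have h0 : 0 < 1 - σ := by linarith [hσ.2, hr.2]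
      have := (((hasDerivAt_id σ).const_sub 1).sqrt h0.ne').const_mul (-2)
      refine this.congr_deriv ?_
      simp only [id]
      ring
    rw [this]
    linarith [Real.sqrt_nonneg (1 - r)]
  have e : u s - u r = -∫ σ in s..r, u' σ := by
    rw [intervalIntegral.integral_eq_sub_of_hasDerivAt (f := u) (fun σ hσ => h1 σ (hsub (hu ▸ hσ)))
      c1.intervalIntegrable]
    ring
  have i3 : ‖∫ σ in s..r, u' σ‖ ≤ ∫ σ in s..r,
      (kap s / B / 2 * (√(1 - σ) * u' σ ^ 2) + B / kap s / 2 * (1 / √(1 - σ))) := by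
    refine intervalIntegral.norm_integral_le_of_norm_le hr.1
      (Eventually.of_forall fun σ hσ => ?_)
      ((c2.intervalIntegrable.const_mul _).add (c3.intervalIntegrable.const_mul _))
    have hq : 0 < √(1 - σ) := Real.sqrt_pos.2 (by linarith [hσ.2, hr.2])
    rw [Real.norm_eq_abs]
    -- weighted arithmetic-geometric mean inequality
    have key := sq_nonneg (kap s * √(1 - σ) * |u' σ| - B)
    have : kap s / B / 2 * (√(1 - σ) * u' σ ^ 2) + B / kap s / 2 * (1 / √(1 - σ)) - |u' σ| =
        (kap s * √(1 - σ) * |u' σ| - B) ^ 2 / (2 * B * kap s * √(1 - σ)) := by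
      rw [← sq_abs (u' σ)]
      field_simp
      ring
    have : 0 ≤ (kap s * √(1 - σ) * |u' σ| - B) ^ 2 / (2 * B * kap s * √(1 - σ)) := by positivity
    linarith
  rw [intervalIntegral.integral_add (c2.intervalIntegrable.const_mul _)
    (c3.intervalIntegrable.const_mul _), intervalIntegral.integral_const_mul,
    intervalIntegral.integral_const_mul] at i3
  rw [e, abs_neg, ← Real.norm_eq_abs]
  rw [← kap_sq] at i2
  calc _ ≤ _ := i3
    _ ≤ kap s / B / 2 * B ^ 2 + B / kap s / 2 * (2 * kap s ^ 2) := by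
        gcongr
        linarith
    _ = 3 / 2 * B * kap s := by field_simp; ring

theorem Ico_prod_ann_subset : Ico (0 : ℝ) 1 ×ˢ ann ⊆ Cyl :=
  fun _ hp => ⟨abs_lt_one_of_Ico hp.1, ann_ne hp.2⟩

/-- Along almost every ray a solution is Hölder continuous up to `s = 1`, with a constant that is
square integrable over the annulus; this is Tonelli's theorem applied to the energy bound. -/
theorem IsSol.holder {g : ℝ → E3 → ℝ} (hg : IsSol g) :
    ∃ B : E3 → ℝ, (∀ x, 0 ≤ B x) ∧ IntegrableOn (fun x => B x ^ 2) ann volume ∧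
      ∀ᵐ x ∂volume.restrict ann, ∀ s ∈ Ico (0 : ℝ) 1, ∀ r ∈ Ico s 1,
        |g s x - g r x| ≤ B x * kap s := by
  set Φ : E3 × ℝ → ENNReal := fun p => ENNReal.ofReal (√(1 - p.2) * dt g p.2 p.1 ^ 2) with hΦ
  set μ := (volume : Measure E3).restrict ann with hμ
  set ν := (volume : Measure ℝ).restrict (Ico 0 1) with hν
  have hcont : ContinuousOn (fun p : E3 × ℝ => √(1 - p.2) * dt g p.2 p.1 ^ 2)
      (ann ×ˢ Ico (0 : ℝ) 1) := by
    refine (by fun_prop : Continuous fun p : E3 × ℝ => √(1 - p.2)).continuousOn.mul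
      (ContinuousOn.pow ?_ 2)
    exact hg.toFam.dt.smooth.continuousOn.comp (f := fun p : E3 × ℝ => (p.2, p.1))
      (by fun_prop) fun p hp => Ico_prod_ann_subset ⟨hp.2, hp.1⟩
  have hmeas : AEMeasurable Φ (μ.prod ν) := by
    rw [hμ, hν, Measure.prod_restrict]
    exact (hcont.aemeasurable (isCompact_ann.measurableSet.prod measurableSet_Ico)).ennreal_ofReal
  set D : E3 → ENNReal := fun x => ∫⁻ s, Φ (x, s) ∂ν with hDdef
  have hDm : AEMeasurable D μ := hmeas.lintegral_prod_right'
  have hfin : ∫⁻ x, D x ∂μ ≠ ⊤ := by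
    have sw : ∫⁻ x, D x ∂μ = ∫⁻ s, ∫⁻ x, Φ (x, s) ∂μ ∂ν := lintegral_lintegral_swap hmeas
    rw [sw]
    have hb : ∀ s ∈ Ico (0 : ℝ) 1, ∫⁻ x, Φ (x, s) ∂μ ≤
        ENNReal.ofReal (en g 0 * (1 / √(1 - s))) := by
      intro s hs
      have i1 : Integrable (fun x => √(1 - s) * dt g s x ^ 2) μ := by
        simp only [sq]
        exact Integrable.const_mul (cyl_integrable (g := fun s x => dt g s x * dt g s x)
          (hg.toFam.dt.smooth.mul hg.toFam.dt.smooth) (abs_lt_one_of_Ico hs)) _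
      rw [hΦ]
      simp only
      rw [← ofReal_integral_eq_lintegral_ofReal i1
        (Eventually.of_forall fun σ => mul_nonneg (Real.sqrt_nonneg _) (sq_nonneg _))]
      refine ENNReal.ofReal_le_ofReal ?_
      have e : ∫ x, √(1 - s) * dt g s x ^ 2 ∂μ = √(1 - s) * kin g s := by
        rw [integral_const_mul]
        simp only [sq, kin, ip, hμ]
      have hq : 0 < √(1 - s) := Real.sqrt_pos.2 (by linarith [hs.2])
      have hq2 : √(1 - s) ^ 2 = 1 - s := Real.sq_sqrt (by linarith [hs.2])
      rw [e, mul_one_div, le_div_iff₀ hq]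
      have := hg.kin_le hs
      rw [← hq2] at this
      linarith
    have i2 : IntegrableOn (fun s : ℝ => en g 0 * (1 / √(1 - s))) (Ico 0 1) volume := by
      refine Integrable.const_mul ?_ _
      have h1 : IntervalIntegrable (fun x : ℝ => x ^ (-(1 / 2) : ℝ)) volume 0 1 :=
        intervalIntegral.intervalIntegrable_rpow' (by norm_num)
      have h2 := (h1.comp_sub_left 1).symm
      simp only [sub_zero, sub_self] at h2
      rw [intervalIntegrable_iff_integrableOn_Ico_of_le zero_le_one] at h2
      refine h2.congr_fun (fun s hs => ?_) measurableSet_Ico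
      simp only
      rw [Real.rpow_neg (by linarith [hs.2]), ← Real.sqrt_eq_rpow, one_div]
    refine ne_top_of_le_ne_top ?_ (setLIntegral_mono' measurableSet_Ico hb)
    exact i2.lintegral_lt_top.ne
  have hDae := ae_lt_top' hDm hfin
  refine ⟨fun x => 3 / 2 * √(1 + (D x).toReal), fun x => by positivity, ?_, ?_⟩
  · have h1 : Integrable (fun x => 9 / 4 * (1 + (D x).toReal)) μ :=
      (one_int_ann.add (integrable_toReal_of_lintegral_ne_top hDm hfin)).const_mul _
    refine Integrable.congr h1 (Eventually.of_forall fun x => ?_)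
    have : √(1 + (D x).toReal) ^ 2 = 1 + (D x).toReal :=
      Real.sq_sqrt (by linarith [ENNReal.toReal_nonneg (a := D x)])
    simp only
    rw [mul_pow, this]
    norm_num
  · filter_upwards [hDae, ae_restrict_mem isCompact_ann.measurableSet] with x hx hxa
    refine holder_scalar (u := fun s => g s x) (u' := fun s => dt g s x)
      (fun s hs => hg.toFam.hasDerivAt (abs_lt_one_of_Ico hs) (ann_ne hxa)) ?_ hx.ne
    exact hg.toFam.dt.smooth.continuousOn.comp (f := fun s : ℝ => (s, x)) (by fun_prop)
      fun s hs => Ico_prod_ann_subset ⟨hs, hxa⟩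

/-! ### Vanishing of flat solutions -/

/-- A solution that is `o(1 - s)` along every ray has vanishing energy on `[0, 1)`: the energy
bounds of the scalar argument force `en g s / (1 - s²) → 0`, and this quotient is nonnegative and
nondecreasing. -/
theorem IsSol.en_eq_zero {g : ℝ → E3 → ℝ} (hg : IsSol g)
    (hl : ∀ x, x ≠ 0 → Tendsto (fun s => g s x / (1 - s)) (𝓝[<] 1) (𝓝 0)) {s : ℝ}
    (hs : s ∈ Ico (0 : ℝ) 1) : en g s = 0 := by
  obtain ⟨B, hB0, hBi, hB⟩ := hg.lapF.holder
  set C := ∫ x in ann, B x ^ 2 with hC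
  have hC0 : 0 ≤ C := integral_nonneg fun x => sq_nonneg _
  have key : ∀ᵐ x ∂volume.restrict ann, ∀ s ∈ Ico (0 : ℝ) 1,
      |ExtHom.lapF g s x| ≤ B x * kap s ∧ |dt g s x| ≤ 4 * B x * kap s ∧
        |g s x| ≤ 4 * B x * kap s ^ 5 := by
    filter_upwards [hB, ae_restrict_mem isCompact_ann.measurableSet] with x hx hxa s hs
    have hne := ann_ne hxa
    refine scalar_decay (a := fun s => g s x) (a' := fun s => dt g s x)
      (h := fun s => ExtHom.lapF g s x) (hB0 x)
      (fun s hs => hg.toFam.hasDerivAt (abs_lt_one_of_Ico hs) hne) (fun s hs => ?_) hx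
      (hl x hne) hs
    refine (hg.toFam.dt.hasDerivAt (abs_lt_one_of_Ico hs) hne).congr_deriv ?_
    rw [eq_div_iff (one_sub_sq_pos (abs_lt_one_of_Ico hs)).ne', mul_comm]
    exact hg.ode s (abs_lt_one_of_Ico hs) x hne
  have hkin : ∀ s ∈ Ico (0 : ℝ) 1, kin g s ≤ 16 * kap s ^ 2 * C := by
    intro s hs
    have i1 : IntegrableOn (fun x => dt g s x * dt g s x) ann volume :=
      cyl_integrable (g := fun s x => dt g s x * dt g s x)
        (hg.toFam.dt.smooth.mul hg.toFam.dt.smooth) (abs_lt_one_of_Ico hs)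
    rw [kin, ip, hC, ← integral_const_mul]
    refine integral_mono_ae i1 (hBi.const_mul _) ?_
    filter_upwards [key] with x hx
    have h := (hx s hs).2.1
    have := mul_le_mul h h (abs_nonneg _) ((abs_nonneg _).trans h)
    rw [abs_mul_abs_self] at this
    linarith
  have hpot : ∀ s ∈ Ico (0 : ℝ) 1, -pot g s ≤ 4 * kap s ^ 6 * C := by
    intro s hs
    have i1 : IntegrableOn (fun x => lapS (g s) x * g s x) ann volume :=
      cyl_integrable (g := fun s x => ExtHom.lapF g s x * g s x)
        (hg.toFam.lapF.smooth.mul hg.smooth) (abs_lt_one_of_Ico hs)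
    rw [pot, ip, hC, ← integral_neg, ← integral_const_mul]
    refine integral_mono_ae i1.neg (hBi.const_mul _) ?_
    filter_upwards [key] with x hx
    obtain ⟨h1, -, h2⟩ := hx s hs
    have := mul_le_mul h1 h2 (abs_nonneg _) ((abs_nonneg _).trans h1)
    rw [← abs_mul] at this
    have h3 := neg_abs_le (ExtHom.lapF g s x * g s x)
    change -(ExtHom.lapF g s x * g s x) ≤ _
    linarith
  set E : ℝ → ℝ := fun s => en g s / (1 - s ^ 2) with hE
  have hE0 : ∀ s ∈ Ico (0 : ℝ) 1, 0 ≤ E s := fun s hs =>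
    div_nonneg (hg.en_nonneg (abs_lt_one_of_Ico hs)) (one_sub_sq_pos (abs_lt_one_of_Ico hs)).le
  have hEd : ∀ s ∈ Ico (0 : ℝ) 1, HasDerivAt E (-(2 * s * pot g s) / (1 - s ^ 2) ^ 2) s := by
    intro s hs
    have hs' := abs_lt_one_of_Ico hs
    have h1 : HasDerivAt (fun s : ℝ => 1 - s ^ 2) (-(2 * s)) s := by
      simpa using (hasDerivAt_pow 2 s).const_sub 1
    refine ((hg.en_hasDerivAt hs').fun_div h1 (one_sub_sq_pos hs').ne').congr_deriv ?_
    rw [en]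
    ring
  have hmono : MonotoneOn E (Ico 0 1) := by
    refine monotoneOn_of_deriv_nonneg (convex_Ico _ _)
      (fun s hs => (hEd s hs).continuousAt.continuousWithinAt)
      (fun s hs => (hEd s (interior_subset hs)).differentiableAt.differentiableWithinAt)
      fun s hs => ?_
    have hs' := interior_subset hs
    rw [(hEd s hs').deriv]
    have h2 : pot g s ≤ 0 := ip_lapS_nonpos (hg.slice (abs_lt_one_of_Ico hs'))
    have := mul_nonneg hs'.1 (neg_nonneg.2 h2)
    exact div_nonneg (by linarith) (sq_nonneg _)
  have hEb : ∀ s ∈ Ico (0 : ℝ) 1, E s ≤ 20 * kap s ^ 2 * C := by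
    intro s hs
    have h0 := one_sub_sq_pos (abs_lt_one_of_Ico hs)
    have hk := kap_pos hs.2
    have h1 : kap s ^ 4 ≤ 1 - s ^ 2 := by
      have : kap s ^ 4 = 1 - s := kap_four hs.2
      nlinarith [hs.1, hs.2]
    have h2 : -pot g s ≤ (1 - s ^ 2) * (4 * kap s ^ 2 * C) := by
      calc _ ≤ _ := hpot s hs
        _ = kap s ^ 4 * (4 * kap s ^ 2 * C) := by ring
        _ ≤ _ := mul_le_mul_of_nonneg_right h1 (by positivity)
    have h3 := mul_le_mul_of_nonneg_left (hkin s hs) h0.le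
    rw [hE]
    simp only
    rw [div_le_iff₀ h0, en]
    linarith
  have hlim : Tendsto (fun s => 20 * kap s ^ 2 * C) (𝓝[<] 1) (𝓝 0) := by
    have := ((kap_tendsto.pow 2).const_mul 20).mul_const C
    simpa using this
  have hle : E s ≤ 0 := by
    refine ge_of_tendsto hlim ?_
    filter_upwards [Ioo_mem_nhdsLT hs.2] with r hr
    have hr' : r ∈ Ico (0 : ℝ) 1 := ⟨hs.1.trans hr.1.le, hr.2⟩
    exact (hmono hs hr' hr.1.le).trans (hEb r hr')
  have h0 := one_sub_sq_pos (abs_lt_one_of_Ico hs)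
  have := le_antisymm hle (hE0 s hs)
  rw [hE] at this
  simpa [h0.ne'] using this

theorem IsSol.kin_eq_zero {g : ℝ → E3 → ℝ} (hg : IsSol g)
    (hl : ∀ x, x ≠ 0 → Tendsto (fun s => g s x / (1 - s)) (𝓝[<] 1) (𝓝 0)) {s : ℝ}
    (hs : |s| < 1) : kin g s = 0 := by
  have hen : en g s ≤ 0 := by
    rcases le_or_gt 0 s with h | h
    · exact (hg.en_eq_zero hl ⟨h, (abs_lt.1 hs).2⟩).le
    · have hab : ∀ r ∈ Ioc (-1 : ℝ) 0, |r| < 1 := fun r hr => abs_lt.2 ⟨hr.1, by linarith [hr.2]⟩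
      have hmono : MonotoneOn (en g) (Ioc (-1) 0) := by
        refine monotoneOn_of_deriv_nonneg (convex_Ioc _ _)
          (fun s hs => (hg.en_hasDerivAt (hab s hs)).continuousAt.continuousWithinAt)
          (fun s hs => (hg.en_hasDerivAt (hab s
            (interior_subset hs))).differentiableAt.differentiableWithinAt) fun r hr => ?_
        have hr' := interior_subset hr
        rw [(hg.en_hasDerivAt (hab r hr')).deriv]
        have := mul_nonneg (neg_nonneg.2 hr'.2) (kin_nonneg g r)
        linarith
      have := hmono ⟨(abs_lt.1 hs).1, h.le⟩ ⟨by norm_num, le_rfl⟩ h.le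
      rwa [hg.en_eq_zero hl ⟨le_rfl, one_pos⟩] at this
  have h1 := ip_lapS_nonpos (hg.slice hs)
  have h2 := one_sub_sq_pos hs
  rw [en, pot] at hen
  refine le_antisymm ?_ (kin_nonneg g s)
  by_contra! h
  have := mul_pos h2 h
  linarith

/-- Uniqueness for the reduced equation. -/
theorem IsSol.eq_zero {g : ℝ → E3 → ℝ} (hg : IsSol g)
    (hl : ∀ x, x ≠ 0 → Tendsto (fun s => g s x / (1 - s)) (𝓝[<] 1) (𝓝 0)) {s : ℝ}
    (hs : |s| < 1) {x : E3} (hx : x ≠ 0) : g s x = 0 := by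
  have hdt : ∀ s, |s| < 1 → ∀ x, x ≠ 0 → dt g s x = 0 := by
    intro s hs x hx
    have hc : ContinuousOn (fun x => dt g s x * dt g s x) {x | x ≠ 0} :=
      (hg.toFam.dt.slice hs).2.continuousOn.mul (hg.toFam.dt.slice hs).2.continuousOn
    have hi : IntegrableOn (fun x => dt g s x * dt g s x) ann volume := ann_integrable hc
    have hk : ∫ x in ann, dt g s x * dt g s x = 0 := hg.kin_eq_zero hl hs
    rw [integral_eq_zero_iff_of_nonneg (fun x => mul_self_nonneg _) hi] at hk
    -- the open annulus, on which vanishing almost everywhere is vanishing everywhere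
    set U : Set E3 := {x | 1 < ‖x‖ ∧ ‖x‖ < 2} with hU
    have hUo : IsOpen U := (isOpen_lt continuous_const continuous_norm).inter
      (isOpen_lt continuous_norm continuous_const)
    have hUa : U ⊆ ann := fun x hx => ⟨hx.1.le, hx.2.le⟩
    have hae := ae_restrict_of_ae_restrict_of_subset hUa hk
    have heq := Measure.eqOn_open_of_ae_eq hae hUo (hc.mono fun x hx => ann_ne (hUa hx))
      continuousOn_const
    have hn : 0 < ‖x‖ := norm_pos_iff.2 hx
    have hm : (3 / 2 / ‖x‖) • x ∈ U := by
      have : ‖(3 / 2 / ‖x‖) • x‖ = 3 / 2 := by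
        rw [norm_smul, Real.norm_of_nonneg (by positivity)]
        field_simp
      rw [hU]
      simp only [mem_ofPred_eq, this]
      norm_num
    have := heq hm
    simp only [Pi.zero_apply, mul_self_eq_zero] at this
    rwa [(hg.toFam.dt.homog s hs) _ (by positivity)] at this
  have hconst : ∀ r, |r| < 1 → g r x = g s x := by
    intro r hr
    refine IsOpen.is_const_of_deriv_eq_zero (f := fun σ => g σ x) isOpen_abs ?_ ?_ ?_ hr hs
    · have : {s : ℝ | |s| < 1} = Ioo (-1) 1 := by ext; simp [abs_lt]
      rw [this]
      exact isPreconnected_Ioo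
    · exact fun σ hσ => (hg.toFam.hasDerivAt hσ hx).differentiableAt.differentiableWithinAt
    · exact fun σ hσ => hdt σ hσ x hx
  have h1 : Tendsto (fun r => g r x) (𝓝[<] 1) (𝓝 0) := by
    have h2 : Tendsto (fun r : ℝ => 1 - r) (𝓝[<] 1) (𝓝 0) := by
      have : Tendsto (fun r : ℝ => 1 - r) (𝓝 1) (𝓝 (1 - 1)) :=
        (continuous_const.sub continuous_id).tendsto 1
      rw [sub_self] at this
      exact this.mono_left nhdsWithin_le_nhds
    have h3 := (hl x hx).mul h2
    rw [zero_mul] at h3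
    refine h3.congr' ?_
    filter_upwards [self_mem_nhdsWithin] with r hr
    exact div_mul_cancel₀ _ (sub_pos.2 hr).ne'
  refine tendsto_nhds_unique (f := fun _ : ℝ => g s x) tendsto_const_nhds
    (h1.congr' ?_)
  filter_upwards [Ioo_mem_nhdsLT (zero_lt_one' ℝ)] with r hr
  exact hconst r (abs_lt_one_of_Ico ⟨hr.1.le, hr.2⟩)

/-! ### Uniqueness -/

/-- The conformal reduction of a function on the exterior region. -/
def red (φ : ℝ → E3 → ℝ) (s : ℝ) (x : E3) : ℝ := (1 - s ^ 2) * ‖x‖ ^ 2 * φ (s * ‖x‖) x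

theorem mul_norm_lt {s : ℝ} (hs : |s| < 1) {x : E3} (hx : x ≠ 0) : |s * ‖x‖| < ‖x‖ := by
  have hn : 0 < ‖x‖ := norm_pos_iff.2 hx
  rw [abs_mul, abs_norm]
  exact mul_lt_of_lt_one_left hn hs

theorem red_inv (φ : ℝ → E3 → ℝ) {t : ℝ} {x : E3} (h : |t| < ‖x‖) :
    φ t x = red φ (t / ‖x‖) x / (‖x‖ ^ 2 - t ^ 2) := by
  have hr : 0 < ‖x‖ := (abs_nonneg t).trans_lt h
  have h2 : |t| ^ 2 < ‖x‖ ^ 2 := pow_lt_pow_left₀ h (abs_nonneg _) two_ne_zero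
  rw [sq_abs] at h2
  rw [red, div_mul_cancel₀ _ hr.ne', eq_div_iff (by linarith)]
  field_simp

theorem red_isSol {M0 M1 : E3 → ℝ} {φ : ℝ → E3 → ℝ} (h : IsExtHomTwo M0 M1 φ) :
    IsSol (red φ) := by
  obtain ⟨hs, hw, hc, -⟩ := h
  have hfam : Fam (red φ) := by
    refine ⟨?_, fun s hs' c hc' x => ?_⟩
    · have h0 : ContDiffOn ℝ (⊤ : ℕ∞) (fun p : ℝ × E3 => ‖p.2‖) Cyl :=
        contDiffOn_snd.norm ℝ fun p hp => hp.2
      refine ((contDiffOn_const.sub (contDiffOn_fst.pow 2)).mul (h0.pow 2)).mul ?_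
      exact hs.comp (f := fun p : ℝ × E3 => (p.1 * ‖p.2‖, p.2))
        ((contDiffOn_fst.mul h0).prodMk contDiffOn_snd) fun p hp => mul_norm_lt hp.1 hp.2
    · rcases eq_or_ne x 0 with rfl | hx
      · simp
      · have hcx : ‖c • x‖ = c * ‖x‖ := by rw [norm_smul, Real.norm_of_nonneg hc'.le]
        rw [red, red, hcx, mul_left_comm s, hc c hc' _ _ (mul_norm_lt hs' hx)]
        field_simp
  refine ⟨hfam, fun s hs' x hx => ?_⟩
  have hn : 0 < ‖x‖ := norm_pos_iff.2 hx
  have hlt := mul_norm_lt hs' hx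
  have h1 := wave_conversion hfam.smooth hfam.homog hs (fun t x h => red_inv φ h) hlt
  rw [hw _ _ hlt, sub_self, mul_zero, mul_div_cancel_right₀ _ hn.ne'] at h1
  have h2 := one_sub_sq_pos hs'
  have h3 : dt (dt (red φ)) s x = deriv (deriv fun s => red φ s x) s := rfl
  rw [h3, mul_comm, ← eq_div_iff h2.ne']
  linarith

theorem IsSol.sub {g k : ℝ → E3 → ℝ} (hg : IsSol g) (hk : IsSol k) :
    IsSol (fun s x => (-1) * k s x + g s x) := by
  have hd : ∀ {a b : ℝ → E3 → ℝ}, Fam a → Fam b → ∀ s, |s| < 1 → ∀ x, x ≠ 0 →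
      dt (fun s x => (-1) * b s x + a s x) s x = (-1) * dt b s x + dt a s x :=
    fun ha hb s hs x hx => (((hb.hasDerivAt hs hx).const_mul (-1)).fun_add
      (ha.hasDerivAt hs hx)).deriv
  refine ⟨⟨(contDiffOn_const.mul hk.smooth).add hg.smooth,
    fun s hs => (smoothOnSphere_lin (hk.slice hs) (hg.slice hs) (-1)).1⟩, fun s hs x hx => ?_⟩
  have e : dt (dt fun s x => (-1) * k s x + g s x) s x = (-1) * dt (dt k) s x + dt (dt g) s x := by
    rw [← hd hg.toFam.dt hk.toFam.dt s hs x hx]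
    have : (fun σ => dt (fun s x => (-1) * k s x + g s x) σ x) =ᶠ[𝓝 s]
        fun σ => (-1) * dt k σ x + dt g σ x := by
      filter_upwards [isOpen_abs.mem_nhds hs] with σ hσ using hd hg.toFam hk.toFam σ hσ x hx
    exact this.deriv_eq
  rw [e, lapS_lin (hk.slice hs) (hg.slice hs) (-1) hx, ← hg.ode s hs x hx, ← hk.ode s hs x hx]
  ring

/-- Two solutions with the same radiation data agree: their conformally reduced difference is
`o(1 - s)` at the cone. -/
theorem ext_unique {M0 M1 : E3 → ℝ} {φ ψ : ℝ → E3 → ℝ} (hφ : IsExtHomTwo M0 M1 φ)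
    (hψ : IsExtHomTwo M0 M1 ψ) {t : ℝ} {x : E3} (htx : |t| < ‖x‖) : φ t x = ψ t x := by
  have hsol := (red_isSol hφ).sub (red_isSol hψ)
  have hr : 0 < ‖x‖ := (abs_nonneg t).trans_lt htx
  have hz := hsol.eq_zero (fun y hy => ?_) (abs_div_lt_one htx) (norm_pos_iff.1 hr)
  · rw [red_inv φ htx, red_inv ψ htx]
    congr 1
    linarith
  · have hn : 0 < ‖y‖ := norm_pos_iff.2 hy
    set ω : E3 := ‖y‖⁻¹ • y with hω
    have hω1 : ‖ω‖ = 1 := by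
      rw [hω, norm_smul, norm_inv, norm_norm, inv_mul_cancel₀ hn.ne']
    have h1 : Tendsto (fun s : ℝ => 1 + s) (𝓝[<] 1) (𝓝 (1 + 1)) :=
      ((continuous_const.add continuous_id).tendsto (1 : ℝ)).mono_left nhdsWithin_le_nhds
    have h2 := h1.mul ((hφ.2.2.2 ω hω1).sub (hψ.2.2.2 ω hω1))
    rw [sub_self, mul_zero] at h2
    refine h2.congr' ?_
    filter_upwards [Ioo_mem_nhdsLT (zero_lt_one' ℝ)] with s hs
    have hs' : |s| < 1 := abs_lt_one_of_Ico ⟨hs.1.le, hs.2⟩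
    have h3 : 1 - s ≠ 0 := by linarith [hs.2]
    have h4 : (-1) * red ψ s ω + red φ s ω = (-1) * red ψ s y + red φ s y :=
      hsol.homog s hs' ‖y‖⁻¹ (by positivity) y
    rw [← h4]
    simp only [red, hω1, mul_one, one_pow]
    field_simp
    ring

end ExtHom

/-- homogeneous degree −2 solutions in the exterior of the light cone
(Corollary 1.4 of the paper). -/
theorem exterior_homogeneous_degree_two
    (M0 M1 : E3 → ℝ) (h0 : SmoothOnSphere M0) (h1 : SmoothOnSphere M1) :
    ∃ φ : ℝ → E3 → ℝ, IsExtHomTwo M0 M1 φ ∧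
      ∀ φ' : ℝ → E3 → ℝ, IsExtHomTwo M0 M1 φ' →
        ∀ (t : ℝ) (x : E3), |t| < ‖x‖ → φ' t x = φ t x := by
  refine ⟨ExtHom.sol M0 M1, ExtHom.sol_isExtHomTwo h0 h1, fun φ' h t x htx => ?_⟩
  exact ExtHom.ext_unique h (ExtHom.sol_isExtHomTwo h0 h1) htx
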